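/- Let ℤ₂=⟨γ⟩ and let (G,p,ℓ) be a ℤ₂-regular point-line framework in ℝ² with respect to θ:ℤ₂→Aut_PH(G) and τ:ℤ₂→O(2) with τ(γ)=−id, such that θ(γ) fixes every vertex of V_H and θ acts freely on V_P. Then (G,p,ℓ) is isostatic if and only if G is (2,3)-tight and exactly one edge of G is fixed by γ (|E_γ|=1). -/

import Mathlib

/-!
A point `p` of the plane is represented by the vector `(p, 1)` of `ℝ³` and a line with normal `a`
by `(a, 0)`. An edge then says that the scalar product of two vectors is infinitesimally preserved,
so a point-line framework has the same motions as a framework of vectors whose lines lie on the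
equatorial plane `z = 0` (`setDim_eq`); the offsets of the lines play no role. The half-turn of the
plane becomes the half-turn about the third axis, and a fixed line `a ↦ -a` is a vertex on the
equator. Every vertex has two degrees of freedom and the rotations give three motions.

*Necessity.* In an isostatic framework the edge equations are independent. A subgraph on `k`
vertices therefore has a motion space of dimension at most `2k` minus its number of edges, while
the rotations give three dimensions; this is sparsity (`Indep.card_le`, `Indep.three_le`), with
equality for the whole graph. For the fixed edges consider the velocities reversed by the
half-turn (`anti`), a space of dimension `|V|`. On it a fixed edge imposes no condition, and each
other orbit of edges imposes a single one. With `f` fixed edges among `2|V| - 3`, the reversed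
motions have dimension at least `(3 + f) / 2`; they miss the rotation about the axis, so this
is at most two, and `f ≤ 1`. As `2|V| - 3` is odd, `f = 1` (`Indep.card_fix`).

*Sufficiency.* Because of the edge count, infinitesimal rigidity already gives an isostatic
framework, and by regularity it is enough to find one symmetric rigid realisation. It is found by
induction on the number of vertices (`Good.rig`). A vertex of low degree is deleted together with
its mirror image; where more than two edges per vertex disappear, a new orbit of edges between the
former neighbours is added so that the smaller graph is again tight with one fixed edge. That this
is possible is a submodularity argument on tight sets; the main case is `Triad.exists_unblocked`.
The smaller graph has a rigid symmetric realisation by induction, and the deleted vertices are put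
back at positions linearly dependent on those of their neighbours, so that the condition of each
new edge follows from those of the deleted edges (`edge_of_dep`, `edge_of_dep_four`) and the
motion of the larger framework is determined by that of the smaller one (`Rig.extend`). The
nondegeneracy needed there is generic: a property that can be realised at one symmetric
configuration can be combined with any other such property (`Generic.exists_both`).

A removable vertex always exists (`Good.step`). If none did, then free vertices would have degree
at least four, or degree three with equatorial neighbours only, and equatorial vertices would have
degree at least six, up to a total loss of two at the ends of the fixed edge. With `A` free vertices
of the second kind and `L` equatorial ones, the degree sum `4|V| - 6` gives `A ≥ 2L + 4`,
whereas sparsity of the `3A` edges between them gives `3A ≤ 2(A + L) - 3`.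
-/


open Matrix

namespace RigidityPaper

variable {V : Type*}

/-! ### Spherical frameworks on `S^{n-1} ⊆ ℝ^n` -/

/-- A spherical framework: all points on the unit sphere, linearly spanning the ambient space. -/
def IsSphFw {n : ℕ} (p : V → Fin n → ℝ) : Prop :=
  (∀ i, p i ⬝ᵥ p i = 1) ∧ Submodule.span ℝ (Set.range p) = ⊤

/-- An infinitesimal motion of a spherical framework. -/
def SphMotion {n : ℕ} (G : SimpleGraph V) (p q : V → Fin n → ℝ) : Prop :=
  (∀ i j, G.Adj i j → p i ⬝ᵥ q j + p j ⬝ᵥ q i = 0) ∧ ∀ i, p i ⬝ᵥ q i = 0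

/-- A trivial infinitesimal motion of a spherical framework. -/
def SphTrivial {n : ℕ} (p q : V → Fin n → ℝ) : Prop :=
  ∃ S : Matrix (Fin n) (Fin n) ℝ, Sᵀ = -S ∧ ∀ i, q i = S *ᵥ p i

/-- Infinitesimal rigidity of a spherical framework. -/
def SphRigid {n : ℕ} (G : SimpleGraph V) (p : V → Fin n → ℝ) : Prop :=
  ∀ q, SphMotion G p q → SphTrivial p q

/-- Forced symmetric infinitesimal rigidity of a spherical framework, where `sym` is
the symmetry (equivariance) condition on infinitesimal motions. -/
def SphForcedRigid {n : ℕ} (G : SimpleGraph V) (sym : (V → Fin n → ℝ) → Prop)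
    (p : V → Fin n → ℝ) : Prop :=
  ∀ q, SphMotion G p q → sym q → SphTrivial p q

/-- The set of infinitesimal motions of a spherical framework, i.e. the kernel of the
spherical rigidity matrix. -/
def SphMotionSet {n : ℕ} (G : SimpleGraph V) (p : V → Fin n → ℝ) :
    Set (V → Fin n → ℝ) := {q | SphMotion G p q}

/-! ### Bar-joint frameworks in `ℝ^d` -/

/-- An infinitesimal motion of a bar-joint framework. -/
def BJMotion {d : ℕ} (G : SimpleGraph V) (p u : V → Fin d → ℝ) : Prop :=
  ∀ i j, G.Adj i j → (p i - p j) ⬝ᵥ (u i - u j) = 0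

/-- A trivial infinitesimal motion of a bar-joint framework. -/
def BJTrivial {d : ℕ} (p u : V → Fin d → ℝ) : Prop :=
  ∃ (S : Matrix (Fin d) (Fin d) ℝ) (t : Fin d → ℝ), Sᵀ = -S ∧ ∀ i, u i = S *ᵥ p i + t

/-- Infinitesimal rigidity of a bar-joint framework. -/
def BJRigid {d : ℕ} (G : SimpleGraph V) (p : V → Fin d → ℝ) : Prop :=
  ∀ u, BJMotion G p u → BJTrivial p u

/-- Forced symmetric infinitesimal rigidity of a bar-joint framework. -/
def BJForcedRigid {d : ℕ} (G : SimpleGraph V) (sym : (V → Fin d → ℝ) → Prop)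
    (p : V → Fin d → ℝ) : Prop :=
  ∀ u, BJMotion G p u → sym u → BJTrivial p u

/-- The set of infinitesimal motions of a bar-joint framework, i.e. the kernel of the
rigidity matrix. -/
def BJMotionSet {d : ℕ} (G : SimpleGraph V) (p : V → Fin d → ℝ) :
    Set (V → Fin d → ℝ) := {u | BJMotion G p u}

/-! ### Symmetry -/

/-- `p` is equivariant with respect to the vertex permutation `σ` and the matrix `A`. -/
def MatEquiv {n : ℕ} (σ : Equiv.Perm V) (A : Matrix (Fin n) (Fin n) ℝ)
    (p : V → Fin n → ℝ) : Prop :=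
  ∀ i, A *ᵥ p i = p (σ i)

/-- `σ` is an automorphism of the graph `G`. -/
def IsGraphAut (G : SimpleGraph V) (σ : Equiv.Perm V) : Prop :=
  ∀ i j, G.Adj (σ i) (σ j) ↔ G.Adj i j

/-- The augmented matrix `diag(A, 1)` of size `(d+1) × (d+1)`. -/
def aug {d : ℕ} (A : Matrix (Fin d) (Fin d) ℝ) :
    Matrix (Fin (d + 1)) (Fin (d + 1)) ℝ :=
  Matrix.of fun i j =>
    if h : (i : ℕ) < d then
      (if h' : (j : ℕ) < d then A ⟨i.1, h⟩ ⟨j.1, h'⟩ else 0)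
    else (if (j : ℕ) < d then 0 else 1)

/-- Extend a vector of `ℝ^d` to `ℝ^{d+1}` by appending a last coordinate. -/
def extVec {d : ℕ} (x : Fin d → ℝ) (t : ℝ) : Fin (d + 1) → ℝ := Fin.snoc x t

/-- A point of `S^d ⊆ ℝ^{d+1}` lies on the equator: its last coordinate vanishes. -/
def OnEquator {d : ℕ} (x : Fin (d + 1) → ℝ) : Prop := x (Fin.last d) = 0

/-- `A` is the reflection in the linear hyperplane with unit normal `ν`. -/
def IsReflection {d : ℕ} (A : Matrix (Fin d) (Fin d) ℝ) (ν : Fin d → ℝ) : Prop :=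
  ν ⬝ᵥ ν = 1 ∧ ∀ x, A *ᵥ x = x - (2 * (ν ⬝ᵥ x)) • ν

/-- `A` is the rotation of `ℝ³` by `π` about the line through the origin with unit
direction `u`. -/
def IsHalfTurn3 (A : Matrix (Fin 3) (Fin 3) ℝ) (u : Fin 3 → ℝ) : Prop :=
  u ⬝ᵥ u = 1 ∧ ∀ x, A *ᵥ x = (2 * (u ⬝ᵥ x)) • u - x

/-! ### Point-hyperplane frameworks in `ℝ^d`

A point-hyperplane framework on a PH-graph with hyperplane vertex set `VH` is given by
`p` (points, relevant on `VHᶜ`), `a` (unit normals of hyperplanes, relevant on `VH`) and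
`r` (offsets of hyperplanes, relevant on `VH`); vertex `j ∈ VH` represents the hyperplane
`{x | a j ⬝ᵥ x + r j = 0}`. -/

/-- Point-hyperplane framework: unit normals, and the points together with the
hyperplanes affinely span `ℝ^d`. -/
def IsPHFw {d : ℕ} (VH : Set V) (p a : V → Fin d → ℝ) (r : V → ℝ) : Prop :=
  (∀ j ∈ VH, a j ⬝ᵥ a j = 1) ∧
  affineSpan ℝ ((p '' VHᶜ) ∪ ⋃ j ∈ VH, {x | a j ⬝ᵥ x + r j = 0}) = ⊤

/-- An infinitesimal motion `(p', a', r')` of the point-hyperplane framework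
`(G, VH, p, a, r)`. -/
def PHMotion {d : ℕ} (G : SimpleGraph V) (VH : Set V) (p a : V → Fin d → ℝ)
    (r : V → ℝ) (p' a' : V → Fin d → ℝ) (r' : V → ℝ) : Prop :=
  (∀ i j, G.Adj i j → i ∉ VH → j ∉ VH → (p i - p j) ⬝ᵥ (p' i - p' j) = 0) ∧
  (∀ i j, G.Adj i j → i ∉ VH → j ∈ VH → p i ⬝ᵥ a' j + p' i ⬝ᵥ a j + r' j = 0) ∧
  (∀ i j, G.Adj i j → i ∈ VH → j ∈ VH → a i ⬝ᵥ a' j + a' i ⬝ᵥ a j = 0) ∧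
  (∀ i ∈ VH, a i ⬝ᵥ a' i = 0)

/-- The space of infinitesimal motions of a point-hyperplane framework (the components
that do not correspond to unknowns of the rigidity matrix are normalised to zero). -/
def PHMotionSet {d : ℕ} (G : SimpleGraph V) (VH : Set V) (p a : V → Fin d → ℝ)
    (r : V → ℝ) : Set ((V → Fin d → ℝ) × (V → Fin d → ℝ) × (V → ℝ)) :=
  {m | PHMotion G VH p a r m.1 m.2.1 m.2.2 ∧ (∀ i ∈ VH, m.1 i = 0) ∧
    ∀ i, i ∉ VH → m.2.1 i = 0 ∧ m.2.2 i = 0}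

/-- The dimension of (the span of) a subset of a real vector space; for a linear
subspace this is just its dimension. -/
noncomputable def setDim {W : Type*} [AddCommGroup W] [Module ℝ W] (s : Set W) : ℕ :=
  Module.finrank ℝ (Submodule.span ℝ s)

/-- Infinitesimal rigidity of a point-hyperplane framework in `ℝ^d`: the space of
infinitesimal motions has dimension `(d+1).choose 2`. -/
def PHRigid {d : ℕ} (G : SimpleGraph V) (VH : Set V) (p a : V → Fin d → ℝ)
    (r : V → ℝ) : Prop :=
  setDim (PHMotionSet G VH p a r) = Nat.choose (d + 1) 2

/-- A trivial infinitesimal motion of a point-hyperplane framework: one that extends to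
(i.e. is) an infinitesimal motion of the framework on the complete PH-graph on the same
points and hyperplanes. -/
def PHTrivial {d : ℕ} (VH : Set V) (p a : V → Fin d → ℝ) (r : V → ℝ)
    (p' a' : V → Fin d → ℝ) (r' : V → ℝ) : Prop :=
  PHMotion (⊤ : SimpleGraph V) VH p a r p' a' r'

/-- Forced symmetric infinitesimal rigidity of a point-hyperplane framework. -/
def PHForcedRigid {d : ℕ} (G : SimpleGraph V) (VH : Set V) (p a : V → Fin d → ℝ)
    (r : V → ℝ)
    (sym : (V → Fin d → ℝ) → (V → Fin d → ℝ) → (V → ℝ) → Prop) : Prop :=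
  ∀ p' a' r', PHMotion G VH p a r p' a' r' → sym p' a' r' →
    PHTrivial VH p a r p' a' r'

/-- Equivariance of a point-hyperplane configuration with respect to a vertex
permutation `σ` and a matrix `A` (normals equivariant up to sign, offsets invariant). -/
def PHEquiv {d : ℕ} (σ : Equiv.Perm V) (A : Matrix (Fin d) (Fin d) ℝ) (VH : Set V)
    (p a : V → Fin d → ℝ) (r : V → ℝ) : Prop :=
  (∀ i, i ∉ VH → A *ᵥ p i = p (σ i)) ∧
  (∀ j ∈ VH, A *ᵥ a j = a (σ j) ∨ A *ᵥ a j = -a (σ j)) ∧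
  ∀ j ∈ VH, r j = r (σ j)

/-- Equivariance of an infinitesimal motion of a point-hyperplane framework with
normals `a`, with respect to `σ` and `A` (the sign matching that of the normals). -/
def PHMotionEquiv {d : ℕ} (σ : Equiv.Perm V) (A : Matrix (Fin d) (Fin d) ℝ)
    (VH : Set V) (a : V → Fin d → ℝ)
    (p' a' : V → Fin d → ℝ) (r' : V → ℝ) : Prop :=
  (∀ i, i ∉ VH → A *ᵥ p' i = p' (σ i)) ∧
  (∀ j ∈ VH, (A *ᵥ a j = a (σ j) → A *ᵥ a' j = a' (σ j)) ∧
    (A *ᵥ a j = -a (σ j) → A *ᵥ a' j = -a' (σ j))) ∧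
  ∀ j ∈ VH, r' j = r' (σ j)

/-! ### Regularity: maximal rank of the rigidity matrix among symmetric realisations,
equivalently minimal dimension of the space of infinitesimal motions. -/

/-- A spherical realisation is regular with respect to the class of realisations cut
out by `sym` if its rigidity matrix has maximal rank there, equivalently its motion
space has minimal dimension. -/
def SphRegularWrt {n : ℕ} (G : SimpleGraph V) (sym : (V → Fin n → ℝ) → Prop)
    (p : V → Fin n → ℝ) : Prop :=
  IsSphFw p ∧ sym p ∧
  ∀ q : V → Fin n → ℝ, IsSphFw q → sym q →
    setDim (SphMotionSet G p) ≤ setDim (SphMotionSet G q)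

/-- Regularity of a bar-joint realisation with respect to the class `sym`. -/
def BJRegularWrt {d : ℕ} (G : SimpleGraph V) (sym : (V → Fin d → ℝ) → Prop)
    (p : V → Fin d → ℝ) : Prop :=
  sym p ∧ ∀ q : V → Fin d → ℝ, sym q →
    setDim (BJMotionSet G p) ≤ setDim (BJMotionSet G q)

/-- Regularity of a point-hyperplane realisation with respect to the class `sym`. -/
def PHRegularWrt {d : ℕ} (G : SimpleGraph V) (VH : Set V)
    (sym : (V → Fin d → ℝ) → (V → Fin d → ℝ) → (V → ℝ) → Prop)
    (p a : V → Fin d → ℝ) (r : V → ℝ) : Prop :=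
  IsPHFw VH p a r ∧ sym p a r ∧
  ∀ (q b : V → Fin d → ℝ) (s : V → ℝ), IsPHFw VH q b s → sym q b s →
    setDim (PHMotionSet G VH p a r) ≤ setDim (PHMotionSet G VH q b s)

/-! ### Isostatic frameworks -/

/-- An isostatic bar-joint framework: infinitesimally rigid, and deleting any edge
destroys infinitesimal rigidity. -/
def BJIsostatic {d : ℕ} (G : SimpleGraph V) (p : V → Fin d → ℝ) : Prop :=
  BJRigid G p ∧ ∀ e ∈ G.edgeSet, ¬ BJRigid (G.deleteEdges {e}) p

/-- An isostatic point-hyperplane framework. -/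
def PHIsostatic {d : ℕ} (G : SimpleGraph V) (VH : Set V) (p a : V → Fin d → ℝ)
    (r : V → ℝ) : Prop :=
  PHRigid G VH p a r ∧ ∀ e ∈ G.edgeSet, ¬ PHRigid (G.deleteEdges {e}) VH p a r

/-! ### Counts for Laman-type theorems -/

/-- `(2,3)`-tightness of a graph. -/
def TwoThreeTight (G : SimpleGraph V) : Prop :=
  G.edgeSet.ncard + 3 = 2 * Nat.card V ∧
  ∀ F ⊆ G.edgeSet, F.Nonempty →
    F.ncard + 3 ≤ 2 * {v : V | ∃ e ∈ F, v ∈ e}.ncard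

/-! ### Quotient `ℤ₂`-gain graphs

For a free involution `σ` of `G` with a transversal `V₀` of the vertex orbits, the
quotient `ℤ₂`-gain graph has vertex set `V₀` and, since `ℤ₂`-gains are involutive,
its edges may be recorded as pairs `(s(i,j), α)` with `i, j ∈ V₀` and `α ∈ ZMod 2`:
gain `0` for the orbit of an edge `{i, j}` of `G`, and gain `1` for the orbit of an
edge `{i, σ j}`. -/

/-- `e` is an edge of the quotient `ℤ₂`-gain graph of `(G, σ)` with transversal `V₀`. -/
def GainEdge (G : SimpleGraph V) (σ : Equiv.Perm V) (V₀ : Set V)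
    (e : Sym2 V × ZMod 2) : Prop :=
  ∃ i j, i ∈ V₀ ∧ j ∈ V₀ ∧ e.1 = s(i, j) ∧
    ((e.2 = 0 ∧ G.Adj i j) ∨ (e.2 = 1 ∧ G.Adj i (σ j)))

/-- The vertices spanned by a set of gain edges. -/
def vsupp (F : Set (Sym2 V × ZMod 2)) : Set V := {v | ∃ e ∈ F, v ∈ e.1}

/-- A closed walk in a set `F` of `ℤ₂`-gain edges: a nonempty list of steps, each step
`(u, v, α)` traversing the edge `(s(u,v), α) ∈ F`, consecutive steps chained, returning
to the start. -/
def IsClosedWalk (F : Set (Sym2 V × ZMod 2)) (w : List (V × V × ZMod 2)) : Prop :=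
  w ≠ [] ∧ (∀ st ∈ w, (s(st.1, st.2.1), st.2.2) ∈ F) ∧
  List.Chain' (fun st₁ st₂ => st₁.2.1 = st₂.1) w ∧
  w.getLast?.map (fun st => st.2.1) = w.head?.map (fun st => st.1)

/-- A set of `ℤ₂`-gain edges is balanced if every closed walk has trivial gain. -/
def GainBalanced (F : Set (Sym2 V × ZMod 2)) : Prop :=
  ∀ w, IsClosedWalk F w → (w.map fun st => st.2.2).sum = 0

/-- `(2,3,m)`-gain-sparsity of a set of `ℤ₂`-gain edges. -/
def GainSparse (m : ℕ) (Es : Set (Sym2 V × ZMod 2)) : Prop :=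
  (∀ F ⊆ Es, F.Nonempty → GainBalanced F →
    F.ncard + 3 ≤ 2 * (vsupp F).ncard) ∧
  ∀ F ⊆ Es, F.Nonempty → F.ncard + m ≤ 2 * (vsupp F).ncard

/-- The quotient `ℤ₂`-gain graph of `(G, σ)` (with transversal `V₀`) contains a
spanning `(2,3,m)`-gain-tight subgraph. -/
def HasSpanningGainTight (G : SimpleGraph V) (σ : Equiv.Perm V) (V₀ : Set V)
    (m : ℕ) : Prop :=
  ∃ H : Set (Sym2 V × ZMod 2), (∀ e ∈ H, GainEdge G σ V₀ e) ∧
    GainSparse m H ∧ H.ncard + m = 2 * V₀.ncard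

section
open scoped Classical
open Finset

/-! ### Sparsity counts of symmetric graphs -/

/-- The edges of `E` with both ends in `X`. -/
noncomputable def ins (E : Finset (Sym2 V)) (X : Finset V) : Finset (Sym2 V) :=
  E.filter fun e => ∀ v ∈ e, v ∈ X

/-- The number of edges that `X` lacks to be tight in `E`: zero on tight sets, and `-1` on
singletons when `E` is loopless. -/
noncomputable def defect (E : Finset (Sym2 V)) (X : Finset V) : ℤ :=
  2 * (#X : ℤ) - 3 - #(ins E X)

/-- A loopless `(2,3)`-sparse edge set, invariant under the involution `σ`, with at most one
edge fixed by `σ`. -/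
structure SymSparse (σ : V → V) (E : Finset (Sym2 V)) : Prop where
  invol : ∀ v, σ (σ v) = v
  nodiag : ∀ e ∈ E, ¬ e.IsDiag
  inv : ∀ e ∈ E, e.map σ ∈ E
  sparse : ∀ X : Finset V, 2 ≤ #X → #(ins E X) + 3 ≤ 2 * #X
  fix_le : ∀ e ∈ E, ∀ e' ∈ E, e.map σ = e → e'.map σ = e' → e = e'

theorem mem_ins {E : Finset (Sym2 V)} {X : Finset V} {e : Sym2 V} :
    e ∈ ins E X ↔ e ∈ E ∧ ∀ v ∈ e, v ∈ X := by
  simp [ins]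

theorem ins_union_inter (E : Finset (Sym2 V)) (X Y : Finset V) :
    #(ins E X ∪ ins E Y) + #(ins E (X ∩ Y)) = #(ins E X) + #(ins E Y) := by
  have h : ins E (X ∩ Y) = ins E X ∩ ins E Y := by
    ext e; simp only [mem_ins, mem_inter]; grind
  rw [h, card_union_add_card_inter]

theorem ins_union_sub (E : Finset (Sym2 V)) (X Y : Finset V) :
    ins E X ∪ ins E Y ⊆ ins E (X ∪ Y) := by
  intro e; simp only [mem_ins, mem_union]; grind

/-- The defect is submodular, since edge counts are supermodular. -/
theorem defect_submod (E : Finset (Sym2 V)) (X Y : Finset V) :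
    defect E (X ∪ Y) + defect E (X ∩ Y) ≤ defect E X + defect E Y := by
  have h1 := ins_union_inter E X Y
  have h2 := card_le_card (ins_union_sub E X Y)
  have h3 := card_union_add_card_inter X Y
  unfold defect
  omega

namespace SymSparse

variable {σ : V → V} {E : Finset (Sym2 V)}

theorem inj (h : SymSparse σ E) : Function.Injective σ :=
  Function.LeftInverse.injective h.invol

theorem ins_pair_sub (h : SymSparse σ E) (p q : V) : ins E {p, q} ⊆ {s(p, q)} := by
  intro e he
  rw [mem_ins] at he
  obtain ⟨he, h2⟩ := he
  have h3 := h.nodiag e he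
  induction e using Sym2.ind with
  | _ a b =>
    simp only [Sym2.mem_iff, mem_insert, mem_singleton, Sym2.mk_isDiag_iff] at *
    have ha := h2 a (Or.inl rfl)
    have hb := h2 b (Or.inr rfl)
    rw [Sym2.eq_iff]
    grind

/-- A sharper form for `X ∌ q` and `Y ∌ p`: a possible edge `pq` lies in the union only, and
`defect E {p, q}` is zero or one according to whether it is present. -/
theorem defect_cross (h : SymSparse σ E) {X Y : Finset V} {p q : V} (hpX : p ∈ X)
    (hpY : p ∉ Y) (hqY : q ∈ Y) (hqX : q ∉ X) :
    defect E (X ∪ Y) + defect E (X ∩ Y) + 1 ≤ defect E X + defect E Y + defect E {p, q} := by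
  have hpq : p ≠ q := by rintro rfl; exact hqX hpX
  have h1 := ins_union_inter E X Y
  have h3 := card_union_add_card_inter X Y
  have h4 : #(ins E X ∪ ins E Y) + #(ins E {p, q}) ≤ #(ins E (X ∪ Y)) := by
    rw [← card_union_of_disjoint]
    · apply card_le_card
      apply union_subset (ins_union_sub E X Y)
      intro e he
      rw [mem_ins] at he ⊢
      refine ⟨he.1, fun v hv => ?_⟩
      have := he.2 v hv
      simp only [mem_insert, mem_singleton] at this
      rcases this with rfl | rfl <;> simp [*]
    · rw [Finset.disjoint_left]
      intro e he he2
      have := h.ins_pair_sub p q he2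
      rw [mem_singleton] at this
      subst this
      simp only [mem_union, mem_ins, Sym2.mem_iff] at he
      rcases he with he | he
      · exact hqX (he.2 q (Or.inr rfl))
      · exact hpY (he.2 p (Or.inl rfl))
  unfold defect
  rw [card_pair hpq]
  push_cast
  omega

/-- The edges within a triple are the edges of its three pairs. -/
theorem defect_triple (h : SymSparse σ E) {p q r : V} (hpq : p ≠ q) (hqr : q ≠ r)
    (hpr : p ≠ r) :
    defect E {p, q} + defect E {q, r} + defect E {p, r} ≤ defect E {p, q, r} := by
  have h1 : ins E {p, q, r} ⊆ ins E {p, q} ∪ ins E {q, r} ∪ ins E {p, r} := by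
    intro e he
    rw [mem_ins] at he
    obtain ⟨he, h2⟩ := he
    have h3 := h.nodiag e he
    induction e using Sym2.ind with
    | _ a b =>
      simp only [mem_union, mem_ins, Sym2.mem_iff, mem_insert, mem_singleton,
        Sym2.mk_isDiag_iff] at *
      have ha := h2 a (Or.inl rfl)
      have hb := h2 b (Or.inr rfl)
      grind
  have h2 := card_le_card h1
  have h3 := card_union_le (ins E {p, q} ∪ ins E {q, r}) (ins E {p, r})
  have h4 := card_union_le (ins E {p, q}) (ins E {q, r})
  unfold defect
  rw [card_pair hpq, card_pair hqr, card_pair hpr, card_eq_three.2 ⟨p, q, r, hpq, hpr, hqr, rfl⟩]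
  push_cast
  omega

theorem ge_zero (h : SymSparse σ E) {X : Finset V} {p q : V} (hp : p ∈ X) (hq : q ∈ X)
    (hpq : p ≠ q) : 0 ≤ defect E X := by
  have := h.sparse X (one_lt_card.2 ⟨p, hp, q, hq, hpq⟩)
  unfold defect; omega

theorem ge_neg_one (h : SymSparse σ E) {X : Finset V} {p : V} (hp : p ∈ X) :
    -1 ≤ defect E X := by
  by_cases h1 : ∃ q ∈ X, p ≠ q
  · obtain ⟨q, hq, hpq⟩ := h1
    linarith [h.ge_zero hp hq hpq]
  · push Not at h1
    have hX : X = {p} := by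
      ext v; rw [mem_singleton]; exact ⟨fun hv => (h1 v hv).symm, fun hv => hv ▸ hp⟩
    have h2 : ins E X = ∅ := by
      rw [← subset_empty]
      intro e he
      have h3 := mem_ins.1 he
      exfalso
      have h4 := h.nodiag e h3.1
      induction e using Sym2.ind with
      | _ a b =>
        have ha := h1 a (h3.2 a (Sym2.mem_mk_left a b))
        have hb := h1 b (h3.2 b (Sym2.mem_mk_right a b))
        exact h4 (by simp [← ha, ← hb])
    unfold defect
    rw [h2, hX]; simp

/-- A set of negative defect has at most one element. -/
theorem eq_of_neg (h : SymSparse σ E) {X : Finset V} (hX : defect E X < 0) {p q : V}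
    (hp : p ∈ X) (hq : q ∈ X) : p = q := by
  by_contra hpq
  linarith [h.ge_zero hp hq hpq]

theorem mem_image (h : SymSparse σ E) {X : Finset V} {v : V} : v ∈ X.image σ ↔ σ v ∈ X := by
  rw [Finset.mem_image]
  constructor
  · rintro ⟨w, hw, rfl⟩; rwa [h.invol]
  · intro hv; exact ⟨_, hv, h.invol v⟩

theorem map_map (h : SymSparse σ E) (e : Sym2 V) : (e.map σ).map σ = e := by
  rw [Sym2.map_map]
  have : σ ∘ σ = id := funext h.invol
  rw [this, Sym2.map_id, id]

theorem map_ins (h : SymSparse σ E) {X : Finset V} {e : Sym2 V} (he : e ∈ ins E X) :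
    e.map σ ∈ ins E (X.image σ) := by
  rw [mem_ins] at he ⊢
  refine ⟨h.inv e he.1, fun v hv => ?_⟩
  rw [Sym2.mem_map] at hv
  obtain ⟨a, ha, rfl⟩ := hv
  exact Finset.mem_image_of_mem _ (he.2 a ha)

theorem image_image (h : SymSparse σ E) (X : Finset V) : (X.image σ).image σ = X := by
  ext v; rw [h.mem_image, h.mem_image, h.invol]

theorem defect_image (h : SymSparse σ E) (X : Finset V) :
    defect E (X.image σ) = defect E X := by
  have key : ∀ Y : Finset V, #(ins E Y) ≤ #(ins E (Y.image σ)) := fun Y =>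
    card_le_card_of_injOn (Sym2.map σ) (fun e he => h.map_ins he)
      (Function.LeftInverse.injective h.map_map).injOn
  have h1 := key X
  have h2 := key (X.image σ)
  rw [h.image_image] at h2
  unfold defect
  rw [card_image_of_injective _ h.inj]
  omega

/-- Non-fixed edges come in pairs, so a symmetric vertex set without fixed edges spans an even
number of edges. -/
theorem even_ins (h : SymSparse σ E) {X : Finset V} (hX : X.image σ = X)
    (hf : ∀ e ∈ ins E X, e.map σ ≠ e) : Even #(ins E X) := by
  rw [← ZMod.natCast_eq_zero_iff_even, ← nsmul_one, ← sum_const]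
  refine sum_involution (fun e _ => e.map σ) ?_ ?_ ?_ ?_
  · intros; decide
  · intro e he _; exact hf e he
  · intro e he; have := h.map_ins he; rwa [hX] at this
  · intro e _; exact h.map_map e

theorem odd_of_nofix (h : SymSparse σ E) {X : Finset V} (hX : X.image σ = X)
    (hf : ∀ e ∈ ins E X, e.map σ ≠ e) : Odd (defect E X) := by
  obtain ⟨k, hk⟩ := h.even_ins hX hf
  unfold defect
  exact ⟨#X - 2 - k, by rw [hk]; push_cast; ring⟩

/-- Oddness of the defect passes to symmetric subsets, because the only possible fixed edge is
missing from the larger set. -/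
theorem odd_mono (h : SymSparse σ E) {X Y : Finset V} (hX : X.image σ = X)
    (hY : Y.image σ = Y) (hYX : Y ⊆ X) (hodd : Odd (defect E X)) : Odd (defect E Y) := by
  have key : ∀ e ∈ ins E X, e.map σ ≠ e := by
    intro f hf hfix
    -- otherwise `f` is the unique fixed edge, and removing it leaves an even number of edges
    have hev : Even #((ins E X).erase f) := by
      rw [← ZMod.natCast_eq_zero_iff_even, ← nsmul_one, ← sum_const]
      refine sum_involution (fun e _ => e.map σ) ?_ ?_ ?_ ?_
      · intros; decide
      · intro e he _ h2
        rw [mem_erase] at he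
        exact he.1 (h.fix_le e (mem_ins.1 he.2).1 f (mem_ins.1 hf).1 h2 hfix)
      · intro e he
        rw [mem_erase] at he ⊢
        have := h.map_ins he.2
        rw [hX] at this
        refine ⟨fun h3 => he.1 ?_, this⟩
        rw [← h.map_map e, h3, hfix]
      · intro e _; exact h.map_map e
    have h1 := card_erase_add_one hf
    obtain ⟨k, hk⟩ := hev
    obtain ⟨m, hm⟩ := hodd
    unfold defect at hm
    omega
  refine h.odd_of_nofix hY fun e he => key e ?_
  rw [mem_ins] at he ⊢
  exact ⟨he.1, fun v hv => hYX (he.2 v hv)⟩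

theorem image_union (h : SymSparse σ E) (X : Finset V) :
    (X ∪ X.image σ).image σ = X ∪ X.image σ := by
  rw [Finset.image_union, h.image_image, Finset.union_comm]

theorem image_inter (h : SymSparse σ E) {X Y : Finset V} (hX : X.image σ = X)
    (hY : Y.image σ = Y) : (X ∩ Y).image σ = X ∩ Y := by
  rw [Finset.image_inter _ _ h.inj, hX, hY]

theorem mono (h : SymSparse σ E) {E' : Finset (Sym2 V)} (hE : E' ⊆ E)
    (hinv : ∀ e ∈ E', e.map σ ∈ E') : SymSparse σ E' where
  invol := h.invol
  nodiag e he := h.nodiag e (hE he)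
  inv := hinv
  sparse X hX := by
    refine le_trans ?_ (h.sparse X hX)
    have : ins E' X ⊆ ins E X := fun e he => by
      rw [mem_ins] at he ⊢; exact ⟨hE he.1, he.2⟩
    have := card_le_card this
    omega
  fix_le e he e' he' := h.fix_le e (hE he) e' (hE he')

/-- If no edge is fixed, no tight set contains a `σ`-stable pair of vertices. -/
theorem one_le_of_nofix (h : SymSparse σ E) (hf : ∀ e ∈ E, e.map σ ≠ e) {p q : V} (hpq : p ≠ q)
    (hst : (σ p = p ∧ σ q = q) ∨ σ p = q) {X : Finset V} (hp : p ∈ X) (hq : q ∈ X) :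
    1 ≤ defect E X := by
  by_contra hlt
  have h1 := defect_submod E X (X.image σ)
  rw [h.defect_image] at h1
  have hp' : p ∈ X.image σ := by rw [h.mem_image]; rcases hst with h2 | h2 <;> simp [h2, hp, hq]
  have hq' : q ∈ X.image σ := by
    rw [h.mem_image]
    rcases hst with h2 | h2
    · simp [h2, hq]
    · rw [← h2, h.invol]; exact hp
  have h2 := h.ge_zero (mem_inter.2 ⟨hp, hp'⟩) (mem_inter.2 ⟨hq, hq'⟩) hpq
  have h3 := h.ge_zero (mem_union_left (X.image σ) hp) (mem_union_left _ hq) hpq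
  obtain ⟨k, hk⟩ := h.odd_of_nofix (h.image_union X) fun e he => hf e (mem_ins.1 he).1
  omega

end SymSparse
end

section
open scoped Classical
open Finset

/-! ### Edges that may be added after deleting a three-valent vertex -/

/-- `{p, q}` is mapped to itself by the involution `σ`. -/
def StablePair (σ : V → V) (p q : V) : Prop := (σ p = p ∧ σ q = q) ∨ σ p = q

/-- Some tight set contains `p` and `q`. -/
def InTight (E : Finset (Sym2 V)) (p q : V) : Prop :=
  ∃ X : Finset V, p ∈ X ∧ q ∈ X ∧ defect E X ≤ 0

/-- Sparsity of `E` forbids adding the edges `pq` and `σp σq` simultaneously. -/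
def Blocked (σ : V → V) (E : Finset (Sym2 V)) (p q : V) : Prop :=
  InTight E p q ∨ ∃ X : Finset V, p ∈ X ∧ q ∈ X ∧ σ p ∈ X ∧ σ q ∈ X ∧ defect E X ≤ 1

/-- The situation left by deleting a vertex `v` with neighbours `x, y, z` together with `σ v`:
sets containing the neighbours of `v` lack an edge, those containing also the neighbours of
`σ v` lack two. -/
structure Triad (σ : V → V) (E : Finset (Sym2 V)) (x y z : V) : Prop where
  ss : SymSparse σ E
  hxy : x ≠ y
  hyz : y ≠ z
  hxz : x ≠ z
  b1 : ∀ X : Finset V, x ∈ X → y ∈ X → z ∈ X → 1 ≤ defect E X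
  b2 : ∀ X : Finset V, x ∈ X → y ∈ X → z ∈ X → σ x ∈ X → σ y ∈ X → σ z ∈ X → 2 ≤ defect E X

variable {σ : V → V} {E : Finset (Sym2 V)} {x y z p q r : V}

theorem InTight.symm (h : InTight E p q) : InTight E q p := by
  obtain ⟨X, h1, h2, h3⟩ := h; exact ⟨X, h2, h1, h3⟩

theorem Blocked.symm (h : Blocked σ E p q) : Blocked σ E q p := by
  rcases h with h | ⟨X, h1, h2, h3, h4, h5⟩
  · exact Or.inl h.symm
  · exact Or.inr ⟨X, h2, h1, h4, h3, h5⟩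

theorem Triad.rot (h : Triad σ E x y z) : Triad σ E y z x where
  ss := h.ss
  hxy := h.hyz
  hyz := h.hxz.symm
  hxz := h.hxy.symm
  b1 X a b c := h.b1 X c a b
  b2 X a b c d e f := h.b2 X c a b f d e

theorem Triad.swap (h : Triad σ E x y z) : Triad σ E y x z where
  ss := h.ss
  hxy := h.hxy.symm
  hyz := h.hxz
  hxz := h.hyz
  b1 X a b c := h.b1 X b a c
  b2 X a b c d e f := h.b2 X b a c e d f

/-- If `{p, q}` is `σ`-stable, the pairs `pr` and `qr` do not both lie in tight sets: the
union `A` of two such sets would meet `σA` exactly in `{p, q}`, making `pq` an edge across. -/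
theorem SymSparse.not_both_tight (h : SymSparse σ E) (hpq : p ≠ q)
    (hst : StablePair σ p q) (b1 : ∀ X : Finset V, p ∈ X → q ∈ X → r ∈ X → 1 ≤ defect E X)
    (b2 : ∀ X : Finset V, p ∈ X → q ∈ X → r ∈ X → σ r ∈ X → 2 ≤ defect E X)
    (h1 : InTight E p r) (h2 : InTight E q r) : False := by
  obtain ⟨T₁, hp, hr, hd1⟩ := h1
  obtain ⟨T₂, hq, hr2, hd2⟩ := h2
  have hq1 : q ∉ T₁ := fun hh => by linarith [b1 T₁ hp hh hr]
  have hp2 : p ∉ T₂ := fun hh => by linarith [b1 T₂ hh hq hr2]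
  have i1 := h.defect_cross hp hp2 hq hq1
  have i2 := h.ge_neg_one (mem_inter.2 ⟨hr, hr2⟩)
  have i3 := defect_submod E T₁ T₂
  set A := T₁ ∪ T₂ with hA
  have hpA : p ∈ A := mem_union_left _ hp
  have hqA : q ∈ A := mem_union_right _ hq
  have hrA : r ∈ A := mem_union_left _ hr
  have i4 := b1 A hpA hqA hrA
  have hpA' : p ∈ A.image σ := by
    rw [h.mem_image]; rcases hst with h2 | h2 <;> simp [h2, hpA, hqA]
  have hqA' : q ∈ A.image σ := by
    rw [h.mem_image]
    rcases hst with h2 | h2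
    · simp [h2, hqA]
    · rw [← h2, h.invol]; exact hpA
  have hrA' : σ r ∈ A.image σ := Finset.mem_image_of_mem _ hrA
  have i5 := defect_submod E A (A.image σ)
  rw [h.defect_image] at i5
  have i6 := b2 (A ∪ A.image σ) (mem_union_left _ hpA) (mem_union_left _ hqA)
    (mem_union_left _ hrA) (mem_union_right _ hrA')
  set S := A ∩ A.image σ with hS
  have hpS : p ∈ S := mem_inter.2 ⟨hpA, hpA'⟩
  have hqS : q ∈ S := mem_inter.2 ⟨hqA, hqA'⟩
  have i7 := defect_submod E S T₁
  have i8 := defect_submod E S T₂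
  have i9 := b1 (S ∪ T₁) (mem_union_left _ hpS) (mem_union_left _ hqS) (mem_union_right _ hr)
  have i10 := b1 (S ∪ T₂) (mem_union_left _ hpS) (mem_union_left _ hqS) (mem_union_right _ hr2)
  have hSpq : S = {p, q} := by
    ext v
    rw [mem_insert, mem_singleton]
    constructor
    · intro hv
      rcases mem_union.1 (mem_inter.1 hv).1 with hv1 | hv1
      · left
        exact h.eq_of_neg (X := S ∩ T₁) (by linarith) (mem_inter.2 ⟨hv, hv1⟩)
          (mem_inter.2 ⟨hpS, hp⟩)
      · right
        exact h.eq_of_neg (X := S ∩ T₂) (by linarith) (mem_inter.2 ⟨hv, hv1⟩)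
          (mem_inter.2 ⟨hqS, hq⟩)
    · rintro (rfl | rfl) <;> assumption
  rw [hSpq] at i5
  linarith

/-- If `xy` is blocked but in no tight set, then a symmetric set `T` of defect one contains
`x, y`, and no larger set of defect one contains `z`. -/
theorem Triad.near (h : Triad σ E x y z) (ht : ¬ InTight E x y) (hb : Blocked σ E x y) :
    ∃ T : Finset V, T.image σ = T ∧ x ∈ T ∧ y ∈ T ∧ defect E T = 1 ∧
      ∀ U : Finset V, T ⊆ U → z ∈ U → 2 ≤ defect E U := by
  have ht' : ∀ X : Finset V, x ∈ X → y ∈ X → 1 ≤ defect E X := by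
    intro X hx hy
    by_contra hlt
    exact ht ⟨X, hx, hy, by omega⟩
  obtain ⟨X, hx, hy, hx', hy', hd⟩ := hb.resolve_left ht
  have i1 := defect_submod E X (X.image σ)
  rw [h.ss.defect_image] at i1
  have hxX : x ∈ X.image σ := by rwa [h.ss.mem_image]
  have hyX : y ∈ X.image σ := by rwa [h.ss.mem_image]
  have i2 := ht' _ (mem_inter.2 ⟨hx, hxX⟩) (mem_inter.2 ⟨hy, hyX⟩)
  have i3 := ht' _ (mem_union_left (X.image σ) hx) (mem_union_left _ hy)
  refine ⟨X ∪ X.image σ, h.ss.image_union X, mem_union_left _ hx, mem_union_left _ hy,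
    by omega, ?_⟩
  intro U hU hz
  have hxU := hU (mem_union_left _ hx)
  have hyU := hU (mem_union_left _ hy)
  have hxU' := hU (mem_union_left _ hx')
  have hyU' := hU (mem_union_left _ hy')
  have i4 := defect_submod E U (U.image σ)
  rw [h.ss.defect_image] at i4
  have i5 := ht' (U ∩ U.image σ) (mem_inter.2 ⟨hxU, by rwa [h.ss.mem_image]⟩)
    (mem_inter.2 ⟨hyU, by rwa [h.ss.mem_image]⟩)
  have i6 := h.b2 (U ∪ U.image σ) (mem_union_left _ hxU) (mem_union_left _ hyU)
    (mem_union_left _ hz) (mem_union_left _ hxU') (mem_union_left _ hyU')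
    (mem_union_right _ (Finset.mem_image_of_mem _ hz))
  omega

/-- If `xy` is blocked but in no tight set, then `yz` and `xz` do not both lie in tight sets. -/
theorem Triad.not_near_tight_tight (h : Triad σ E x y z) (ht : ¬ InTight E x y)
    (hb : Blocked σ E x y) (h1 : InTight E y z) (h2 : InTight E x z) : False := by
  obtain ⟨T, -, hx, hy, hd, hU⟩ := h.near ht hb
  obtain ⟨T₁, hy1, hz1, hd1⟩ := h1
  obtain ⟨T₂, hx2, hz2, hd2⟩ := h2
  have i1 := defect_submod E T₁ T₂
  have i2 := h.ss.ge_neg_one (mem_inter.2 ⟨hz1, hz2⟩)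
  have i3 := defect_submod E T (T₁ ∪ T₂)
  have i4 := hU (T ∪ (T₁ ∪ T₂)) subset_union_left (by simp [hz1])
  have i5 : 1 ≤ defect E (T ∩ (T₁ ∪ T₂)) := by
    by_contra hlt
    exact ht ⟨T ∩ (T₁ ∪ T₂), mem_inter.2 ⟨hx, by simp [hx2]⟩, mem_inter.2 ⟨hy, by simp [hy1]⟩, by omega⟩
  omega

/-- Tight sets for all three pairs would glue to a set of too small defect. -/
theorem Triad.not_three_tight (h : Triad σ E x y z) (h1 : InTight E x y) (h2 : InTight E y z)
    (h3 : InTight E x z) : False := by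
  obtain ⟨T₁, hx1, hy1, hd1⟩ := h1
  obtain ⟨T₂, hy2, hz2, hd2⟩ := h2
  obtain ⟨T₃, hx3, hz3, hd3⟩ := h3
  have hz1 : z ∉ T₁ := fun hh => by linarith [h.b1 T₁ hx1 hy1 hh]
  have hx2 : x ∉ T₂ := fun hh => by linarith [h.b1 T₂ hh hy2 hz2]
  have i1 := h.ss.defect_cross hx1 hx2 hz2 hz1
  have i0 := defect_submod E T₁ T₂
  have i2 := h.ss.ge_neg_one (mem_inter.2 ⟨hy1, hy2⟩)
  have i3 := h.b1 (T₁ ∪ T₂) (by simp [hx1]) (by simp [hy1]) (by simp [hz2])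
  have i4 := h.b1 (T₁ ∪ T₃) (by simp [hx1]) (by simp [hy1]) (by simp [hz3])
  have i5 := h.b1 (T₂ ∪ T₃) (by simp [hx3]) (by simp [hy2]) (by simp [hz2])
  have i6 := h.b1 ((T₁ ∪ T₂) ∪ T₃) (by simp [hx1]) (by simp [hy1]) (by simp [hz2])
  have i7 := defect_submod E T₁ T₃
  have i8 := defect_submod E T₂ T₃
  have i9 := defect_submod E (T₁ ∪ T₂) T₃
  have hI : (T₁ ∪ T₂) ∩ T₃ = {x, z} := by
    ext v
    rw [mem_insert, mem_singleton]
    constructor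
    · intro hv
      obtain ⟨hv, hv3⟩ := mem_inter.1 hv
      rcases mem_union.1 hv with hv1 | hv1
      · left
        exact h.ss.eq_of_neg (X := T₁ ∩ T₃) (by linarith) (mem_inter.2 ⟨hv1, hv3⟩)
          (mem_inter.2 ⟨hx1, hx3⟩)
      · right
        exact h.ss.eq_of_neg (X := T₂ ∩ T₃) (by linarith) (mem_inter.2 ⟨hv1, hv3⟩)
          (mem_inter.2 ⟨hz2, hz3⟩)
    · rintro (rfl | rfl) <;> simp [*]
  rw [hI] at i9
  linarith

/-- Symmetric sets of defect one that contain `x, y` and `y, z` meet in `y` only. -/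
theorem Triad.inter_near (h : Triad σ E x y z) {T T' : Finset V} (hT : T.image σ = T)
    (hT' : T'.image σ = T') (hx : x ∈ T) (hy : y ∈ T) (hy' : y ∈ T') (hz' : z ∈ T')
    (hd : defect E T = 1) (hd' : defect E T' = 1) : ∀ v ∈ T ∩ T', v = y := by
  have i1 := defect_submod E T T'
  have key : ∀ {S : Finset V} {v : V}, S.image σ = S → v ∈ S → σ v ∈ S := fun hS hv => by
    have := Finset.mem_image_of_mem σ hv; rwa [hS] at this
  have i2 := h.b2 (T ∪ T') (by simp [hx]) (by simp [hy]) (by simp [hz']) (by simp [key hT hx])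
    (by simp [key hT hy]) (by simp [key hT' hz'])
  obtain ⟨k, hk⟩ := h.ss.odd_mono hT (h.ss.image_inter hT hT') inter_subset_left
    (hd ▸ odd_one)
  intro v hv
  exact h.ss.eq_of_neg (X := T ∩ T') (by omega) hv (mem_inter.2 ⟨hy, hy'⟩)

/-- If `T` is a symmetric set as in `Triad.near`, a tight set containing `z` and a non-fixed
vertex of `T` is disjoint from its mirror image. -/
theorem Triad.disjoint_mirror (h : Triad σ E x y z) {T T₀ : Finset V} (hT : T.image σ = T)
    (hd : defect E T = 1) (hU : ∀ U : Finset V, T ⊆ U → z ∈ U → 2 ≤ defect E U)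
    (hp : p ∈ T) (hp0 : p ∈ T₀) (hz0 : z ∈ T₀) (hd0 : defect E T₀ ≤ 0) (hfree : σ p ≠ p) :
    ∀ v ∈ T₀, σ v ∉ T₀ := by
  intro v hv hv'
  have key : σ p ∈ T := by
    have := Finset.mem_image_of_mem σ hp; rwa [hT] at this
  have i1 := defect_submod E T₀ (T₀.image σ)
  rw [h.ss.defect_image] at i1
  have i2 := h.ss.ge_neg_one (mem_inter.2 ⟨hv, (h.ss.mem_image (X := T₀)).2 hv'⟩)
  have hs := h.ss.image_union T₀
  set Y := T₀ ∪ T₀.image σ with hY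
  have hpY : p ∈ Y := mem_union_left _ hp0
  have hpY' : σ p ∈ Y := mem_union_right _ (Finset.mem_image_of_mem _ hp0)
  have i3 := defect_submod E T Y
  have i4 := hU (T ∪ Y) subset_union_left (by simp [hY, hz0])
  obtain ⟨k, hk⟩ := h.ss.odd_mono hT (h.ss.image_inter hT hs) inter_subset_left (hd ▸ odd_one)
  have i5 := h.ss.ge_zero (mem_inter.2 ⟨hp, hpY⟩) (mem_inter.2 ⟨key, hpY'⟩) hfree.symm
  omega

/-- Two non-stable pairs cannot both be blocked without lying in tight sets when the third pair is
blocked or stable. -/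
theorem Triad.not_near_near (h : Triad σ E x y z) (hxy : ¬ StablePair σ x y)
    (hyz : ¬ StablePair σ y z) (t1 : ¬ InTight E x y) (t2 : ¬ InTight E y z)
    (b1 : Blocked σ E x y) (b2 : Blocked σ E y z)
    (b3 : Blocked σ E x z ∨ StablePair σ x z) : False := by
  obtain ⟨T, hT, hx, hy, hd, hU⟩ := h.near t1 b1
  obtain ⟨T', hT', hy', hz', hd', hU'⟩ := h.rot.near t2 b2
  have key : ∀ {S : Finset V} {v : V}, S.image σ = S → v ∈ S → σ v ∈ S := fun hS hv => by
    have := Finset.mem_image_of_mem σ hv; rwa [hS] at this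
  have hI := h.inter_near hT hT' hx hy hy' hz' hd hd'
  have hσy : σ y = y := hI _ (mem_inter.2 ⟨key hT hy, key hT' hy'⟩)
  have hσx : σ x ≠ x := fun hh => hxy (Or.inl ⟨hh, hσy⟩)
  have hσz : σ z ≠ z := fun hh => hyz (Or.inl ⟨hσy, hh⟩)
  have b3' : Blocked σ E x z := by
    rcases b3 with b3 | b3 | b3
    · exact b3
    · exact absurd b3.1 hσx
    · exact absurd (hI _ (mem_inter.2 ⟨key hT hx, by rw [b3]; exact hz'⟩)) (by
        intro h4; exact h.hyz (h4.symm.trans b3))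
  by_cases t3 : InTight E x z
  · obtain ⟨T₀, hx0, hz0, hd0⟩ := t3
    have hdis := h.disjoint_mirror hT hd hU hx hx0 hz0 hd0 hσx
    have i1 := defect_submod E T T₀
    have i2 := hU (T ∪ T₀) subset_union_left (by simp [hz0])
    have i3 := h.ss.ge_neg_one (mem_inter.2 ⟨hx, hx0⟩)
    have i4 := defect_submod E (T ∪ T₀) (T₀.image σ)
    rw [h.ss.defect_image] at i4
    have hσxm : σ x ∈ T₀.image σ := Finset.mem_image_of_mem _ hx0
    have hσzm : σ z ∈ T₀.image σ := Finset.mem_image_of_mem _ hz0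
    have i5 := h.ss.ge_neg_one (X := (T ∪ T₀) ∩ T₀.image σ)
      (mem_inter.2 ⟨mem_union_left _ (key hT hx), hσxm⟩)
    have i6 := defect_submod E (T ∪ T₀ ∪ T₀.image σ) T'
    have i7 := h.b2 (T ∪ T₀ ∪ T₀.image σ ∪ T') (by simp [hx]) (by simp [hy]) (by simp [hz'])
      (by simp [key hT hx]) (by simp [key hT hy]) (by simp [key hT' hz'])
    have i8 := defect_submod E T' T₀
    have i9 := hU' (T' ∪ T₀) subset_union_left (by simp [hx0])
    have hz1 : ∀ v ∈ T' ∩ T₀, v = z := fun v hv =>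
      h.ss.eq_of_neg (X := T' ∩ T₀) (by omega) hv (mem_inter.2 ⟨hz', hz0⟩)
    have hset : (T ∪ T₀ ∪ T₀.image σ) ∩ T' = {y, z, σ z} := by
      ext v
      simp only [mem_inter, mem_union, mem_insert, mem_singleton]
      constructor
      · rintro ⟨(hv | hv) | hv, hv'⟩
        · exact Or.inl (hI v (mem_inter.2 ⟨hv, hv'⟩))
        · exact Or.inr (Or.inl (hz1 v (mem_inter.2 ⟨hv', hv⟩)))
        · rw [h.ss.mem_image] at hv
          have := hz1 _ (mem_inter.2 ⟨key hT' hv', hv⟩)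
          right; right; rw [← this, h.ss.invol]
      · rintro (rfl | rfl | rfl)
        · exact ⟨Or.inl (Or.inl hy), hy'⟩
        · exact ⟨Or.inl (Or.inr hz0), hz'⟩
        · exact ⟨Or.inr hσzm, key hT' hz'⟩
    rw [hset] at i6
    have hyσz : y ≠ σ z := fun hh => h.hyz (by rw [← hσy, hh, h.ss.invol])
    have j1 := h.ss.defect_triple h.hyz hσz.symm hyσz
    have ht2 : 1 ≤ defect E {y, z} := by
      by_contra hlt
      exact t2 ⟨{y, z}, by simp, by simp, by omega⟩
    have ht3 : defect E {y, σ z} = defect E {y, z} := by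
      rw [← h.ss.defect_image {y, z}]; simp [hσy]
    have hsp : ({z, σ z} : Finset V).image σ = {z, σ z} := by
      simp [h.ss.invol, Finset.pair_comm]
    obtain ⟨k, hk⟩ := h.ss.odd_mono hT' hsp (by
      intro v hv; simp only [mem_insert, mem_singleton] at hv
      rcases hv with rfl | rfl
      · exact hz'
      · exact key hT' hz') (hd' ▸ odd_one)
    have j2 := h.ss.ge_zero (X := {z, σ z}) (p := z) (q := σ z) (by simp) (by simp) hσz.symm
    omega
  · -- three near-tight sets: both `x` and `y` would be fixed
    obtain ⟨T'', hT'', hx'', hz'', hd'', -⟩ := h.rot.rot.swap.near t3 b3'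
    have hI2 := h.rot.rot.inter_near hT'' hT hz'' hx'' hx hy hd'' hd
    exact hσx (hI2 _ (mem_inter.2 ⟨key hT'' hx'', key hT hx⟩))

/-- If `xy` is stable and the other two pairs are not, those two are not both blocked. -/
theorem Triad.not_stable_blocked (h : Triad σ E x y z)
    (hn : ¬ (σ x = x ∧ σ y = y ∧ σ z = z)) (hxy : StablePair σ x y)
    (hxz : ¬ StablePair σ x z) (hyz : ¬ StablePair σ y z)
    (b1 : Blocked σ E x z) (b2 : Blocked σ E y z) : False := by
  have hb : ∀ X : Finset V, x ∈ X → y ∈ X → z ∈ X → σ z ∈ X → 2 ≤ defect E X := by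
    intro X h1 h2 h3 h4
    rcases hxy with ⟨h5, h6⟩ | h5
    · exact h.b2 X h1 h2 h3 (by rwa [h5]) (by rwa [h6]) h4
    · exact h.b2 X h1 h2 h3 (by rwa [h5]) (by rwa [← h5, h.ss.invol]) h4
  -- a symmetric near-tight set for `xz` contradicts the tightness of `yz`
  have aux : ∀ {x y z : V}, Triad σ E x y z → StablePair σ x y → σ z ≠ z →
      ¬ InTight E x z → Blocked σ E x z → InTight E y z → σ x = x → σ y = y → False := by
    intro x y z h hxy hz t b h2 hx hy
    obtain ⟨T, hT, hxT, hzT, hd, hU⟩ := h.rot.swap.rot.rot.near t b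
    obtain ⟨T₀, hy0, hz0, hd0⟩ := h2
    exact h.rot.swap.rot.rot.disjoint_mirror hT hd hU hzT hz0 hy0 hd0 hz y hy0 (by rwa [hy])
  by_cases t1 : InTight E x z
  · by_cases t2 : InTight E y z
    · exact h.ss.not_both_tight h.hxy hxy h.b1 hb t1 t2
    · rcases hxy with ⟨h5, h6⟩ | h5
      · exact aux h.swap (Or.inl ⟨h6, h5⟩) (fun hz => hn ⟨h5, h6, hz⟩) t2 b2 t1 h6 h5
      · obtain ⟨X, h1, h2, h3, h4, h6⟩ := b2.resolve_left t2
        linarith [hb X (by rwa [← h5, h.ss.invol] at h3) h1 h2 h4]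
  · rcases hxy with ⟨h5, h6⟩ | h5
    · by_cases t2 : InTight E y z
      · exact aux h (Or.inl ⟨h5, h6⟩) (fun hz => hn ⟨h5, h6, hz⟩) t1 b1 t2 h5 h6
      · exact h.rot.rot.swap.not_near_near hxz
          (fun hs => hyz (by
            rcases hs with hs | hs
            · exact Or.inl ⟨hs.2, hs.1⟩
            · exact Or.inr (by rw [← hs, h.ss.invol])))
          t1 (fun hh => t2 hh.symm) b1 b2.symm (Or.inr (Or.inl ⟨h5, h6⟩))
    · obtain ⟨X, h1, h2, h3, h4, h6⟩ := b1.resolve_left t1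
      linarith [hb X h1 (by rwa [← h5]) h2 h4]

theorem Triad.stable_comm (h : Triad σ E x y z) (hs : StablePair σ p q) : StablePair σ q p := by
  rcases hs with hs | hs
  · exact Or.inl ⟨hs.2, hs.1⟩
  · exact Or.inr (by rw [← hs, h.ss.invol])

/-- After deleting a three-valent vertex with neighbours `x, y, z` and its mirror image, one of
the edges `xy, yz, xz` can be added together with its mirror image, unless `x, y, z` are all
fixed by `σ`. -/
theorem Triad.exists_unblocked (h : Triad σ E x y z) (hn : ¬ (σ x = x ∧ σ y = y ∧ σ z = z)) :
    (¬ StablePair σ x y ∧ ¬ Blocked σ E x y) ∨ (¬ StablePair σ y z ∧ ¬ Blocked σ E y z) ∨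
      (¬ StablePair σ x z ∧ ¬ Blocked σ E x z) := by
  by_contra hcon
  push Not at hcon
  obtain ⟨c1, c2, c3⟩ := hcon
  -- at most one of the three pairs is stable
  have two : ∀ {x y z : V}, Triad σ E x y z → ¬ (σ x = x ∧ σ y = y ∧ σ z = z) →
      StablePair σ x y → ¬ StablePair σ x z ∧ ¬ StablePair σ y z := by
    rintro x y z h hn hs
    have := h.hxy
    have := h.hyz
    have := h.hxz
    have hi := h.ss.invol
    unfold StablePair at *
    grind
  by_cases s1 : StablePair σ x y
  · obtain ⟨h1, h2⟩ := two h hn s1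
    exact h.not_stable_blocked hn s1 h1 h2 (c3 h1) (c2 h2)
  by_cases s2 : StablePair σ y z
  · have hn' : ¬ (σ y = y ∧ σ z = z ∧ σ x = x) := fun hh => hn ⟨hh.2.2, hh.1, hh.2.1⟩
    obtain ⟨h1, h2⟩ := two h.rot hn' s2
    exact h.rot.not_stable_blocked hn' s2 h1 h2 (c1 s1).symm
      (c3 fun h3 => h2 (h.stable_comm h3)).symm
  by_cases s3 : StablePair σ x z
  · have hn' : ¬ (σ x = x ∧ σ z = z ∧ σ y = y) := fun hh => hn ⟨hh.1, hh.2.2, hh.2.1⟩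
    have h' : Triad σ E x z y := h.rot.rot.swap
    obtain ⟨h1, h2⟩ := two h' hn' s3
    exact h'.not_stable_blocked hn' s3 h1 h2 (c1 h1) (c2 s2).symm
  have d1 := c1 s1
  have d2 := c2 s2
  have d3 := c3 s3
  have s1' := fun h3 => s1 (h.stable_comm h3)
  have s2' := fun h3 => s2 (h.stable_comm h3)
  have s3' := fun h3 => s3 (h.stable_comm h3)
  by_cases t1 : InTight E x y <;> by_cases t2 : InTight E y z <;> by_cases t3 : InTight E x z
  · exact h.not_three_tight t1 t2 t3
  · exact h.rot.rot.swap.not_near_tight_tight t3 d3 t2.symm t1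
  · exact h.rot.not_near_tight_tight t2 d2 t3.symm t1.symm
  · exact h.rot.not_near_near s2 s3' t2 (fun hh => t3 hh.symm) d2 d3.symm (Or.inl d1.symm)
  · exact h.not_near_tight_tight t1 d1 t2 t3
  · exact h.rot.rot.not_near_near s3' s1 (fun hh => t3 hh.symm) t1 d3.symm d1 (Or.inl d2.symm)
  · exact h.not_near_near s1 s2 t1 t2 d1 d2 (Or.inl d3)
  · exact h.not_near_near s1 s2 t1 t2 d1 d2 (Or.inl d3)

end

section
open scoped Classical
open Finset

/-! ### Generic symmetric configurations on the sphere -/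

/-- Along a line of linear maps, the kernel is larger than at the base point for only finitely
many parameters. -/
theorem finite_ker_jump {Q T : Type*} [AddCommGroup Q] [Module ℝ Q] [FiniteDimensional ℝ Q]
    [AddCommGroup T] [Module ℝ T] (A B : Q →ₗ[ℝ] T) :
    {t : ℝ | ¬ Module.finrank ℝ (LinearMap.ker (A + t • B)) ≤
      Module.finrank ℝ (LinearMap.ker A)}.Finite := by
  obtain ⟨C, hC⟩ := Submodule.exists_isCompl (LinearMap.ker A)
  have hinj : LinearMap.ker (A.domRestrict C) = ⊥ := by
    rw [LinearMap.ker_eq_bot']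
    intro c hc
    have : (c : Q) ∈ LinearMap.ker A ⊓ C := ⟨hc, c.2⟩
    rw [hC.inf_eq_bot] at this
    exact Subtype.ext ((Submodule.mem_bot ℝ).1 this)
  obtain ⟨g, hg⟩ := (A.domRestrict C).exists_leftInverse_of_injective hinj
  let N : Module.End ℝ C := g ∘ₗ B.domRestrict C
  have hfin : {t : ℝ | N.HasEigenvalue (-t⁻¹)}.Finite := by
    refine Set.Finite.preimage (f := fun t : ℝ => -t⁻¹) ?_ (Module.End.finite_hasEigenvalue N)
    intro s _ t _ hst
    simpa using hst
  refine hfin.subset fun t ht => ?_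
  by_contra hev
  apply ht
  have hdisj : LinearMap.ker (A + t • B) ⊓ C = ⊥ := by
    rw [eq_bot_iff]
    rintro x ⟨hx, hxC⟩
    rw [Submodule.mem_bot]
    by_contra hx0
    have h1 : A x + t • B x = 0 := by simpa using hx
    have h2 : (⟨x, hxC⟩ : C) + t • N ⟨x, hxC⟩ = 0 := by
      have h3 : g (A x) = (⟨x, hxC⟩ : C) := LinearMap.congr_fun hg ⟨x, hxC⟩
      have h4 : N ⟨x, hxC⟩ = g (B x) := rfl
      rw [h4, ← h3, ← map_smul, ← map_add, h1, map_zero]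
    have ht0 : t ≠ 0 := by
      rintro rfl
      simp only [zero_smul, add_zero] at h2
      exact hx0 (congrArg Subtype.val h2)
    apply hev
    refine Module.End.hasEigenvalue_of_hasEigenvector (x := ⟨x, hxC⟩) ⟨?_, ?_⟩
    · rw [Module.End.mem_eigenspace_iff]
      have h5 : t • N ⟨x, hxC⟩ = -⟨x, hxC⟩ := by
        rw [eq_neg_iff_add_eq_zero, add_comm]; exact h2
      rw [neg_smul, ← smul_neg, ← h5, smul_smul, inv_mul_cancel₀ ht0, one_smul]
    · intro h0
      exact hx0 (congrArg Subtype.val h0)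
  have h1 := Submodule.finrank_sup_add_finrank_inf_eq (LinearMap.ker (A + t • B)) C
  rw [hdisj, finrank_bot] at h1
  have h2 := Submodule.finrank_le (LinearMap.ker (A + t • B) ⊔ C)
  have h3 := Submodule.finrank_add_eq_of_isCompl hC
  omega

/-- A property of configurations that, once it holds somewhere on a line, holds at all but
finitely many points of the line. -/
def Generic (C : (V → Fin 3 → ℝ) → Prop) : Prop :=
  ∀ P D : V → Fin 3 → ℝ, C P → {t : ℝ | ¬ C (P + t • D)}.Finite

theorem Generic.and {C C' : (V → Fin 3 → ℝ) → Prop} (h : Generic C) (h' : Generic C') :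
    Generic fun P => C P ∧ C' P := by
  intro P D hP
  refine ((h P D hP.1).union (h' P D hP.2)).subset fun t ht => ?_
  simp only [Set.mem_union, Set.mem_ofPred_eq] at *
  tauto

/-- A bound on the kernel dimension of linear maps depending affinely on the configuration is a
generic property. -/
theorem Generic.of_ker {Q T : Type*} [AddCommGroup Q] [Module ℝ Q] [FiniteDimensional ℝ Q]
    [AddCommGroup T] [Module ℝ T] {F F₀ : (V → Fin 3 → ℝ) → Q →ₗ[ℝ] T} (k : ℕ)
    (hF : ∀ P D (t : ℝ), F (P + t • D) = F P + t • F₀ D) {C : (V → Fin 3 → ℝ) → Prop}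
    (hC : ∀ P, C P ↔ Module.finrank ℝ (LinearMap.ker (F P)) ≤ k) : Generic C := by
  intro P D hP
  refine (finite_ker_jump (F P) (F₀ D)).subset fun t ht => ?_
  simp only [Set.mem_ofPred_eq, hC] at ht hP ⊢
  rw [hF] at ht
  omega

/-- The half-turn about the third coordinate axis. -/
def turn (x : Fin 3 → ℝ) : Fin 3 → ℝ := ![-x 0, -x 1, x 2]

theorem turn_turn (x : Fin 3 → ℝ) : turn (turn x) = x := by
  ext i; fin_cases i <;> simp [turn]

theorem turn_add (x y : Fin 3 → ℝ) : turn (x + y) = turn x + turn y := by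
  ext i; fin_cases i <;> simp [turn] <;> ring

theorem turn_smul (c : ℝ) (x : Fin 3 → ℝ) : turn (c • x) = c • turn x := by
  ext i; fin_cases i <;> simp [turn]

theorem turn_dot (x y : Fin 3 → ℝ) : turn x ⬝ᵥ y = x ⬝ᵥ turn y := by
  simp [turn, dotProduct, Fin.sum_univ_three]

/-- Spherical configurations with half-turn symmetry whose vertices in `H` lie on the
equator. -/
def Sym (σ : V → V) (H : Set V) (P : V → Fin 3 → ℝ) : Prop :=
  (∀ i ∉ H, P (σ i) = turn (P i)) ∧ ∀ i ∈ H, P i 2 = 0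

/-- The involution `σ` fixes exactly the vertices in `H`. -/
structure Act (σ : V → V) (H : Set V) : Prop where
  invol : ∀ v, σ (σ v) = v
  fix : ∀ v ∈ H, σ v = v
  free : ∀ v ∉ H, σ v ≠ v

variable {σ : V → V} {H : Set V}

theorem Act.mem_iff (h : Act σ H) {v : V} : σ v ∈ H ↔ v ∈ H := by
  constructor
  · intro hv
    have := h.fix _ hv
    rw [h.invol] at this
    rwa [← this] at hv
  · intro hv; rwa [h.fix _ hv]

theorem Act.fix_iff (h : Act σ H) {v : V} : σ v = v ↔ v ∈ H :=
  ⟨fun hv => by by_contra hn; exact h.free _ hn hv, h.fix v⟩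

theorem Sym.add {P D : V → Fin 3 → ℝ} (hP : Sym σ H P) (hD : Sym σ H D) (t : ℝ) :
    Sym σ H (P + t • D) := by
  refine ⟨fun i hi => ?_, fun i hi => ?_⟩
  · simp [hP.1 i hi, hD.1 i hi, turn_add, turn_smul]
  · simp [hP.2 i hi, hD.2 i hi]

/-- Generic properties that are separately realisable by symmetric configurations are jointly
realisable. -/
theorem Generic.exists_both {C C' : (V → Fin 3 → ℝ) → Prop} (h : Generic C) (h' : Generic C')
    (e : ∃ P, Sym σ H P ∧ C P) (e' : ∃ P, Sym σ H P ∧ C' P) :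
    ∃ P, Sym σ H P ∧ C P ∧ C' P := by
  obtain ⟨P, hP, hC⟩ := e
  obtain ⟨P', hP', hC'⟩ := e'
  have f1 := h P (P' + (-1 : ℝ) • P) hC
  have f2 := (h' P' (P + (-1 : ℝ) • P') hC').preimage (f := fun t : ℝ => 1 - t)
    (fun s _ t _ hst => by simpa using hst)
  obtain ⟨t, ht⟩ := (f1.union f2).exists_notMem
  simp only [Set.mem_union, Set.mem_ofPred_eq, Set.mem_preimage, not_or, not_not] at ht
  refine ⟨P + t • (P' + (-1 : ℝ) • P), hP.add (hP'.add hP _) t, ht.1, ?_⟩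
  have : P + t • (P' + (-1 : ℝ) • P) = P' + (1 - t) • (P + (-1 : ℝ) • P') := by module
  rw [this]; exact ht.2

/-- The coefficient map of the spherical rigidity system on the vertex set `W`; the first
component, scaled by `c`, kills the velocities outside `W`. -/
noncomputable def rmap (W : Finset V) (E : Finset (Sym2 V)) (c : ℝ) (P : V → Fin 3 → ℝ) :
    (V → Fin 3 → ℝ) →ₗ[ℝ] (V → Fin 3 → ℝ) × (V → ℝ) × (V × V → ℝ) where
  toFun q := (fun i => if i ∈ W then 0 else c • q i, fun i => if i ∈ W then P i ⬝ᵥ q i else 0,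
    fun ij => if s(ij.1, ij.2) ∈ E then P ij.1 ⬝ᵥ q ij.2 + P ij.2 ⬝ᵥ q ij.1 else 0)
  map_add' q q' := by
    refine Prod.ext ?_ (Prod.ext ?_ ?_) <;> funext i <;> dsimp only [Pi.add_apply, Prod.fst_add, Prod.snd_add] <;>
      split_ifs <;>
      simp [dotProduct_add] <;> ring
  map_smul' s q := by
    refine Prod.ext ?_ (Prod.ext ?_ ?_) <;> funext i <;> dsimp only [Pi.smul_apply, Prod.smul_fst, Prod.smul_snd, RingHom.id_apply] <;>
      split_ifs <;>
      simp [dotProduct_smul, mul_add, smul_smul, mul_comm]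

/-- The infinitesimal motions of the spherical framework on the vertices `W` and the edges `E`;
velocities outside `W` are normalised to zero. -/
noncomputable def Mot (W : Finset V) (E : Finset (Sym2 V)) (P : V → Fin 3 → ℝ) :
    Submodule ℝ (V → Fin 3 → ℝ) := LinearMap.ker (rmap W E 1 P)

theorem mem_Mot {W : Finset V} {E : Finset (Sym2 V)} {P q : V → Fin 3 → ℝ} :
    q ∈ Mot W E P ↔ (∀ i ∉ W, q i = 0) ∧ (∀ i ∈ W, P i ⬝ᵥ q i = 0) ∧
      ∀ i j, s(i, j) ∈ E → P i ⬝ᵥ q j + P j ⬝ᵥ q i = 0 := by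
  simp only [Mot, LinearMap.mem_ker, rmap, LinearMap.coe_mk, AddHom.coe_mk, Prod.mk_eq_zero,
    funext_iff, Pi.zero_apply, one_smul, Prod.forall]
  refine and_congr ⟨fun h i hi => ?_, fun h i => ?_⟩ (and_congr ⟨fun h i hi => ?_, fun h i => ?_⟩
    ⟨fun h i j hij => ?_, fun h i j => ?_⟩)
  · simpa [hi, funext_iff] using h i
  · split_ifs with hi
    · simp
    · simp [h i hi]
  · simpa [hi] using h i
  · split_ifs with hi
    · exact h i hi
    · rfl
  · simpa [hij] using h i j
  · split_ifs with hi
    · exact h i j hi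
    · rfl

/-- The pair `(W, E)` has an infinitesimally rigid symmetric realisation on the sphere. -/
def Rig (σ : V → V) (H : Set V) (W : Finset V) (E : Finset (Sym2 V)) : Prop :=
  ∃ P, Sym σ H P ∧ Module.finrank ℝ (Mot W E P) ≤ 3

/-- Infinitesimal rigidity is generic. -/
theorem generic_rigid [Finite V] (W : Finset V) (E : Finset (Sym2 V)) :
    Generic fun P : V → Fin 3 → ℝ => Module.finrank ℝ (Mot W E P) ≤ 3 := by
  refine Generic.of_ker (F := rmap W E 1) (F₀ := rmap W E 0) 3 ?_ fun P => Iff.rfl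
  intro P D t
  refine LinearMap.ext fun q => Prod.ext ?_ (Prod.ext ?_ ?_) <;> funext i <;>
    simp only [rmap, LinearMap.add_apply, LinearMap.smul_apply, LinearMap.coe_mk, AddHom.coe_mk,
      Prod.fst_add, Prod.snd_add, Prod.smul_fst, Prod.smul_snd, Pi.add_apply, Pi.smul_apply] <;>
    split_ifs <;> simp [add_dotProduct, smul_dotProduct]
  ring

/-- The vectors at `x, y, z` are linearly independent. -/
def Ind (P : V → Fin 3 → ℝ) (x y z : V) : Prop :=
  ∀ u : Fin 3 → ℝ, P x ⬝ᵥ u = 0 → P y ⬝ᵥ u = 0 → P z ⬝ᵥ u = 0 → u = 0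

/-- The map `u ↦ (b · u)_b`. -/
def dots (b : Fin 3 → Fin 3 → ℝ) : (Fin 3 → ℝ) →ₗ[ℝ] (Fin 3 → ℝ) where
  toFun u k := b k ⬝ᵥ u
  map_add' u v := by ext k; simp [dotProduct_add]
  map_smul' c u := by ext k; simp [dotProduct_smul]

theorem finrank_dots (b : Fin 3 → Fin 3 → ℝ) :
    Module.finrank ℝ (LinearMap.ker (dots b)) ≤ 0 ↔
      ∀ u : Fin 3 → ℝ, b 0 ⬝ᵥ u = 0 → b 1 ⬝ᵥ u = 0 → b 2 ⬝ᵥ u = 0 → u = 0 := by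
  rw [Nat.le_zero, Submodule.finrank_eq_zero, LinearMap.ker_eq_bot']
  refine forall_congr' fun u => ?_
  simp only [dots, LinearMap.coe_mk, AddHom.coe_mk, funext_iff, Fin.forall_fin_succ,
    Pi.zero_apply, IsEmpty.forall_iff, and_true]
  tauto

theorem generic_Ind (x y z : V) : Generic fun P : V → Fin 3 → ℝ => Ind P x y z := by
  refine Generic.of_ker (F := fun P => dots ![P x, P y, P z])
    (F₀ := fun P => dots ![P x, P y, P z]) 0 ?_
    fun P => (finrank_dots ![P x, P y, P z]).symm
  intro P D t
  refine LinearMap.ext fun u => funext fun k => ?_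
  fin_cases k <;> simp [dots, add_dotProduct, smul_dotProduct]

/-- The vectors at `x`, `y` and the third coordinate vector are linearly independent. -/
theorem generic_Ind_axis (x y : V) : Generic fun P : V → Fin 3 → ℝ =>
    ∀ u : Fin 3 → ℝ, P x ⬝ᵥ u = 0 → P y ⬝ᵥ u = 0 → ![0, 0, 1] ⬝ᵥ u = 0 → u = 0 := by
  refine Generic.of_ker (F := fun P => dots ![P x, P y, ![0, 0, 1]])
    (F₀ := fun P => dots ![P x, P y, 0]) 0 ?_
    fun P => (finrank_dots ![P x, P y, ![0, 0, 1]]).symm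
  intro P D t
  refine LinearMap.ext fun u => funext fun k => ?_
  fin_cases k <;> simp [dots, add_dotProduct, smul_dotProduct]

theorem generic_coord (x : V) (k : Fin 3) : Generic fun P : V → Fin 3 → ℝ => P x k ≠ 0 := by
  refine Generic.of_ker (F := fun P => P x k • LinearMap.id (R := ℝ) (M := ℝ))
    (F₀ := fun P => P x k • LinearMap.id (R := ℝ) (M := ℝ)) 0 ?_ fun P => ?_
  · intro P D t; ext; simp
  · rw [Nat.le_zero, Submodule.finrank_eq_zero, LinearMap.ker_eq_bot']
    constructor
    · intro h u hu; simpa [h] using hu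
    · intro h h0
      have := h 1 (by simp [h0])
      exact one_ne_zero this

end

section
open scoped Classical
open Finset

/-! ### Symmetric motions and special positions -/

variable {σ : V → V} {H : Set V} {W : Finset V} {E : Finset (Sym2 V)} {P q : V → Fin 3 → ℝ}

/-- The sign relating the position of `i` to that of `σ i`. -/
noncomputable def sgn (H : Set V) (i : V) : ℝ := if i ∈ H then -1 else 1

theorem sgn_mul_self (H : Set V) (i : V) : sgn H i * sgn H i = 1 := by
  unfold sgn; split_ifs <;> norm_num

/-- Both symmetry conditions in one formula: the half-turn is minus the identity on the equator. -/
theorem Sym.map_eq (hP : Sym σ H P) (ha : Act σ H) (i : V) :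
    P (σ i) = sgn H i • turn (P i) := by
  unfold sgn
  split_ifs with hi
  · rw [ha.fix i hi]
    have := hP.2 i hi
    ext k; fin_cases k <;> simp [turn, this]
  · rw [hP.1 i hi, one_smul]

theorem Sym.dot_map (hP : Sym σ H P) (ha : Act σ H) (i : V) (u : Fin 3 → ℝ) :
    P (σ i) ⬝ᵥ u = sgn H i * (P i ⬝ᵥ turn u) := by
  rw [hP.map_eq ha, smul_dotProduct, turn_dot, smul_eq_mul]

theorem Sym.dot_turn (hP : Sym σ H P) (ha : Act σ H) (i : V) (u : Fin 3 → ℝ) :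
    P i ⬝ᵥ turn u = sgn H i * (P (σ i) ⬝ᵥ u) := by
  rw [hP.dot_map ha, ← mul_assoc, sgn_mul_self, one_mul]

/-- The mirror image of a velocity assignment under the symmetry. -/
noncomputable def mir (σ : V → V) (H : Set V) (q : V → Fin 3 → ℝ) : V → Fin 3 → ℝ :=
  fun i => sgn H i • turn (q (σ i))

/-- The symmetry acts on the motions of a symmetric framework. -/
theorem mir_mem (ha : Act σ H) (hP : Sym σ H P) (hW : ∀ v ∈ W, σ v ∈ W)
    (hE : ∀ e ∈ E, e.map σ ∈ E) (hq : q ∈ Mot W E P) : mir σ H q ∈ Mot W E P := by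
  rw [mem_Mot] at hq ⊢
  refine ⟨fun i hi => ?_, fun i hi => ?_, fun i j hij => ?_⟩
  · have h1 : σ i ∉ W := fun hh => hi (by have := hW _ hh; rwa [ha.invol] at this)
    ext k
    simp only [mir, hq.1 _ h1]
    fin_cases k <;> simp [turn]
  · simp [mir, hP.dot_turn ha, hq.2.1 _ (hW i hi)]
  · have h1 := hq.2.2 (σ i) (σ j) (by simpa using hE _ hij)
    simp only [mir, dotProduct_smul, hP.dot_turn ha, smul_eq_mul]
    linear_combination sgn H i * sgn H j * h1

/-- An edge condition implied by the system also holds at the mirror image of the edge. -/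
theorem mirror_edge (ha : Act σ H) (hP : Sym σ H P) (hW : ∀ v ∈ W, σ v ∈ W)
    (hE : ∀ e ∈ E, e.map σ ∈ E) {i j : V}
    (h : ∀ q ∈ Mot W E P, P i ⬝ᵥ q j + P j ⬝ᵥ q i = 0) (hq : q ∈ Mot W E P) :
    P (σ i) ⬝ᵥ q (σ j) + P (σ j) ⬝ᵥ q (σ i) = 0 := by
  have h1 := h _ (mir_mem ha hP hW hE hq)
  simp only [mir, dotProduct_smul, hP.dot_turn ha, smul_eq_mul] at h1
  have h2 := sgn_mul_self H i
  have h3 := sgn_mul_self H j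
  linear_combination sgn H i * sgn H j * h1 - (sgn H j * sgn H j) *
    (P (σ i) ⬝ᵥ q (σ j) + P (σ j) ⬝ᵥ q (σ i)) * h2 -
    (P (σ i) ⬝ᵥ q (σ j) + P (σ j) ⬝ᵥ q (σ i)) * h3

/-- Three linearly dependent vectors: two of the edge conditions imply the third one. -/
theorem edge_of_dep {p₁ p₂ p₃ q₁ q₂ q₃ : Fin 3 → ℝ} {a b c : ℝ} (hb : b ≠ 0) (hc : c ≠ 0)
    (h : a • p₁ + b • p₂ + c • p₃ = 0) (t₁ : p₁ ⬝ᵥ q₁ = 0) (t₂ : p₂ ⬝ᵥ q₂ = 0)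
    (t₃ : p₃ ⬝ᵥ q₃ = 0) (e₁₂ : p₁ ⬝ᵥ q₂ + p₂ ⬝ᵥ q₁ = 0) (e₁₃ : p₁ ⬝ᵥ q₃ + p₃ ⬝ᵥ q₁ = 0) :
    p₂ ⬝ᵥ q₃ + p₃ ⬝ᵥ q₂ = 0 := by
  have key : ∀ u, a * (p₁ ⬝ᵥ u) + b * (p₂ ⬝ᵥ u) + c * (p₃ ⬝ᵥ u) = 0 := fun u => by
    have := congrArg (· ⬝ᵥ u) h
    simpa [add_dotProduct, smul_dotProduct] using this
  have h1 := key q₁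
  have h2 := key q₂
  have h3 := key q₃
  refine (mul_eq_zero.1 (?_ : (b * c) * _ = 0)).resolve_left (mul_ne_zero hb hc)
  linear_combination a * h1 + b * h2 + c * h3 - a * a * t₁ - b * b * t₂ - c * c * t₃
    - a * b * e₁₂ - a * c * e₁₃

/-- Four linearly dependent vectors: five of the edge conditions imply the sixth one. -/
theorem edge_of_dep_four {p₁ p₂ p₃ p₄ q₁ q₂ q₃ q₄ : Fin 3 → ℝ} {a b c d : ℝ} (hc : c ≠ 0)
    (hd : d ≠ 0) (h : a • p₁ + b • p₂ + c • p₃ + d • p₄ = 0) (t₁ : p₁ ⬝ᵥ q₁ = 0)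
    (t₂ : p₂ ⬝ᵥ q₂ = 0) (t₃ : p₃ ⬝ᵥ q₃ = 0) (t₄ : p₄ ⬝ᵥ q₄ = 0)
    (e₁₂ : p₁ ⬝ᵥ q₂ + p₂ ⬝ᵥ q₁ = 0) (e₁₃ : p₁ ⬝ᵥ q₃ + p₃ ⬝ᵥ q₁ = 0)
    (e₁₄ : p₁ ⬝ᵥ q₄ + p₄ ⬝ᵥ q₁ = 0) (e₂₃ : p₂ ⬝ᵥ q₃ + p₃ ⬝ᵥ q₂ = 0)
    (e₂₄ : p₂ ⬝ᵥ q₄ + p₄ ⬝ᵥ q₂ = 0) : p₃ ⬝ᵥ q₄ + p₄ ⬝ᵥ q₃ = 0 := by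
  have key : ∀ u, a * (p₁ ⬝ᵥ u) + b * (p₂ ⬝ᵥ u) + c * (p₃ ⬝ᵥ u) + d * (p₄ ⬝ᵥ u) = 0 :=
    fun u => by
      have := congrArg (· ⬝ᵥ u) h
      simpa [add_dotProduct, smul_dotProduct] using this
  have h1 := key q₁
  have h2 := key q₂
  have h3 := key q₃
  have h4 := key q₄
  refine (mul_eq_zero.1 (?_ : (c * d) * _ = 0)).resolve_left (mul_ne_zero hc hd)
  linear_combination a * h1 + b * h2 + c * h3 + d * h4 - a * a * t₁ - b * b * t₂ - c * c * t₃
    - d * d * t₄ - a * b * e₁₂ - a * c * e₁₃ - a * d * e₁₄ - b * c * e₂₃ - b * d * e₂₄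

/-- Inductive step for rigidity: the vertices of `R` are placed in special position, so that
the conditions at `R` imply those of the edges of `E'` and determine the velocities at `R`. -/
theorem Rig.extend [Finite V] {R : Finset V} {E' : Finset (Sym2 V)} (hR : Rig σ H (W \ R) E')
    (hE' : ∀ e ∈ E', ∀ v ∈ e, v ∉ R) {C : (V → Fin 3 → ℝ) → Prop} (hC : Generic C)
    (hC0 : ∃ P, Sym σ H P ∧ C P)
    (step : ∀ P, Sym σ H P → C P → ∃ P', Sym σ H P' ∧ (∀ v ∉ R, P' v = P v) ∧
      ∀ q ∈ Mot W E P', (∀ i j, s(i, j) ∈ E' → P' i ⬝ᵥ q j + P' j ⬝ᵥ q i = 0) ∧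
        ((∀ i ∉ R, q i = 0) → q = 0)) : Rig σ H W E := by
  obtain ⟨P, hP, hr, hCP⟩ := (generic_rigid (W \ R) E').exists_both hC hR hC0
  obtain ⟨P', hP', hPP, h⟩ := step P hP hCP
  refine ⟨P', hP', le_trans ?_ hr⟩
  let f : (V → Fin 3 → ℝ) →ₗ[ℝ] (V → Fin 3 → ℝ) :=
    LinearMap.pi fun i => if i ∈ R then 0 else LinearMap.proj i
  have hf : ∀ q i, f q i = if i ∈ R then 0 else q i := by
    intro q i
    simp only [f, LinearMap.pi_apply]
    split_ifs <;> rfl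
  have hmaps : ∀ q ∈ Mot W E P', f q ∈ Mot (W \ R) E' P := by
    intro q hq
    have h1 := mem_Mot.1 hq
    rw [mem_Mot]
    refine ⟨fun i hi => ?_, fun i hi => ?_, fun i j hij => ?_⟩
    · rw [hf]
      split_ifs with hiR
      · rfl
      · exact h1.1 i fun hh => hi (mem_sdiff.2 ⟨hh, hiR⟩)
    · rw [mem_sdiff] at hi
      rw [hf, if_neg hi.2, ← hPP i hi.2, h1.2.1 i hi.1]
    · have hi := hE' _ hij i (Sym2.mem_mk_left i j)
      have hj := hE' _ hij j (Sym2.mem_mk_right i j)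
      rw [hf, hf, if_neg hi, if_neg hj, ← hPP i hi, ← hPP j hj]
      exact (h q hq).1 i j hij
  refine LinearMap.finrank_le_finrank_of_injective (f := f.restrict hmaps) ?_
  rw [← LinearMap.ker_eq_bot, LinearMap.ker_eq_bot']
  rintro ⟨q, hq⟩ h0
  refine Subtype.ext ((h q hq).2 fun i hi => ?_)
  have h2 : f q = 0 := congrArg Subtype.val h0
  have h3 := congrFun h2 i
  rwa [hf, if_neg hi] at h3

/-- Extending given positions outside the orbit of `v` to a symmetric configuration. -/
theorem Sym.update_free (ha : Act σ H) (hP : Sym σ H P) {v : V} (hv : v ∉ H) (x : Fin 3 → ℝ) :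
    ∃ P', Sym σ H P' ∧ (∀ w, w ≠ v → w ≠ σ v → P' w = P w) ∧ P' v = x ∧ P' (σ v) = turn x := by
  have hne := ha.free v hv
  refine ⟨fun w => if w = v then x else if w = σ v then turn x else P w, ⟨?_, ?_⟩, ?_, ?_, ?_⟩
  · intro i hi
    by_cases h1 : i = v
    · subst h1; simp [hne]
    by_cases h2 : i = σ v
    · subst h2; simp [ha.invol, hne, turn_turn]
    have h3 : σ i ≠ v := fun hh => h2 (by rw [← hh, ha.invol])
    have h4 : σ i ≠ σ v := fun hh => h1 (by rw [← ha.invol i, hh, ha.invol])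
    simp [h1, h2, h3, h4, hP.1 i hi]
  · intro i hi
    have h1 : i ≠ v := fun hh => hv (hh ▸ hi)
    have h2 : i ≠ σ v := fun hh => hv (ha.mem_iff.1 (hh ▸ hi))
    simp [h1, h2, hP.2 i hi]
  · intro w h1 h2; simp [h1, h2]
  · simp
  · simp [hne]

theorem Sym.update_line (ha : Act σ H) (hP : Sym σ H P) {v : V} (hv : v ∈ H) {x : Fin 3 → ℝ}
    (hx : x 2 = 0) : ∃ P', Sym σ H P' ∧ (∀ w, w ≠ v → P' w = P w) ∧ P' v = x := by
  refine ⟨fun w => if w = v then x else P w, ⟨?_, ?_⟩, ?_, ?_⟩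
  · intro i hi
    have h1 : i ≠ v := fun hh => hi (hh ▸ hv)
    have h2 : σ i ≠ v := fun hh => hi (ha.mem_iff.1 (hh ▸ hv))
    simp [h1, h2, hP.1 i hi]
  · intro i hi
    by_cases h1 : i = v
    · simp [h1, hx]
    · simp [h1, hP.2 i hi]
  · intro w h1; simp [h1]
  · simp

/-- Prescribing the position of one vertex, subject to the symmetry constraints. -/
theorem Sym.update (ha : Act σ H) (hP : Sym σ H P) (v : V) {x : Fin 3 → ℝ}
    (hx : v ∈ H → x 2 = 0) :
    ∃ P', Sym σ H P' ∧ (∀ w, w ≠ v → w ≠ σ v → P' w = P w) ∧ P' v = x := by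
  by_cases hv : v ∈ H
  · obtain ⟨P', h1, h2, h3⟩ := hP.update_line ha hv (hx hv)
    exact ⟨P', h1, fun w hw _ => h2 w hw, h3⟩
  · obtain ⟨P', h1, h2, h3, -⟩ := hP.update_free ha hv x
    exact ⟨P', h1, h2, h3⟩

theorem Sym.zero : Sym σ H (0 : V → Fin 3 → ℝ) :=
  ⟨fun i _ => by ext k; fin_cases k <;> simp [turn], fun i _ => rfl⟩

theorem exists_coord_two (ha : Act σ H) {v : V} (hv : v ∉ H) : ∃ P, Sym σ H P ∧ P v 2 ≠ 0 := by
  obtain ⟨P, h1, -, h2⟩ := (Sym.zero (σ := σ) (H := H)).update ha v (x := ![0, 0, 1])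
    (fun h => absurd h hv)
  exact ⟨P, h1, by simp [h2]⟩

theorem exists_coord_zero (ha : Act σ H) (v : V) : ∃ P, Sym σ H P ∧ P v 0 ≠ 0 := by
  obtain ⟨P, h1, -, h2⟩ := (Sym.zero (σ := σ) (H := H)).update ha v (x := ![1, 0, 0])
    (fun h => by simp)
  exact ⟨P, h1, by simp [h2]⟩

/-- Two vertices in different orbits can be given any two values, within the equatorial plane for
vertices in `H`. -/
theorem exists_two (ha : Act σ H) {x y : V} (hxy : y ≠ x) (hxy' : y ≠ σ x) {a b : Fin 3 → ℝ}
    (hx : x ∈ H → a 2 = 0) (hy : y ∈ H → b 2 = 0) : ∃ P, Sym σ H P ∧ P x = a ∧ P y = b := by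
  obtain ⟨P, h1, -, h2⟩ := (Sym.zero (σ := σ) (H := H)).update ha x hx
  obtain ⟨P', h3, h4, h5⟩ := h1.update ha y hy
  refine ⟨P', h3, ?_, h5⟩
  rw [h4 x hxy.symm (fun hh => hxy' (by rw [hh, ha.invol])), h2]

/-- Two vertices, one of them equatorial, can be placed symmetrically so that their vectors and the
axis are linearly independent. -/
theorem exists_Ind_axis (ha : Act σ H) {x y : V} (hxy : x ≠ y) (hx : x ∈ H) :
    ∃ P, Sym σ H P ∧ ∀ u : Fin 3 → ℝ, P x ⬝ᵥ u = 0 → P y ⬝ᵥ u = 0 → ![0, 0, 1] ⬝ᵥ u = 0 →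
      u = 0 := by
  obtain ⟨P, h1, h2, h3⟩ := exists_two ha (a := ![1, 0, 0]) (b := ![0, 1, 0]) hxy.symm
    (by rw [ha.fix x hx]; exact hxy.symm) (fun _ => by simp) (fun _ => by simp)
  refine ⟨P, h1, fun u hu1 hu2 hu3 => ?_⟩
  rw [h2] at hu1
  rw [h3] at hu2
  simp [dotProduct, Fin.sum_univ_three] at hu1 hu2 hu3
  ext k; fin_cases k <;> simp [*]

theorem Ind.perm {x y z : V} (h : Ind P x y z) : Ind P y z x :=
  fun u h1 h2 h3 => h u h3 h1 h2

theorem Ind.swap {x y z : V} (h : Ind P x y z) : Ind P y x z :=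
  fun u h1 h2 h3 => h u h2 h1 h3

/-- Three distinct vertices that do not all lie on the equator can be placed symmetrically at
linearly independent vectors. -/
theorem exists_Ind (ha : Act σ H) {x y z : V} (hxy : x ≠ y) (hyz : y ≠ z) (hxz : x ≠ z)
    (hH : ¬ (x ∈ H ∧ y ∈ H ∧ z ∈ H)) : ∃ P, Sym σ H P ∧ Ind P x y z := by
  have pair : ∀ {x y z : V}, x ∉ H → σ x = y → z ≠ x → z ≠ y →
      ∃ P, Sym σ H P ∧ Ind P x y z := by
    intro x y z hx hy h1 h2
    obtain ⟨P, hP, hPx, hPz⟩ := exists_two ha (a := ![1, 0, 1]) (b := ![0, 1, 0]) h1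
      (by rwa [hy]) (fun h => absurd h hx) (fun _ => by simp)
    refine ⟨P, hP, fun u hu1 hu2 hu3 => ?_⟩
    rw [← hy, hP.1 x hx, hPx] at hu2
    rw [hPx] at hu1
    rw [hPz] at hu3
    simp [dotProduct, Fin.sum_univ_three, turn] at hu1 hu2 hu3
    ext k; fin_cases k <;> simp <;> linarith
  have free : ∀ {x y z : V}, x ∉ H → x ≠ y → y ≠ z → x ≠ z → σ x ≠ y → σ x ≠ z → σ y ≠ z →
      ∃ P, Sym σ H P ∧ Ind P x y z := by
    intro x y z hx h1 h2 h3 h4 h5 h6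
    obtain ⟨P, hP, hPx, hPy⟩ := exists_two ha (a := ![0, 0, 1]) (b := ![1, 0, 0]) h1.symm
      h4.symm (fun h => absurd h hx) (fun _ => by simp)
    obtain ⟨P', hP', hE, hPz⟩ := hP.update ha z (x := ![0, 1, 0]) (fun _ => by simp)
    have h7 : x ≠ σ z := fun hh => h5 (by rw [hh, ha.invol])
    have h8 : y ≠ σ z := fun hh => h6 (by rw [hh, ha.invol])
    refine ⟨P', hP', fun u hu1 hu2 hu3 => ?_⟩
    rw [hE x h3 h7, hPx] at hu1
    rw [hE y h2 h8, hPy] at hu2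
    rw [hPz] at hu3
    simp [dotProduct, Fin.sum_univ_three] at hu1 hu2 hu3
    ext k; fin_cases k <;> simp [*]
  have hfix := @ha.fix
  have hfree := @ha.free
  have hinv := @ha.invol
  by_cases c1 : σ x = y
  · exact pair (fun h => hxy (by rw [← c1, ha.fix x h])) c1 hxz.symm hyz.symm
  by_cases c2 : σ y = z
  · obtain ⟨P, h1, h2⟩ := pair (fun h => hyz (by rw [← c2, ha.fix y h])) c2 hxy hxz
    exact ⟨P, h1, h2.perm.perm⟩
  by_cases c3 : σ x = z
  · obtain ⟨P, h1, h2⟩ := pair (fun h => hxz (by rw [← c3, ha.fix x h])) c3 hxy.symm hyz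
    exact ⟨P, h1, h2.perm.perm.swap⟩
  have c1' : σ y ≠ x := fun hh => c1 (by rw [← hh, ha.invol])
  have c2' : σ z ≠ y := fun hh => c2 (by rw [← hh, ha.invol])
  have c3' : σ z ≠ x := fun hh => c3 (by rw [← hh, ha.invol])
  by_cases hx : x ∈ H
  · by_cases hy : y ∈ H
    · obtain ⟨P, h1, h2⟩ := free (fun hz => hH ⟨hx, hy, hz⟩) hxz.symm hxy hyz.symm c3' c2' c1
      exact ⟨P, h1, h2.perm⟩
    · obtain ⟨P, h1, h2⟩ := free hy hyz hxz.symm hxy.symm c2 c1' c3'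
      exact ⟨P, h1, h2.perm.perm⟩
  · exact free hx hxy hyz hxz c1 c3 c2

end

section
open scoped Classical
open Finset

/-! ### Deleting vertices from tight graphs -/

/-- `(W, E)` is a `(2,3)`-tight graph, symmetric under `σ`, with exactly one fixed edge. -/
structure Good (σ : V → V) (W : Finset V) (E : Finset (Sym2 V)) : Prop where
  ss : SymSparse σ E
  inv : ∀ v ∈ W, σ v ∈ W
  sub : ∀ e ∈ E, ∀ v ∈ e, v ∈ W
  card : #E + 3 = 2 * #W
  fix : ∃ f ∈ E, f.map σ = f

/-- The edges of `E` that avoid `R`. -/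
noncomputable def rem (E : Finset (Sym2 V)) (R : Finset V) : Finset (Sym2 V) :=
  E.filter fun e => ∀ v ∈ e, v ∉ R

variable {σ : V → V} {W : Finset V} {E : Finset (Sym2 V)} {R : Finset V}

theorem mem_rem {e : Sym2 V} : e ∈ rem E R ↔ e ∈ E ∧ ∀ v ∈ e, v ∉ R := by simp [rem]

theorem mk_mem_rem {a b : V} : s(a, b) ∈ rem E R ↔ s(a, b) ∈ E ∧ a ∉ R ∧ b ∉ R := by
  simp [mem_rem]

theorem rem_sub : rem E R ⊆ E := filter_subset _ _

theorem SymSparse.rem_inv (h : SymSparse σ E) (hR : ∀ v ∈ R, σ v ∈ R) :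
    ∀ e ∈ rem E R, e.map σ ∈ rem E R := by
  intro e he
  rw [mem_rem] at he ⊢
  refine ⟨h.inv e he.1, fun v hv hvR => ?_⟩
  rw [Sym2.mem_map] at hv
  obtain ⟨w, hw, rfl⟩ := hv
  exact he.2 w hw (by have := hR _ hvR; rwa [h.invol] at this)

theorem SymSparse.rem (h : SymSparse σ E) (hR : ∀ v ∈ R, σ v ∈ R) : SymSparse σ (rem E R) :=
  h.mono rem_sub (h.rem_inv hR)

/-- The ends of a fixed edge form a stable pair. -/
theorem stable_of_fix {a b : V} (h : (s(a, b)).map σ = s(a, b)) : StablePair σ a b := by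
  rw [Sym2.map_mk, Sym2.eq_iff] at h
  rcases h with h | h
  · exact Or.inl h
  · exact Or.inr h.1

theorem fix_of_stable (hinv : ∀ v, σ (σ v) = v) {a b : V} (h : StablePair σ a b) :
    (s(a, b)).map σ = s(a, b) := by
  rw [Sym2.map_mk, Sym2.eq_iff]
  rcases h with h | h
  · exact Or.inl h
  · exact Or.inr ⟨h, by rw [← h, hinv]⟩

/-- Edges of `E` within `X ∪ Z` that meet `R` raise the defect of `X` in `rem E R`. -/
theorem SymSparse.count (h : SymSparse σ E) {X Z : Finset V} {S : Finset (Sym2 V)}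
    (hS : S ⊆ E) (hSR : ∀ e ∈ S, e ∉ RigidityPaper.rem E R) (hSX : ∀ e ∈ S, ∀ v ∈ e, v ∈ X ∪ Z)
    (hX : ∃ p ∈ X, ∃ q ∈ X, p ≠ q) : (#S : ℤ) - 2 * #Z ≤ defect (RigidityPaper.rem E R) X := by
  have h1 : ins (RigidityPaper.rem E R) X ∪ S ⊆ ins E (X ∪ Z) := by
    intro e he
    rw [mem_ins]
    rcases mem_union.1 he with he | he
    · rw [mem_ins] at he
      exact ⟨rem_sub he.1, fun v hv => mem_union_left _ (he.2 v hv)⟩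
    · exact ⟨hS he, hSX e he⟩
  have h2 := card_le_card h1
  rw [card_union_of_disjoint] at h2
  · obtain ⟨p, hp, q, hq, hpq⟩ := hX
    have h3 := h.sparse (X ∪ Z) (one_lt_card.2
      ⟨p, mem_union_left _ hp, q, mem_union_left _ hq, hpq⟩)
    have h4 := card_union_le X Z
    unfold defect
    omega
  · rw [Finset.disjoint_right]
    exact fun e he he' => hSR e he (mem_ins.1 he').1

theorem Good.card_sdiff_inv (h : Good σ W E) (hR : ∀ v ∈ R, σ v ∈ R) :
    ∀ v ∈ W \ R, σ v ∈ W \ R := by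
  intro v hv
  rw [mem_sdiff] at hv ⊢
  exact ⟨h.inv v hv.1, fun hh => hv.2 (by have := hR _ hh; rwa [h.ss.invol] at this)⟩

theorem Good.rem_sub_sdiff (h : Good σ W E) : ∀ e ∈ rem E R, ∀ v ∈ e, v ∈ W \ R := by
  intro e he v hv
  rw [mem_rem] at he
  exact mem_sdiff.2 ⟨h.sub e he.1 v hv, he.2 v hv⟩

/-- Deletion of a vertex set that loses exactly two edges per vertex and not the fixed edge. -/
theorem Good.remove_zero (h : Good σ W E) (hRW : R ⊆ W) (hR : ∀ v ∈ R, σ v ∈ R)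
    (hc : #E = #(rem E R) + 2 * #R) (hf : ∃ f ∈ rem E R, f.map σ = f) :
    Good σ (W \ R) (rem E R) where
  ss := h.ss.rem hR
  inv := h.card_sdiff_inv hR
  sub := h.rem_sub_sdiff
  card := by
    have h1 := card_sdiff_add_card_eq_card hRW
    have h2 := h.card
    omega
  fix := hf

theorem ins_union_le {E N : Finset (Sym2 V)} {X : Finset V} :
    #(ins (E ∪ N) X) ≤ #(ins E X) + #(ins N X) := by
  refine le_trans (card_le_card ?_) (card_union_le _ _)
  intro e he
  simp only [mem_ins, mem_union] at *
  tauto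

theorem notMem_of_defect {E : Finset (Sym2 V)} {p q : V} (hpq : p ≠ q)
    (h : 1 ≤ defect E {p, q}) : s(p, q) ∉ E := by
  intro hE
  have h1 : s(p, q) ∈ ins E {p, q} := by simp [mem_ins, hE]
  have h2 := card_pos.2 ⟨_, h1⟩
  unfold defect at h
  rw [card_pair hpq] at h
  omega

/-- Deletion of a vertex set together with the fixed edge: a new stable edge `pq` replaces it. -/
theorem Good.remove_one (h : Good σ W E) (hRW : R ⊆ W) (hR : ∀ v ∈ R, σ v ∈ R)
    {p q : V} (hp : p ∈ W \ R) (hq : q ∈ W \ R) (hpq : p ≠ q) (hst : StablePair σ p q)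
    (hc : #E = #(rem E R) + 2 * #R + 1) (hf : ∀ e ∈ rem E R, e.map σ ≠ e) :
    Good σ (W \ R) (rem E R ∪ {s(p, q)}) := by
  have hS := h.ss.rem hR
  have key := fun X hp hq => hS.one_le_of_nofix hf hpq hst (X := X) hp hq
  have hfix := fix_of_stable h.ss.invol hst
  have hnot := notMem_of_defect hpq (key {p, q} (by simp) (by simp))
  refine ⟨⟨h.ss.invol, ?_, ?_, ?_, ?_⟩, h.card_sdiff_inv hR, ?_, ?_, s(p, q), by simp, hfix⟩
  · intro e he
    rcases mem_union.1 he with he | he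
    · exact hS.nodiag e he
    · rw [mem_singleton] at he; subst he; simpa using hpq
  · intro e he
    rcases mem_union.1 he with he | he
    · exact mem_union_left _ (hS.inv e he)
    · rw [mem_singleton] at he; subst he; rw [hfix]; simp
  · intro X hX
    have h1 := ins_union_le (E := rem E R) (N := {s(p, q)}) (X := X)
    by_cases hpX : p ∈ X ∧ q ∈ X
    · have h2 := key X hpX.1 hpX.2
      have h3 : #(ins {s(p, q)} X) ≤ 1 := card_le_card (filter_subset _ _)
      unfold defect at h2
      omega
    · have h3 : ins {s(p, q)} X = ∅ := by
        rw [← subset_empty]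
        intro e he
        rw [mem_ins, mem_singleton] at he
        obtain ⟨rfl, he⟩ := he
        exact absurd ⟨he p (by simp), he q (by simp)⟩ hpX
      have h2 := hS.sparse X hX
      rw [h3, card_empty] at h1
      omega
  · intro e he e' he' h1 h2
    rcases mem_union.1 he with he | he
    · exact absurd h1 (hf e he)
    · rcases mem_union.1 he' with he' | he'
      · exact absurd h2 (hf e' he')
      · rw [mem_singleton] at he he'; rw [he, he']
  · intro e he
    rcases mem_union.1 he with he | he
    · exact h.rem_sub_sdiff e he
    · rw [mem_singleton] at he; subst he
      intro v hv
      rcases Sym2.mem_iff.1 hv with rfl | rfl <;> assumption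
  · rw [card_union_of_disjoint (by simpa using hnot), card_singleton]
    have h1 := card_sdiff_add_card_eq_card hRW
    have h2 := h.card
    omega

/-- Deletion of a vertex set not containing an end of the fixed edge, with two edges too many: the
new edges `pq` and `σp σq` replace them. -/
theorem Good.remove_two (h : Good σ W E) (hRW : R ⊆ W) (hR : ∀ v ∈ R, σ v ∈ R)
    {p q : V} (hp : p ∈ W \ R) (hq : q ∈ W \ R) (hpq : p ≠ q) (hst : ¬ StablePair σ p q)
    (hc : #E = #(rem E R) + 2 * #R + 2) (hf : ∃ f ∈ rem E R, f.map σ = f)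
    (hb : ¬ Blocked σ (rem E R) p q) :
    Good σ (W \ R) (rem E R ∪ {s(p, q), s(σ p, σ q)}) := by
  have hS := h.ss.rem hR
  have hb1 : ∀ X : Finset V, p ∈ X → q ∈ X → 1 ≤ defect (rem E R) X := by
    intro X h1 h2
    by_contra h3
    exact hb (Or.inl ⟨X, h1, h2, by omega⟩)
  have hb1' : ∀ X : Finset V, σ p ∈ X → σ q ∈ X → 1 ≤ defect (rem E R) X := by
    intro X h1 h2
    rw [← hS.defect_image]
    exact hb1 _ (hS.mem_image.2 h1) (hS.mem_image.2 h2)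
  have hb2 : ∀ X : Finset V, p ∈ X → q ∈ X → σ p ∈ X → σ q ∈ X →
      2 ≤ defect (rem E R) X := by
    intro X h1 h2 h3 h4
    by_contra h5
    exact hb (Or.inr ⟨X, h1, h2, h3, h4, by omega⟩)
  have hpq' : σ p ≠ σ q := fun hh => hpq (hS.inj hh)
  have hne : s(p, q) ≠ s(σ p, σ q) := by
    intro hh
    refine hst (stable_of_fix ?_)
    rw [Sym2.map_mk]; exact hh.symm
  have hn1 := notMem_of_defect hpq (hb1 {p, q} (by simp) (by simp))
  have hn2 := notMem_of_defect hpq' (hb1' {σ p, σ q} (by simp) (by simp))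
  have hNfix : ∀ e ∈ ({s(p, q), s(σ p, σ q)} : Finset (Sym2 V)), e.map σ ≠ e := by
    intro e he hfix
    rw [mem_insert, mem_singleton] at he
    rcases he with rfl | rfl
    · exact hst (stable_of_fix hfix)
    · rw [Sym2.map_mk, h.ss.invol, h.ss.invol] at hfix
      exact hne hfix
  have hinv := h.card_sdiff_inv hR
  refine ⟨⟨h.ss.invol, ?_, ?_, ?_, ?_⟩, hinv, ?_, ?_, ?_⟩
  · intro e he
    rcases mem_union.1 he with he | he
    · exact hS.nodiag e he
    · rw [mem_insert, mem_singleton] at he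
      rcases he with rfl | rfl <;> simpa
  · intro e he
    rcases mem_union.1 he with he | he
    · exact mem_union_left _ (hS.inv e he)
    · rw [mem_insert, mem_singleton] at he
      rcases he with rfl | rfl <;> simp [h.ss.invol]
  · intro X hX
    have h1 := ins_union_le (E := rem E R) (N := {s(p, q), s(σ p, σ q)}) (X := X)
    have h2 : #(ins {s(p, q), s(σ p, σ q)} X) ≤ (if p ∈ X ∧ q ∈ X then 1 else 0) +
        (if σ p ∈ X ∧ σ q ∈ X then 1 else 0) := by
      have h3 : ins {s(p, q), s(σ p, σ q)} X ⊆ (if p ∈ X ∧ q ∈ X then {s(p, q)} else ∅) ∪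
          (if σ p ∈ X ∧ σ q ∈ X then {s(σ p, σ q)} else ∅) := by
        intro e he
        rw [mem_ins, mem_insert, mem_singleton] at he
        obtain ⟨rfl | rfl, he⟩ := he
        · rw [if_pos ⟨he p (by simp), he q (by simp)⟩]; simp
        · rw [if_pos (c := σ p ∈ X ∧ σ q ∈ X) ⟨he _ (by simp), he _ (by simp)⟩]; simp
      refine le_trans (card_le_card h3) (le_trans (card_union_le _ _) ?_)
      split_ifs <;> simp
    have h4 := hS.sparse X hX
    split_ifs at h2 with c1 c2 c2
    · have h5 := hb2 X c1.1 c1.2 c2.1 c2.2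
      unfold defect at h5; omega
    · have h5 := hb1 X c1.1 c1.2
      unfold defect at h5; omega
    · have h5 := hb1' X c2.1 c2.2
      unfold defect at h5; omega
    · omega
  · intro e he e' he' h1 h2
    rcases mem_union.1 he with he | he
    · rcases mem_union.1 he' with he' | he'
      · exact hS.fix_le e he e' he' h1 h2
      · exact absurd h2 (hNfix e' he')
    · exact absurd h1 (hNfix e he)
  · intro e he
    rcases mem_union.1 he with he | he
    · exact h.rem_sub_sdiff e he
    · rw [mem_insert, mem_singleton] at he
      intro v hv
      rcases he with rfl | rfl
      · rcases Sym2.mem_iff.1 hv with rfl | rfl <;> assumption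
      · rcases Sym2.mem_iff.1 hv with rfl | rfl
        · exact hinv _ hp
        · exact hinv _ hq
  · rw [card_union_of_disjoint, card_pair hne]
    · have h1 := card_sdiff_add_card_eq_card hRW
      have h2 := h.card
      omega
    · simp [hn1, hn2]
  · obtain ⟨f, hf, hff⟩ := hf
    exact ⟨f, mem_union_left _ hf, hff⟩

/-- The edges at `v`. -/
noncomputable def inc (E : Finset (Sym2 V)) (v : V) : Finset (Sym2 V) := E.filter (v ∈ ·)

theorem mem_inc {v : V} {e : Sym2 V} : e ∈ inc E v ↔ e ∈ E ∧ v ∈ e := by simp [inc]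

variable [Fintype V]

/-- The neighbours of `v`. -/
noncomputable def nb (E : Finset (Sym2 V)) (v : V) : Finset V := univ.filter fun w => s(v, w) ∈ E

theorem mem_nb {v w : V} : w ∈ nb E v ↔ s(v, w) ∈ E := by simp [nb]

theorem card_inc (E : Finset (Sym2 V)) (v : V) : #(inc E v) = #(nb E v) := by
  have : inc E v = (nb E v).image fun w => s(v, w) := by
    ext e
    simp only [mem_inc, Finset.mem_image, mem_nb]
    constructor
    · rintro ⟨h1, w, rfl⟩; exact ⟨w, h1, rfl⟩
    · rintro ⟨w, h1, rfl⟩; exact ⟨h1, by simp⟩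
  rw [this, card_image_of_injective]
  intro a b hab
  exact Sym2.congr_right.1 hab

theorem card_rem_single (v : V) : #E = #(rem E {v}) + #(nb E v) := by
  rw [← card_inc, add_comm, ← card_filter_add_card_filter_not (s := E) (v ∈ ·)]
  congr 2
  ext e
  simp only [mem_rem, mem_filter, mem_singleton]
  refine and_congr_right fun _ => ⟨fun h w hw hwv => h (hwv ▸ hw), fun h hv => h v hv rfl⟩

theorem SymSparse.nb_map (h : SymSparse σ E) {v w : V} : σ w ∈ nb E (σ v) ↔ w ∈ nb E v := by
  rw [mem_nb, mem_nb]
  constructor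
  · intro hh
    have := h.inv _ hh
    rwa [Sym2.map_mk, h.invol, h.invol] at this
  · intro hh; exact h.inv _ hh

theorem SymSparse.nb_image (h : SymSparse σ E) (v : V) : nb E (σ v) = (nb E v).image σ := by
  ext w
  rw [h.mem_image, ← h.nb_map, h.invol]

theorem SymSparse.card_nb_map (h : SymSparse σ E) (v : V) : #(nb E (σ v)) = #(nb E v) := by
  rw [h.nb_image, card_image_of_injective _ h.inj]

theorem SymSparse.notMem_nb (h : SymSparse σ E) (v : V) : v ∉ nb E v := by
  intro hh
  exact h.nodiag _ (mem_nb.1 hh) (by simp)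

theorem SymSparse.card_rem_pair (h : SymSparse σ E) {v : V} (hv : σ v ≠ v) :
    #E + (if σ v ∈ nb E v then 1 else 0) = #(RigidityPaper.rem E {v, σ v}) + 2 * #(nb E v) := by
  have h1 : #E = #(inc E v ∪ inc E (σ v)) + #(RigidityPaper.rem E {v, σ v}) := by
    rw [← card_filter_add_card_filter_not (s := E) (fun e => v ∈ e ∨ σ v ∈ e)]
    congr 2
    · ext e; simp only [mem_filter, mem_union, mem_inc]; tauto
    · ext e
      simp only [mem_rem, mem_filter, mem_insert, mem_singleton]
      grind
  have h2 := card_union_add_card_inter (inc E v) (inc E (σ v))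
  rw [card_inc, card_inc, h.card_nb_map] at h2
  have h3 : #(inc E v ∩ inc E (σ v)) = if σ v ∈ nb E v then 1 else 0 := by
    have h4 : inc E v ∩ inc E (σ v) = if σ v ∈ nb E v then {s(v, σ v)} else ∅ := by
      ext e
      simp only [mem_inter, mem_inc]
      have h5 : v ∈ e ∧ σ v ∈ e ↔ e = s(v, σ v) := Sym2.mem_and_mem_iff hv.symm
      split_ifs with h6
      · rw [mem_singleton, ← h5]
        rw [mem_nb] at h6
        constructor
        · tauto
        · rintro ⟨h7, h8⟩
          have := h5.1 ⟨h7, h8⟩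
          subst this
          tauto
      · rw [mem_nb] at h6
        simp only [notMem_empty, iff_false]
        rintro ⟨⟨h7, h8⟩, -, h9⟩
        exact h6 (h5.1 ⟨h8, h9⟩ ▸ h7)
    rw [h4]; split_ifs <;> simp
  omega

end

section
open scoped Classical
open Finset

/-! ### Two- and three-valent vertices put back -/

variable {σ : V → V} {H : Set V} {W : Finset V} {E : Finset (Sym2 V)}

theorem Mot.tan {P q : V → Fin 3 → ℝ} (hq : q ∈ Mot W E P) (v : V) : P v ⬝ᵥ q v = 0 := by
  by_cases h : v ∈ W
  · exact (mem_Mot.1 hq).2.1 v h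
  · simp [(mem_Mot.1 hq).1 v h]

theorem Good.pair_sub (hg : Good σ W E) {v : V} (hv : v ∈ W) : {v, σ v} ⊆ W := by
  intro w hw
  rw [mem_insert, mem_singleton] at hw
  rcases hw with rfl | rfl
  · exact hv
  · exact hg.inv _ hv

theorem Good.pair_inv (hg : Good σ W E) (v : V) :
    ∀ w ∈ ({v, σ v} : Finset V), σ w ∈ ({v, σ v} : Finset V) := by
  intro w hw
  rw [mem_insert, mem_singleton] at hw
  rcases hw with rfl | rfl <;> simp [hg.ss.invol]

theorem card_sdiff_lt {R : Finset V} (hR : R ⊆ W) {v : V} (hv : v ∈ R) : #(W \ R) < #W :=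
  card_lt_card ⟨sdiff_subset, fun h => (mem_sdiff.1 (h (hR hv))).2 hv⟩

variable [Fintype V]

theorem Mot.edge {P q : V → Fin 3 → ℝ} (hq : q ∈ Mot W E P) {v w : V} (h : w ∈ nb E v) :
    P v ⬝ᵥ q w + P w ⬝ᵥ q v = 0 := (mem_Mot.1 hq).2.2 v w (mem_nb.1 h)

theorem Mot.edge_zero {P q : V → Fin 3 → ℝ} (hq : q ∈ Mot W E P) {v w : V} (h : w ∈ nb E v)
    (h0 : q w = 0) : P w ⬝ᵥ q v = 0 := by
  have := Mot.edge hq h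
  simpa [h0] using this

theorem Good.nb_mem (hg : Good σ W E) {v w : V} (h : w ∈ nb E v) : w ∈ W :=
  hg.sub _ (mem_nb.1 h) _ (by simp)

theorem Good.nb_ne (hg : Good σ W E) {v w : V} (h : w ∈ nb E v) : w ≠ v := fun hh =>
  hg.ss.notMem_nb v (hh ▸ h)

theorem mem_nb_comm {v w : V} (h : w ∈ nb E v) : v ∈ nb E w := by
  rw [mem_nb] at *; rwa [Sym2.eq_swap]

/-- The orbit of a free vertex `v` is put back: its position may be chosen freely, and only the
edge condition at `p, q` and the velocity of `v` have to be examined. -/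
theorem Rig.extend_free (ha : Act σ H) (hg : Good σ W E) {v : V} (hv : v ∉ H) {p q : V}
    {N : Finset (Sym2 V)} (hR : Rig σ H (W \ {v, σ v}) (rem E {v, σ v} ∪ N))
    (hN : ∀ e ∈ N, e = s(p, q) ∨ e = s(σ p, σ q))
    (hNR : ∀ e ∈ N, ∀ w ∈ e, w ≠ v ∧ w ≠ σ v) {C : (V → Fin 3 → ℝ) → Prop} (hC : Generic C)
    (hC0 : ∃ P, Sym σ H P ∧ C P)
    (step : ∀ P, Sym σ H P → C P → ∃ x, ∀ P', Sym σ H P' →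
      (∀ w, w ≠ v → w ≠ σ v → P' w = P w) → P' v = x → P' (σ v) = turn x →
      ∀ m ∈ Mot W E P', P' p ⬝ᵥ m q + P' q ⬝ᵥ m p = 0 ∧
        ((∀ w, w ≠ v → w ≠ σ v → m w = 0) → m v = 0)) : Rig σ H W E := by
  refine hR.extend ?_ hC hC0 fun P hP hCP => ?_
  · intro e he w hw hwR
    rcases mem_union.1 he with he | he
    · exact (mem_rem.1 he).2 w hw hwR
    · have := hNR e he w hw
      simp [this] at hwR
  obtain ⟨x, hx⟩ := step P hP hCP
  obtain ⟨P', hP', h1, h2, h3⟩ := hP.update_free ha hv x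
  have h4 := hx P' hP' h1 h2 h3
  refine ⟨P', hP', fun w hw => ?_, fun m hm => ⟨fun i j hij => ?_, fun h0 => ?_⟩⟩
  · simp only [mem_insert, mem_singleton, not_or] at hw
    exact h1 w hw.1 hw.2
  · rcases mem_union.1 hij with hij | hij
    · exact (mem_Mot.1 hm).2.2 i j (rem_sub hij)
    · rcases hN _ hij with hh | hh
      · rw [Sym2.eq_iff] at hh
        rcases hh with ⟨rfl, rfl⟩ | ⟨rfl, rfl⟩
        · exact (h4 m hm).1
        · rw [add_comm]; exact (h4 m hm).1
      · have h5 := mirror_edge ha hP' hg.inv hg.ss.inv (fun q hq => (h4 q hq).1) hm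
        rw [Sym2.eq_iff] at hh
        rcases hh with ⟨rfl, rfl⟩ | ⟨rfl, rfl⟩
        · exact h5
        · rw [add_comm]; exact h5
  · have h0' : ∀ w, w ≠ v → w ≠ σ v → m w = 0 := fun w hw hw' => h0 w (by simp [hw, hw'])
    have h5 := (h4 m hm).2 h0'
    have h6 := (h4 _ (mir_mem ha hP' hg.inv hg.ss.inv hm)).2 (fun w hw hw' => by
      have : m (σ w) = 0 := h0' _ (fun hh => hw' (by rw [← hh, ha.invol]))
        (fun hh => hw (by rw [← ha.invol w, hh, ha.invol]))
      ext k; fin_cases k <;> simp [mir, this, turn])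
    funext w
    by_cases hw : w = v
    · rw [hw]; exact h5
    by_cases hw' : w = σ v
    · rw [hw']
      have h7 : turn (m (σ v)) = 0 := by simpa [mir, sgn, hv] using h6
      rw [← turn_turn (m (σ v)), h7]
      ext k; fin_cases k <;> simp [turn]
    · exact h0' w hw hw'

/-- A vertex `x` on the equator is put back at a suitable equatorial position. -/
theorem Rig.extend_line (ha : Act σ H) (hg : Good σ W E) {x : V} (hx : x ∈ H) {p q : V}
    {N : Finset (Sym2 V)} (hR : Rig σ H (W \ {x}) (rem E {x} ∪ N))
    (hN : ∀ e ∈ N, e = s(p, q) ∨ e = s(σ p, σ q))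
    (hNR : ∀ e ∈ N, ∀ w ∈ e, w ≠ x) {C : (V → Fin 3 → ℝ) → Prop} (hC : Generic C)
    (hC0 : ∃ P, Sym σ H P ∧ C P)
    (step : ∀ P, Sym σ H P → C P → ∃ y : Fin 3 → ℝ, y 2 = 0 ∧ ∀ P', Sym σ H P' →
      (∀ w, w ≠ x → P' w = P w) → P' x = y →
      ∀ m ∈ Mot W E P', P' p ⬝ᵥ m q + P' q ⬝ᵥ m p = 0 ∧
        ((∀ w, w ≠ x → m w = 0) → m x = 0)) : Rig σ H W E := by
  refine hR.extend ?_ hC hC0 fun P hP hCP => ?_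
  · intro e he w hw hwR
    rcases mem_union.1 he with he | he
    · exact (mem_rem.1 he).2 w hw hwR
    · exact hNR e he w hw (mem_singleton.1 hwR)
  obtain ⟨y, hy, hs⟩ := step P hP hCP
  obtain ⟨P', hP', h1, h2⟩ := hP.update_line ha hx hy
  have h4 := hs P' hP' h1 h2
  refine ⟨P', hP', fun w hw => ?_, fun m hm => ⟨fun i j hij => ?_, fun h0 => ?_⟩⟩
  · exact h1 w (by simpa using hw)
  · rcases mem_union.1 hij with hij | hij
    · exact (mem_Mot.1 hm).2.2 i j (rem_sub hij)
    · rcases hN _ hij with hh | hh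
      · rw [Sym2.eq_iff] at hh
        rcases hh with ⟨rfl, rfl⟩ | ⟨rfl, rfl⟩
        · exact (h4 m hm).1
        · rw [add_comm]; exact (h4 m hm).1
      · have h5 := mirror_edge ha hP' hg.inv hg.ss.inv (fun q hq => (h4 q hq).1) hm
        rw [Sym2.eq_iff] at hh
        rcases hh with ⟨rfl, rfl⟩ | ⟨rfl, rfl⟩
        · exact h5
        · rw [add_comm]; exact h5
  · have h0' : ∀ w, w ≠ x → m w = 0 := fun w hw => h0 w (by simpa using hw)
    funext w
    by_cases hw : w = x
    · rw [hw]; exact (h4 m hm).2 h0'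
    · exact h0' w hw

/-- The induction hypothesis of the rigidity proof. -/
def IH (σ : V → V) (H : Set V) (W : Finset V) : Prop :=
  ∀ W' E', #W' < #W → Good σ W' E' → Rig σ H W' E'

/-- The fixed edge avoids the orbit of a free vertex that is not joined to its image. -/
theorem Good.fix_rem_pair (ha : Act σ H) (hg : Good σ W E) {v : V} (hv : v ∉ H)
    (hn : σ v ∉ nb E v) : ∃ f ∈ rem E {v, σ v}, f.map σ = f := by
  obtain ⟨f, hf, hff⟩ := hg.fix
  refine ⟨f, mem_rem.2 ⟨hf, fun w hw hwR => hn ?_⟩, hff⟩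
  have hfree := ha.free v hv
  have hinv := ha.invol
  induction f using Sym2.ind with
  | _ a b =>
    rw [mem_nb]
    have h1 := stable_of_fix hff
    unfold StablePair at h1
    have h2 : s(b, a) ∈ E := by rwa [Sym2.eq_swap]
    rw [Sym2.mem_iff] at hw
    rw [mem_insert, mem_singleton] at hwR
    grind

theorem Good.nofix_rem_pair (ha : Act σ H) (hg : Good σ W E) {v : V} (hn : σ v ∈ nb E v) :
    ∀ e ∈ rem E {v, σ v}, e.map σ ≠ e := by
  intro e he hfix
  have h1 : (s(v, σ v)).map σ = s(v, σ v) := fix_of_stable ha.invol (Or.inr rfl)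
  have h2 := hg.ss.fix_le e (rem_sub he) _ (mem_nb.1 hn) hfix h1
  exact (mem_rem.1 he).2 v (by simp [h2]) (by simp)

/-- Removing a two-valent free vertex together with its image. -/
theorem Good.move_one (ha : Act σ H) (hg : Good σ W E) (ih : IH σ H W) {v x y : V} (hvW : v ∈ W)
    (hv : v ∉ H) (hnb : nb E v = {x, y}) (hxy : x ≠ y) (hn : σ v ∉ nb E v) : Rig σ H W E := by
  have hx : x ∈ nb E v := by simp [hnb]
  have hy : y ∈ nb E v := by simp [hnb]
  have hfree := ha.free v hv
  have hc := hg.ss.card_rem_pair hfree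
  rw [if_neg hn, hnb, card_pair hxy] at hc
  have hG := hg.remove_zero (hg.pair_sub hvW) (hg.pair_inv v)
    (by rw [card_pair hfree.symm]; omega) (hg.fix_rem_pair ha hv hn)
  have hR := ih _ _ (card_sdiff_lt (hg.pair_sub hvW) (v := v) (by simp)) hG
  have hxv := hg.nb_ne hx
  have hyv := hg.nb_ne hy
  have hxs : x ≠ σ v := fun hh => hn (hh ▸ hx)
  have hys : y ≠ σ v := fun hh => hn (hh ▸ hy)
  refine Rig.extend_free ha hg hv (p := v) (q := x) (N := ∅) (by simpa using hR) (by simp)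
    (by simp) (generic_Ind v x y) (exists_Ind ha hxv.symm hxy hyv.symm (fun h => hv h.1)) ?_
  intro P hP hC
  refine ⟨P v, fun P' hP' h1 h2 h3 m hm => ⟨Mot.edge hm hx, fun h0 => ?_⟩⟩
  refine hC _ ?_ ?_ ?_
  · rw [← h2]; exact Mot.tan hm v
  · rw [← h1 x hxv hxs]; exact Mot.edge_zero hm hx (h0 x hxv hxs)
  · rw [← h1 y hyv hys]; exact Mot.edge_zero hm hy (h0 y hyv hys)

/-- Removing a two-valent vertex on the equator. -/
theorem Good.move_two (ha : Act σ H) (hg : Good σ W E) (ih : IH σ H W) {x u : V} (hxW : x ∈ W)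
    (hx : x ∈ H) (hu : u ∉ H) (hnb : nb E x = {u, σ u}) : Rig σ H W E := by
  have hux : u ∈ nb E x := by simp [hnb]
  have hsx : σ u ∈ nb E x := by simp [hnb]
  have hfree := ha.free u hu
  have hc := card_rem_single (E := E) x
  rw [hnb, card_pair hfree.symm] at hc
  have hsub : {x} ⊆ W := by simpa using hxW
  have hG := hg.remove_zero hsub (by simp [ha.fix x hx]) (by rw [card_singleton]; omega) (by
    obtain ⟨f, hf, hff⟩ := hg.fix
    refine ⟨f, mem_rem.2 ⟨hf, fun w hw hwR => ?_⟩, hff⟩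
    rw [mem_singleton] at hwR
    subst hwR
    obtain ⟨b, rfl⟩ := hw
    have h1 : b ∈ nb E w := mem_nb.2 hf
    have h2 := stable_of_fix hff
    have h3 := ha.fix w hx
    have h4 : b ∉ H := by
      rw [hnb, mem_insert, mem_singleton] at h1
      rcases h1 with rfl | rfl
      · exact hu
      · rwa [ha.mem_iff]
    have h5 := hg.nb_ne h1
    rcases h2 with h2 | h2
    · exact ha.free b h4 h2.2
    · exact h5 (by rw [← h2, h3]))
  have hR := ih _ _ (card_sdiff_lt hsub (v := x) (by simp)) hG
  have h1 := hg.nb_ne hux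
  have h2 := hg.nb_ne hsx
  refine Rig.extend_line ha hg hx (p := x) (q := u) (N := ∅) (by simpa using hR) (by simp)
    (by simp) (generic_Ind x u (σ u)) (exists_Ind ha h1.symm hfree.symm h2.symm
      (fun h => hu h.2.1)) ?_
  intro P hP hC
  refine ⟨P x, hP.2 x hx, fun P' hP' h3 h4 m hm => ⟨Mot.edge hm hux, fun h0 => ?_⟩⟩
  refine hC _ ?_ ?_ ?_
  · rw [← h4]; exact Mot.tan hm x
  · rw [← h3 u h1]; exact Mot.edge_zero hm hux (h0 u h1)
  · rw [← h3 _ h2]; exact Mot.edge_zero hm hsx (h0 _ h2)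

/-- Removing a three-valent vertex on the equator that lies on the fixed edge. -/
theorem Good.move_three (ha : Act σ H) (hg : Good σ W E) (ih : IH σ H W) {x y u : V}
    (hxW : x ∈ W) (hx : x ∈ H) (hy : y ∈ H) (hu : u ∉ H) (hnb : nb E x = {u, σ u, y}) :
    Rig σ H W E := by
  have hux : u ∈ nb E x := by simp [hnb]
  have hsx : σ u ∈ nb E x := by simp [hnb]
  have hyx : y ∈ nb E x := by simp [hnb]
  have hfree := ha.free u hu
  have hsu : σ u ∉ H := by rwa [ha.mem_iff]
  have huy : u ≠ y := fun hh => hu (hh ▸ hy)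
  have hsy : σ u ≠ y := fun hh => hsu (hh ▸ hy)
  have hc := card_rem_single (E := E) x
  rw [hnb, card_eq_three.2 ⟨u, σ u, y, hfree.symm, huy, hsy, rfl⟩] at hc
  have hsub : {x} ⊆ W := by simpa using hxW
  have h1 := hg.nb_ne hux
  have h2 := hg.nb_ne hsx
  have h3 := hg.nb_ne hyx
  have hG := hg.remove_one hsub (by simp [ha.fix x hx]) (p := u) (q := σ u)
    (by simp [hg.nb_mem hux, h1]) (by simp [hg.nb_mem hsx, h2]) hfree.symm (Or.inr rfl)
    (by rw [card_singleton]; omega) (by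
      intro e he hfix
      have h1 : (s(x, y)).map σ = s(x, y) :=
        fix_of_stable ha.invol (Or.inl ⟨ha.fix x hx, ha.fix y hy⟩)
      have h2 := hg.ss.fix_le e (rem_sub he) _ (mem_nb.1 hyx) hfix h1
      exact (mem_rem.1 he).2 x (by simp [h2]) (by simp))
  have hR := ih _ _ (card_sdiff_lt hsub (v := x) (by simp)) hG
  refine Rig.extend_line ha hg hx (p := u) (q := σ u) hR (by simp)
    (by
      intro e he w hw
      rw [mem_singleton] at he
      subst he
      rcases Sym2.mem_iff.1 hw with rfl | rfl <;> assumption)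
    (generic_Ind u (σ u) y) (exists_Ind ha hfree.symm hsy huy (fun h => hu h.1)) ?_
  intro P hP hC
  -- the plane of `u` and `σ u` meets the equator in `P u - P (σ u)`; there the new edge is implied
  refine ⟨P u - P (σ u), by simp [hP.1 u hu, turn], fun P' hP' h4 h5 m hm => ⟨?_, fun h0 => ?_⟩⟩
  · refine edge_of_dep (a := 1) (b := -1) (c := 1) (by norm_num) (by norm_num) ?_
      (Mot.tan hm x) (Mot.tan hm u) (Mot.tan hm (σ u)) (Mot.edge hm hux) (Mot.edge hm hsx)
    rw [h5, h4 _ h1, h4 _ h2]; module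
  · refine hC _ ?_ ?_ ?_
    · rw [← h4 u h1]; exact Mot.edge_zero hm hux (h0 u h1)
    · rw [← h4 _ h2]; exact Mot.edge_zero hm hsx (h0 _ h2)
    · rw [← h4 y h3]; exact Mot.edge_zero hm hyx (h0 y h3)

end

section
open scoped Classical
open Finset

/-! ### Four-valent vertices on the equator -/

variable [Fintype V] {σ : V → V} {H : Set V} {W : Finset V} {E : Finset (Sym2 V)}

/-- A set containing many neighbours of a deleted vertex has positive defect. -/
theorem SymSparse.count_star (h : SymSparse σ E) {R X A : Finset V} {v : V} (hv : v ∈ R)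
    (hA : A ⊆ nb E v) (hAX : A ⊆ X) (hA2 : 1 < #A) :
    (#A : ℤ) - 2 ≤ defect (RigidityPaper.rem E R) X := by
  have h1 := h.count (R := R) (X := X) (Z := {v}) (S := A.image fun w => s(v, w)) (by
      intro e he
      obtain ⟨w, hw, rfl⟩ := Finset.mem_image.1 he
      exact mem_nb.1 (hA hw)) (by
      intro e he
      obtain ⟨w, hw, rfl⟩ := Finset.mem_image.1 he
      exact fun hh => (mem_rem.1 hh).2 v (by simp) hv) (by
      intro e he
      obtain ⟨w, hw, rfl⟩ := Finset.mem_image.1 he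
      intro y hy
      rcases Sym2.mem_iff.1 hy with rfl | rfl
      · simp
      · exact mem_union_left _ (hAX hw)) (by
      obtain ⟨p, hp, q, hq, hpq⟩ := one_lt_card.1 hA2
      exact ⟨p, hAX hp, q, hAX hq, hpq⟩)
  rw [card_image_of_injective _ (fun a b hab => Sym2.congr_right.1 hab), card_singleton] at h1
  simpa using h1

/-- The same count for the neighbours of two deleted vertices. -/
theorem SymSparse.count_star_two (h : SymSparse σ E) {R X A B : Finset V} {v w : V} (hv : v ∈ R)
    (hw : w ∈ R) (hvw : v ≠ w) (hn : w ∉ nb E v)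
    (hA : A ⊆ nb E v) (hAX : A ⊆ X) (hA2 : 1 < #A) (hB : B ⊆ nb E w) (hBX : B ⊆ X) :
    (#A : ℤ) + #B - 4 ≤ defect (RigidityPaper.rem E R) X := by
  have hmem : ∀ e ∈ (A.image fun z => s(v, z)) ∪ (B.image fun z => s(w, z)),
      (∃ z ∈ A, e = s(v, z)) ∨ ∃ z ∈ B, e = s(w, z) := by
    intro e he
    rcases mem_union.1 he with he | he
    · obtain ⟨z, hz, rfl⟩ := Finset.mem_image.1 he; exact Or.inl ⟨z, hz, rfl⟩
    · obtain ⟨z, hz, rfl⟩ := Finset.mem_image.1 he; exact Or.inr ⟨z, hz, rfl⟩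
  have h1 := h.count (R := R) (X := X) (Z := {v, w})
    (S := (A.image fun z => s(v, z)) ∪ (B.image fun z => s(w, z))) (by
      intro e he
      rcases hmem e he with ⟨z, hz, rfl⟩ | ⟨z, hz, rfl⟩
      · exact mem_nb.1 (hA hz)
      · exact mem_nb.1 (hB hz)) (by
      intro e he hh
      rcases hmem e he with ⟨z, hz, rfl⟩ | ⟨z, hz, rfl⟩
      · exact (mem_rem.1 hh).2 v (by simp) hv
      · exact (mem_rem.1 hh).2 w (by simp) hw) (by
      intro e he y hy
      rcases hmem e he with ⟨z, hz, rfl⟩ | ⟨z, hz, rfl⟩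
      · rcases Sym2.mem_iff.1 hy with rfl | rfl
        · simp
        · exact mem_union_left _ (hAX hz)
      · rcases Sym2.mem_iff.1 hy with rfl | rfl
        · simp
        · exact mem_union_left _ (hBX hz)) (by
      obtain ⟨p, hp, q, hq, hpq⟩ := one_lt_card.1 hA2
      exact ⟨p, hAX hp, q, hAX hq, hpq⟩)
  rw [card_union_of_disjoint, card_image_of_injective _ (fun a b hab => Sym2.congr_right.1 hab),
    card_image_of_injective _ (fun a b hab => Sym2.congr_right.1 hab), card_pair hvw] at h1
  · push_cast at h1; linarith
  · rw [Finset.disjoint_left]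
    intro e he he'
    obtain ⟨z, hz, rfl⟩ := Finset.mem_image.1 he
    obtain ⟨z', hz', hh⟩ := Finset.mem_image.1 he'
    rw [Sym2.eq_iff] at hh
    rcases hh with ⟨hh, -⟩ | ⟨hh, -⟩
    · exact hvw hh.symm
    · exact hn (hh ▸ hA hz)

/-- The fixed edge avoids an equatorial vertex that has only free neighbours. -/
theorem Good.fix_rem_line (ha : Act σ H) (hg : Good σ W E) {x : V} (hx : x ∈ H)
    (hn : ∀ b ∈ nb E x, b ∉ H) : ∃ f ∈ rem E {x}, f.map σ = f := by
  obtain ⟨f, hf, hff⟩ := hg.fix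
  refine ⟨f, mem_rem.2 ⟨hf, fun w hw hwR => ?_⟩, hff⟩
  rw [mem_singleton] at hwR
  subst hwR
  obtain ⟨b, rfl⟩ := hw
  have h1 : b ∈ nb E w := mem_nb.2 hf
  rcases stable_of_fix hff with h2 | h2
  · exact ha.free b (hn b h1) h2.2
  · exact hg.nb_ne h1 (by rw [← h2, ha.fix w hx])

/-- Removing a four-valent vertex on the equator, when `u` and `w` lie in no common tight set. -/
theorem Good.move_four_aux (ha : Act σ H) (hg : Good σ W E) (ih : IH σ H W) {x u w : V}
    (hxW : x ∈ W) (hx : x ∈ H) (hu : u ∉ H) (hw : w ∉ H) (hwu : w ≠ u) (hwu' : w ≠ σ u)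
    (hnb : nb E x = {u, σ u, w, σ w}) (ht : ¬ InTight (rem E {x}) w u) : Rig σ H W E := by
  have hux : u ∈ nb E x := by simp [hnb]
  have hsx : σ u ∈ nb E x := by simp [hnb]
  have hwx : w ∈ nb E x := by simp [hnb]
  have hfu := ha.free u hu
  have hfw := ha.free w hw
  have hinv := ha.invol
  have hsw1 : σ w ≠ u := fun hh => hwu' (by rw [← hh, hinv])
  have hsw2 : σ w ≠ σ u := fun hh => hwu (by rw [← hinv w, hh, hinv])
  have hcard : #({u, σ u, w, σ w} : Finset V) = 4 := by
    rw [card_insert_of_notMem, card_eq_three.2 ⟨σ u, w, σ w, hwu'.symm, hsw2.symm, hfw.symm, rfl⟩]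
    simp [hfu.symm, hwu.symm, hsw1.symm]
  have hc := card_rem_single (E := E) x
  rw [hnb, hcard] at hc
  have hsub : {x} ⊆ W := by simpa using hxW
  have h1 := hg.nb_ne hux
  have h2 := hg.nb_ne hsx
  have h3 := hg.nb_ne hwx
  have h4 : σ w ≠ x := hg.nb_ne (v := x) (by simp [hnb])
  have hst : ¬ StablePair σ u w := by
    rintro (hh | hh)
    · exact hfu hh.1
    · exact hwu' hh.symm
  have hG := hg.remove_two hsub (by simp [ha.fix x hx]) (p := u) (q := w)
    (by simp [hg.nb_mem hux, h1]) (by simp [hg.nb_mem hwx, h3]) hwu.symm hst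
    (by rw [card_singleton]; omega) (hg.fix_rem_line ha hx (by
      intro b hb
      rw [hnb] at hb
      simp only [mem_insert, mem_singleton] at hb
      rcases hb with rfl | rfl | rfl | rfl
      · exact hu
      · rwa [ha.mem_iff]
      · exact hw
      · rwa [ha.mem_iff])) (by
      rintro (hh | ⟨X, a1, a2, a3, a4, a5⟩)
      · exact ht hh.symm
      · have := hg.ss.count_star (R := {x}) (X := X) (A := nb E x) (v := x) (by simp) subset_rfl
          (by rw [hnb]; intro y hy; simp only [mem_insert, mem_singleton] at hy
              rcases hy with rfl | rfl | rfl | rfl <;> assumption)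
          (by rw [hnb, hcard]; norm_num)
        rw [hnb, hcard] at this
        push_cast at this
        omega)
  have hR := ih _ _ (card_sdiff_lt hsub (v := x) (by simp)) hG
  refine Rig.extend_line ha hg hx (p := u) (q := w) hR (by simp)
    (by
      intro e he y hy
      rw [mem_insert, mem_singleton] at he
      rcases he with rfl | rfl
      · rcases Sym2.mem_iff.1 hy with rfl | rfl <;> assumption
      · rcases Sym2.mem_iff.1 hy with rfl | rfl <;> assumption)
    (C := fun P => (P u 2 ≠ 0 ∧ P w 2 ≠ 0) ∧ Ind P u w (σ u))
    (((generic_coord u 2).and (generic_coord w 2)).and (generic_Ind u w (σ u))) ?_ ?_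
  · obtain ⟨P, hP, c1, c2⟩ := (generic_coord u 2).exists_both (generic_coord w 2)
      (exists_coord_two ha hu) (exists_coord_two ha hw)
    exact ((generic_coord u 2).and (generic_coord w 2)).exists_both (generic_Ind u w (σ u))
      ⟨P, hP, c1, c2⟩ (exists_Ind ha hwu.symm hwu' hfu.symm (fun h => hu h.1))
  intro P hP hC
  obtain ⟨⟨c1, c2⟩, c3⟩ := hC
  -- the plane of `u` and `w` meets the equator in this vector; there the edge `uw` is implied
  refine ⟨P w 2 • P u - P u 2 • P w, by simp; ring, fun P' hP' h5 h6 m hm => ⟨?_, fun h0 => ?_⟩⟩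
  · refine edge_of_dep (a := 1) (b := -P w 2) (c := P u 2) (by simpa using c2) c1 ?_
      (Mot.tan hm x) (Mot.tan hm u) (Mot.tan hm w) (Mot.edge hm hux) (Mot.edge hm hwx)
    rw [h6, h5 _ h1, h5 _ h3]; module
  · refine c3 _ ?_ ?_ ?_
    · rw [← h5 u h1]; exact Mot.edge_zero hm hux (h0 u h1)
    · rw [← h5 w h3]; exact Mot.edge_zero hm hwx (h0 w h3)
    · rw [← h5 _ h2]; exact Mot.edge_zero hm hsx (h0 _ h2)

/-- Removing a four-valent vertex on the equator. -/
theorem Good.move_four (ha : Act σ H) (hg : Good σ W E) (ih : IH σ H W) {x u w : V}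
    (hxW : x ∈ W) (hx : x ∈ H) (hu : u ∉ H) (hw : w ∉ H) (hwu : w ≠ u) (hwu' : w ≠ σ u)
    (hnb : nb E x = {u, σ u, w, σ w}) : Rig σ H W E := by
  have hinv := ha.invol
  have hfw := ha.free w hw
  have hfu := ha.free u hu
  have hsw1 : σ w ≠ u := fun hh => hwu' (by rw [← hh, hinv])
  have hsw2 : σ w ≠ σ u := fun hh => hwu (by rw [← hinv w, hh, hinv])
  by_cases ht : InTight (rem E {x}) w u
  · refine hg.move_four_aux ha ih hxW hx hu (w := σ w) (by rwa [ha.mem_iff]) hsw1 hsw2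
      (by rw [hnb, hinv]; ext; simp only [mem_insert, mem_singleton]; tauto) fun ht' => ?_
    refine (hg.ss.rem (R := {x}) (by simp [ha.fix x hx])).not_both_tight hfw.symm (Or.inr rfl)
      (fun X b1 b2 b3 => ?_) (fun X b1 b2 b3 b4 => ?_) ht ht'
    · have := hg.ss.count_star (R := {x}) (X := X) (A := {w, σ w, u}) (v := x) (by simp)
        (by rw [hnb]; intro y; simp only [mem_insert, mem_singleton]; tauto)
        (by intro y; simp only [mem_insert, mem_singleton]; rintro (rfl | rfl | rfl) <;> assumption)
        (by rw [card_eq_three.2 ⟨_, _, _, hfw.symm, hwu, hsw1, rfl⟩]; norm_num)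
      rw [card_eq_three.2 ⟨_, _, _, hfw.symm, hwu, hsw1, rfl⟩] at this
      simpa using this
    · have hcard : #({u, σ u, w, σ w} : Finset V) = 4 := by
        rw [card_insert_of_notMem,
          card_eq_three.2 ⟨σ u, w, σ w, hwu'.symm, hsw2.symm, hfw.symm, rfl⟩]
        simp [hfu.symm, hwu.symm, hsw1.symm]
      have := hg.ss.count_star (R := {x}) (X := X) (A := nb E x) (v := x) (by simp) subset_rfl
        (by rw [hnb]; intro y hy; simp only [mem_insert, mem_singleton] at hy
            rcases hy with rfl | rfl | rfl | rfl <;> assumption)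
        (by rw [hnb, hcard]; norm_num)
      rw [hnb, hcard] at this
      push_cast at this
      omega
  · exact hg.move_four_aux ha ih hxW hx hu hw hwu hwu' hnb ht

end

section
open scoped Classical
open Finset

/-! ### Three-valent free vertices -/

variable [Fintype V] {σ : V → V} {H : Set V} {W : Finset V} {E : Finset (Sym2 V)}

/-- Removing a three-valent free vertex and its image, when `p` and `q` may be joined. -/
theorem Good.move_six_aux (ha : Act σ H) (hg : Good σ W E) (ih : IH σ H W) {v p q r : V}
    (hvW : v ∈ W) (hv : v ∉ H) (hnb : nb E v = {p, q, r}) (hpq : p ≠ q) (hqr : q ≠ r)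
    (hpr : p ≠ r) (hn : σ v ∉ nb E v) (hH : ¬ (p ∈ H ∧ q ∈ H ∧ r ∈ H))
    (hst : ¬ StablePair σ p q) (hb : ¬ Blocked σ (rem E {v, σ v}) p q) : Rig σ H W E := by
  have hp : p ∈ nb E v := by simp [hnb]
  have hq : q ∈ nb E v := by simp [hnb]
  have hr : r ∈ nb E v := by simp [hnb]
  have hinv := ha.invol
  have hfree := ha.free v hv
  have hc := hg.ss.card_rem_pair hfree
  rw [if_neg hn, hnb, card_eq_three.2 ⟨p, q, r, hpq, hpr, hqr, rfl⟩] at hc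
  have ne : ∀ {w}, w ∈ nb E v → w ≠ v ∧ w ≠ σ v := fun hw =>
    ⟨hg.nb_ne hw, fun hh => hn (hh ▸ hw)⟩
  have ne' : ∀ {w}, w ∈ nb E v → σ w ≠ v ∧ σ w ≠ σ v := fun {w} hw =>
    ⟨fun hh => (ne hw).2 (by rw [← hh, hinv]), fun hh => (ne hw).1 (by rw [← hinv w, hh, hinv])⟩
  have hG := hg.remove_two (hg.pair_sub hvW) (hg.pair_inv v) (p := p) (q := q)
    (by simp [hg.nb_mem hp, ne hp]) (by simp [hg.nb_mem hq, ne hq]) hpq hst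
    (by rw [card_pair hfree.symm]; omega) (hg.fix_rem_pair ha hv hn) hb
  have hR := ih _ _ (card_sdiff_lt (hg.pair_sub hvW) (v := v) (by simp)) hG
  refine Rig.extend_free ha hg hv (p := p) (q := q) hR (by simp) (by
      intro e he y hy
      rw [mem_insert, mem_singleton] at he
      rcases he with rfl | rfl
      · rcases Sym2.mem_iff.1 hy with rfl | rfl
        · exact ne hp
        · exact ne hq
      · rcases Sym2.mem_iff.1 hy with rfl | rfl
        · exact ne' hp
        · exact ne' hq) (generic_Ind p q r) (exists_Ind ha hpq hqr hpr hH) ?_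
  intro P hP hC
  -- with `v` in the plane of `p` and `q`, the edge `pq` is implied by `vp` and `vq`
  refine ⟨P p + P q, fun P' hP' h1 h2 h3 m hm => ⟨?_, fun h0 => ?_⟩⟩
  · refine edge_of_dep (a := 1) (b := -1) (c := -1) (by norm_num) (by norm_num) ?_
      (Mot.tan hm v) (Mot.tan hm p) (Mot.tan hm q) (Mot.edge hm hp) (Mot.edge hm hq)
    rw [h2, h1 _ (ne hp).1 (ne hp).2, h1 _ (ne hq).1 (ne hq).2]; module
  · have key : ∀ {w}, w ∈ nb E v → P w ⬝ᵥ m v = 0 := fun {w} hw => by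
      rw [← h1 _ (ne hw).1 (ne hw).2]; exact Mot.edge_zero hm hw (h0 _ (ne hw).1 (ne hw).2)
    exact hC _ (key hp) (key hq) (key hr)

/-- Removing a three-valent free vertex that is not joined to its image, together with that
image. -/
theorem Good.move_six (ha : Act σ H) (hg : Good σ W E) (ih : IH σ H W) {v x y z : V}
    (hvW : v ∈ W) (hv : v ∉ H) (hnb : nb E v = {x, y, z}) (hxy : x ≠ y) (hyz : y ≠ z)
    (hxz : x ≠ z) (hn : σ v ∉ nb E v) (hH : ¬ (x ∈ H ∧ y ∈ H ∧ z ∈ H)) : Rig σ H W E := by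
  have hcard : #({x, y, z} : Finset V) = 3 := card_eq_three.2 ⟨x, y, z, hxy, hxz, hyz, rfl⟩
  have hT : Triad σ (rem E {v, σ v}) x y z := by
    refine ⟨hg.ss.rem (hg.pair_inv v), hxy, hyz, hxz, fun X h1 h2 h3 => ?_,
      fun X h1 h2 h3 h4 h5 h6 => ?_⟩
    · have := hg.ss.count_star (R := {v, σ v}) (X := X) (A := nb E v) (v := v) (by simp)
        subset_rfl
        (by rw [hnb]; intro w; simp only [mem_insert, mem_singleton]
            rintro (rfl | rfl | rfl) <;> assumption) (by rw [hnb, hcard]; norm_num)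
      rw [hnb, hcard] at this
      simpa using this
    · have := hg.ss.count_star_two (R := {v, σ v}) (X := X) (A := nb E v) (v := v) (w := σ v)
        (B := nb E (σ v)) (by simp) (by simp) (ha.free v hv).symm hn subset_rfl
        (by rw [hnb]; intro w; simp only [mem_insert, mem_singleton]
            rintro (rfl | rfl | rfl) <;> assumption) (by rw [hnb, hcard]; norm_num) subset_rfl
        (by rw [hg.ss.nb_image, hnb]; intro w
            simp only [Finset.mem_image, mem_insert, mem_singleton]
            rintro ⟨w, (rfl | rfl | rfl), rfl⟩ <;> assumption)
      rw [hg.ss.card_nb_map, hnb, hcard] at this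
      push_cast at this
      linarith
  rcases hT.exists_unblocked (fun hh => hH
      ⟨ha.fix_iff.1 hh.1, ha.fix_iff.1 hh.2.1, ha.fix_iff.1 hh.2.2⟩) with
    ⟨h1, h2⟩ | ⟨h1, h2⟩ | ⟨h1, h2⟩
  · exact hg.move_six_aux ha ih hvW hv hnb hxy hyz hxz hn hH h1 h2
  · refine hg.move_six_aux ha ih hvW hv (p := y) (q := z) (r := x) ?_ hyz hxz.symm hxy.symm hn
      (by tauto) h1 h2
    rw [hnb]; ext; simp only [mem_insert, mem_singleton]; tauto
  · refine hg.move_six_aux ha ih hvW hv (p := x) (q := z) (r := y) ?_ hxz hyz.symm hxy hn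
      (by tauto) h1 h2
    rw [hnb]; ext; simp only [mem_insert, mem_singleton]; tauto

/-- Removing a three-valent free vertex joined to its image: the new edge `pq` is `σ`-stable. -/
theorem Good.move_five_aux (ha : Act σ H) (hg : Good σ W E) (ih : IH σ H W) {v u w p q : V}
    (hvW : v ∈ W) (hv : v ∉ H) (hnb : nb E v = {σ v, u, w}) (hu : u ≠ σ v) (hw : w ≠ σ v)
    (huw : u ≠ w) (hp : p ∈ W \ {v, σ v}) (hq : q ∈ W \ {v, σ v}) (hpq : p ≠ q)
    (hst : StablePair σ p q) {C : (V → Fin 3 → ℝ) → Prop} (hC : Generic C)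
    (hC0 : ∃ P, Sym σ H P ∧ C P)
    (step : ∀ P, Sym σ H P → C P → ∃ x, ∀ P', Sym σ H P' →
      (∀ w, w ≠ v → w ≠ σ v → P' w = P w) → P' v = x → P' (σ v) = turn x →
      ∀ m ∈ Mot W E P', P' p ⬝ᵥ m q + P' q ⬝ᵥ m p = 0 ∧
        ((∀ w, w ≠ v → w ≠ σ v → m w = 0) → m v = 0)) : Rig σ H W E := by
  have hfree := ha.free v hv
  have hn : σ v ∈ nb E v := by simp [hnb]
  have hc := hg.ss.card_rem_pair hfree
  rw [if_pos hn, hnb, card_eq_three.2 ⟨σ v, u, w, hu.symm, hw.symm, huw, rfl⟩] at hc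
  have hG := hg.remove_one (hg.pair_sub hvW) (hg.pair_inv v) hp hq hpq hst
    (by rw [card_pair hfree.symm]; omega) (hg.nofix_rem_pair ha hn)
  have hR := ih _ _ (card_sdiff_lt (hg.pair_sub hvW) (v := v) (by simp)) hG
  refine Rig.extend_free ha hg hv (p := p) (q := q) hR (by simp) ?_ hC hC0 step
  intro e he y hy
  rw [mem_singleton] at he
  subst he
  rcases Sym2.mem_iff.1 hy with rfl | rfl
  · simpa using (mem_sdiff.1 hp).2
  · simpa using (mem_sdiff.1 hq).2

/-- The case that both other neighbours of a vertex joined to its image lie on the equator. -/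
theorem Good.move_five_lines (ha : Act σ H) (hg : Good σ W E) (ih : IH σ H W) {v u w : V}
    (hvW : v ∈ W) (hv : v ∉ H) (hnb : nb E v = {σ v, u, w}) (huw : u ≠ w) (hu : u ∈ H)
    (hw : w ∈ H) : Rig σ H W E := by
  have hsv : σ v ∉ H := by rwa [ha.mem_iff]
  have hu1 : u ≠ v := fun hh => hv (hh ▸ hu)
  have hu2 : u ≠ σ v := fun hh => hsv (hh ▸ hu)
  have hw1 : w ≠ v := fun hh => hv (hh ▸ hw)
  have hw2 : w ≠ σ v := fun hh => hsv (hh ▸ hw)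
  have hun : u ∈ nb E v := by simp [hnb]
  have hwn : w ∈ nb E v := by simp [hnb]
  have hvn : σ v ∈ nb E v := by simp [hnb]
  have hun' : u ∈ nb E (σ v) := by rw [← ha.fix u hu, hg.ss.nb_map]; exact hun
  have hwn' : w ∈ nb E (σ v) := by rw [← ha.fix w hw, hg.ss.nb_map]; exact hwn
  refine hg.move_five_aux ha ih hvW hv hnb hu2 hw2 huw (p := u) (q := w)
    (by simp [hg.nb_mem hun, hu1, hu2]) (by simp [hg.nb_mem hwn, hw1, hw2]) huw
    (Or.inl ⟨ha.fix u hu, ha.fix w hw⟩) (generic_Ind_axis u w) (exists_Ind_axis ha huw hu) ?_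
  intro P hP hC
  -- then `P v - P (σ v) = 2 P u + 2 P w`, and five of the edges on `v, σ v, u, w` imply `uw`
  refine ⟨P u + P w + ![0, 0, 1], fun P' hP' h1 h2 h3 m hm => ⟨?_, fun h0 => ?_⟩⟩
  · refine edge_of_dep_four (a := 1) (b := -1) (c := -2) (d := -2) (by norm_num) (by norm_num) ?_
      (Mot.tan hm v) (Mot.tan hm (σ v)) (Mot.tan hm u) (Mot.tan hm w) (Mot.edge hm hvn)
      (Mot.edge hm hun) (Mot.edge hm hwn) (Mot.edge hm hun') (Mot.edge hm hwn')
    rw [h2, h3, h1 _ hu1 hu2, h1 _ hw1 hw2]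
    have e1 := hP.2 u hu
    have e2 := hP.2 w hw
    ext k; simp only [Pi.add_apply, Pi.smul_apply, smul_eq_mul, Pi.zero_apply, turn]
    fin_cases k <;> simp [e1, e2] <;> ring
  · have k1 : P u ⬝ᵥ m v = 0 := by
      rw [← h1 _ hu1 hu2]; exact Mot.edge_zero hm hun (h0 _ hu1 hu2)
    have k2 : P w ⬝ᵥ m v = 0 := by
      rw [← h1 _ hw1 hw2]; exact Mot.edge_zero hm hwn (h0 _ hw1 hw2)
    refine hC _ k1 k2 ?_
    have k3 := Mot.tan hm v
    rw [h2, add_dotProduct, add_dotProduct, k1, k2] at k3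
    simpa only [zero_add] using k3

/-- The case that the other two neighbours of a vertex joined to its image are exchanged by the
symmetry. -/
theorem Good.move_five_orbit (ha : Act σ H) (hg : Good σ W E) (ih : IH σ H W) {v u : V}
    (hvW : v ∈ W) (hv : v ∉ H) (hnb : nb E v = {σ v, u, σ u}) (hu : u ∉ H) (hu2 : u ≠ σ v) :
    Rig σ H W E := by
  have hinv := ha.invol
  have hun : u ∈ nb E v := by simp [hnb]
  have hwn : σ u ∈ nb E v := by simp [hnb]
  have hvn : σ v ∈ nb E v := by simp [hnb]
  have hu1 := hg.nb_ne hun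
  have hw1 := hg.nb_ne hwn
  have hw2 : σ u ≠ σ v := fun hh => hu1 (by rw [← hinv u, hh, hinv])
  have hun' : u ∈ nb E (σ v) := by rw [← hinv u, hg.ss.nb_map]; exact hwn
  have hwn' : σ u ∈ nb E (σ v) := by rw [hg.ss.nb_map]; exact hun
  have hfu := ha.free u hu
  refine hg.move_five_aux ha ih hvW hv hnb hu2 hw2 hfu.symm (p := u) (q := σ u)
    (by simp [hg.nb_mem hun, hu1, hu2]) (by simp [hg.nb_mem hwn, hw1, hw2]) hfu.symm
    (Or.inr rfl) ((generic_coord u 2).and (generic_coord u 0))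
    ((generic_coord u 2).exists_both (generic_coord u 0) (exists_coord_two ha hu)
      (exists_coord_zero ha u)) ?_
  rintro P hP ⟨c1, c2⟩
  -- a quarter turn of `u`: then `P v + P (σ v) = P u + P (σ u)`, since both sums lie on the axis at
  -- the same height, and five edges on these four vertices imply the sixth one `u σu`
  refine ⟨![-P u 1, P u 0, P u 2], fun P' hP' h1 h2 h3 m hm => ⟨?_, fun h0 => ?_⟩⟩
  · refine edge_of_dep_four (a := 1) (b := 1) (c := -1) (d := -1) (by norm_num) (by norm_num) ?_
      (Mot.tan hm v) (Mot.tan hm (σ v)) (Mot.tan hm u) (Mot.tan hm _) (Mot.edge hm hvn)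
      (Mot.edge hm hun) (Mot.edge hm hwn) (Mot.edge hm hun') (Mot.edge hm hwn')
    rw [h2, h3, h1 _ hu1 hu2, h1 _ hw1 hw2, hP.1 u hu]
    ext k; simp only [Pi.add_apply, Pi.smul_apply, smul_eq_mul, Pi.zero_apply, turn]
    fin_cases k <;> simp
  · have k1 : P u ⬝ᵥ m v = 0 := by
      rw [← h1 _ hu1 hu2]; exact Mot.edge_zero hm hun (h0 _ hu1 hu2)
    have k2 : P (σ u) ⬝ᵥ m v = 0 := by
      rw [← h1 _ hw1 hw2]; exact Mot.edge_zero hm hwn (h0 _ hw1 hw2)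
    have k3 := Mot.tan hm v
    rw [h2] at k3
    rw [hP.1 u hu] at k2
    simp only [turn, dotProduct, Fin.sum_univ_three, Matrix.cons_val] at k1 k2 k3
    have k4 : m v 2 = 0 := (mul_eq_zero.1 (by linarith : P u 2 * m v 2 = 0)).resolve_left c1
    rw [k4] at k1 k3
    -- the positions `(x, y)` and `(-y, x)` are orthogonal and nonzero
    have k5 : P u 0 ^ 2 + P u 1 ^ 2 ≠ 0 := by positivity
    have k6 : m v 0 = 0 := by
      refine (mul_eq_zero.1 (?_ : (P u 0 ^ 2 + P u 1 ^ 2) * m v 0 = 0)).resolve_left k5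
      linear_combination P u 0 * k1 - P u 1 * k3
    have k7 : m v 1 = 0 := by
      refine (mul_eq_zero.1 (?_ : (P u 0 ^ 2 + P u 1 ^ 2) * m v 1 = 0)).resolve_left k5
      linear_combination P u 1 * k1 + P u 0 * k3
    ext k; fin_cases k <;> simp [k4, k6, k7]

/-- The case that a vertex joined to its image has a free neighbour `u` such that `σ u` is no
neighbour. -/
theorem Good.move_five_free (ha : Act σ H) (hg : Good σ W E) (ih : IH σ H W) {v u w : V}
    (hvW : v ∈ W) (hv : v ∉ H) (hnb : nb E v = {σ v, u, w}) (hu : u ∉ H) (hu2 : u ≠ σ v)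
    (hw2 : w ≠ σ v) (huw : u ≠ w) (huw' : w ≠ σ u) : Rig σ H W E := by
  have hinv := ha.invol
  have hun : u ∈ nb E v := by simp [hnb]
  have hwn : w ∈ nb E v := by simp [hnb]
  have hvn : σ v ∈ nb E v := by simp [hnb]
  have hu1 := hg.nb_ne hun
  have hw1 := hg.nb_ne hwn
  have hs1 : σ u ≠ v := fun hh => hu2 (by rw [← hh, hinv])
  have hs2 : σ u ≠ σ v := fun hh => hu1 (by rw [← hinv u, hh, hinv])
  have hfu := ha.free u hu
  refine hg.move_five_aux ha ih hvW hv hnb hu2 hw2 huw (p := u) (q := σ u)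
    (by simp [hg.nb_mem hun, hu1, hu2]) (by simp [hg.inv _ (hg.nb_mem hun), hs1, hs2]) hfu.symm
    (Or.inr rfl) (generic_Ind u (σ u) w)
    (exists_Ind ha hfu.symm huw'.symm huw (fun h => hu h.1)) ?_
  intro P hP hC
  -- `v, σ v, u, σ u` lie in one plane: the edges `v σv` and `vu` imply `σv u`, hence by symmetry
  -- `v σu`, which together with `vu` implies `u σu`
  refine ⟨P u + (2 : ℝ) • P (σ u), fun P' hP' h1 h2 h3 => ?_⟩
  have ht : turn (P u) = P (σ u) := (hP.1 u hu).symm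
  have h4 : P' (σ v) = P (σ u) + (2 : ℝ) • P u := by
    rw [h3, turn_add, turn_smul, ht, ← ht, turn_turn]
  have key : ∀ m ∈ Mot W E P', P' (σ v) ⬝ᵥ m u + P' u ⬝ᵥ m (σ v) = 0 := fun m hm => by
    refine edge_of_dep (a := 1) (b := -2) (c := 3) (by norm_num) (by norm_num) ?_
      (Mot.tan hm v) (Mot.tan hm (σ v)) (Mot.tan hm u) (Mot.edge hm hvn) (Mot.edge hm hun)
    rw [h2, h4, h1 _ hu1 hu2]; module
  refine fun m hm => ⟨?_, fun h0 => ?_⟩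
  · have k1 := mirror_edge ha hP' hg.inv hg.ss.inv key hm
    rw [hinv] at k1
    refine edge_of_dep (a := 1) (b := -1) (c := -2) (by norm_num) (by norm_num) ?_
      (Mot.tan hm v) (Mot.tan hm u) (Mot.tan hm _) (Mot.edge hm hun) k1
    rw [h2, h1 _ hu1 hu2, h1 _ hs1 hs2]; module
  · have k1 : P u ⬝ᵥ m v = 0 := by
      rw [← h1 _ hu1 hu2]; exact Mot.edge_zero hm hun (h0 _ hu1 hu2)
    have k2 : P w ⬝ᵥ m v = 0 := by
      rw [← h1 _ hw1 hw2]; exact Mot.edge_zero hm hwn (h0 _ hw1 hw2)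
    refine hC _ k1 ?_ k2
    have k3 := Mot.tan hm v
    rw [h2, add_dotProduct, k1, smul_dotProduct, smul_eq_mul] at k3
    linarith

/-- Removing a three-valent free vertex joined to its image, together with that image. -/
theorem Good.move_five (ha : Act σ H) (hg : Good σ W E) (ih : IH σ H W) {v u w : V}
    (hvW : v ∈ W) (hv : v ∉ H) (hnb : nb E v = {σ v, u, w}) (hu2 : u ≠ σ v)
    (hw2 : w ≠ σ v) (huw : u ≠ w) : Rig σ H W E := by
  by_cases hu : u ∈ H
  · by_cases hw : w ∈ H
    · exact hg.move_five_lines ha ih hvW hv hnb huw hu hw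
    · exact hg.move_five_free ha ih hvW hv (u := w) (w := u) (by rw [hnb, pair_comm]) hw hw2 hu2
        huw.symm (fun hh => hw (ha.mem_iff.1 (hh ▸ hu)))
  · by_cases hw : w = σ u
    · subst hw; exact hg.move_five_orbit ha ih hvW hv hnb hu hu2
    · exact hg.move_five_free ha ih hvW hv hnb hu hu2 hw2 huw hw

end

section
open scoped Classical
open Finset

/-! ### The induction -/

variable {σ : V → V} {H : Set V} {W : Finset V} {E : Finset (Sym2 V)}

/-- A `σ`-invariant set of free vertices is a union of two-element orbits. -/
theorem Act.orbits (ha : Act σ H) {F : Finset V} (hF : ∀ v ∈ F, v ∉ H) (hi : ∀ v ∈ F, σ v ∈ F) :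
    F = ∅ ∨ (∃ u ∈ F, F = {u, σ u}) ∨
      (∃ u ∈ F, ∃ w ∈ F, w ≠ u ∧ w ≠ σ u ∧ F = {u, σ u, w, σ w}) ∨ 6 ≤ #F := by
  have hinv := ha.invol
  have hne : ∀ v ∈ F, σ v ≠ v := fun v hv => ha.free v (hF v hv)
  by_cases h1 : F ⊆ ∅
  · exact Or.inl (subset_empty.1 h1)
  obtain ⟨u, hu, -⟩ := not_subset.1 h1
  by_cases h2 : F ⊆ {u, σ u}
  · refine Or.inr (Or.inl ⟨u, hu, subset_antisymm h2 ?_⟩)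
    intro y; simp only [mem_insert, mem_singleton]
    rintro (rfl | rfl)
    exacts [hu, hi _ hu]
  obtain ⟨w, hw, hw'⟩ := not_subset.1 h2
  simp only [mem_insert, mem_singleton, not_or] at hw'
  by_cases h3 : F ⊆ {u, σ u, w, σ w}
  · refine Or.inr (Or.inr (Or.inl ⟨u, hu, w, hw, hw'.1, hw'.2, subset_antisymm h3 ?_⟩))
    intro y; simp only [mem_insert, mem_singleton]
    rintro (rfl | rfl | rfl | rfl)
    exacts [hu, hi _ hu, hw, hi _ hw]
  obtain ⟨t, ht, ht'⟩ := not_subset.1 h3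
  simp only [mem_insert, mem_singleton, not_or] at ht'
  refine Or.inr (Or.inr (Or.inr ?_))
  have hsub : ({u, σ u, w, σ w, t, σ t} : Finset V) ⊆ F := by
    intro y; simp only [mem_insert, mem_singleton]
    rintro (rfl | rfl | rfl | rfl | rfl | rfl)
    exacts [hu, hi _ hu, hw, hi _ hw, ht, hi _ ht]
  have inj : ∀ a b, σ a = b → a = σ b := fun a b h => by rw [← h, hinv]
  refine le_trans (le_of_eq ?_) (card_le_card hsub)
  have a1 := hne u hu
  have a2 := hne w hw
  have a3 := hne t ht
  have b1 : σ w ≠ u := fun h => hw'.2 (inj _ _ h)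
  have b2 : σ t ≠ u := fun h => ht'.2.1 (inj _ _ h)
  have b3 : σ t ≠ w := fun h => ht'.2.2.2 (inj _ _ h)
  have b4 : σ w ≠ σ u := fun h => hw'.1 (by rw [← hinv w, h, hinv])
  have b5 : σ t ≠ σ u := fun h => ht'.1 (by rw [← hinv t, h, hinv])
  have b6 : σ t ≠ σ w := fun h => ht'.2.2.1 (by rw [← hinv t, h, hinv])
  rw [card_insert_of_notMem, card_insert_of_notMem, card_insert_of_notMem, card_insert_of_notMem,
    card_insert_of_notMem, card_singleton]
  all_goals
    simp only [mem_insert, mem_singleton, not_or]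
    refine ?_
  · exact a3.symm
  · exact ⟨fun h => ht'.2.2.2 h.symm, b6.symm⟩
  · exact ⟨a2.symm, fun h => ht'.2.2.1 h.symm, b3.symm⟩
  · exact ⟨fun h => hw'.2 h.symm, b4.symm, fun h => ht'.2.1 h.symm, b5.symm⟩
  · exact ⟨a1.symm, fun h => hw'.1 h.symm, b1.symm, fun h => ht'.1 h.symm, b2.symm⟩

theorem Good.rem_card (hg : Good σ W E) {R : Finset V} (h : 1 < #(W \ R)) :
    #(rem E R) + 3 ≤ 2 * #(W \ R) := by
  refine le_trans (Nat.add_le_add_right (card_le_card ?_) 3) (hg.ss.sparse _ h)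
  exact fun e he => mem_ins.2 ⟨rem_sub he, hg.rem_sub_sdiff e he⟩

theorem Good.rem_empty (hg : Good σ W E) {R : Finset V} (h : #(W \ R) ≤ 1) : rem E R = ∅ := by
  rw [← subset_empty]
  intro e he
  have h1 := hg.rem_sub_sdiff e he
  have h2 := hg.ss.nodiag e (rem_sub he)
  induction e using Sym2.ind with
  | _ a b => exact absurd (card_le_one.1 h a (h1 a (by simp)) b (h1 b (by simp))) (by simpa using h2)

theorem Good.two_le (hg : Good σ W E) : 2 ≤ #W := by
  obtain ⟨f, hf, -⟩ := hg.fix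
  have h1 := card_pos.2 ⟨f, hf⟩
  have h2 := hg.card
  omega

/-- The base case of two vertices, joined by the fixed edge. -/
theorem Good.base (ha : Act σ H) (hg : Good σ W E) (h2 : #W = 2) : Rig σ H W E := by
  obtain ⟨f, hf, hff⟩ := hg.fix
  have hd := hg.ss.nodiag f hf
  have hs := hg.sub f hf
  induction f using Sym2.ind with
  | _ a b =>
  have hab : a ≠ b := by simpa using hd
  have hW : W = {a, b} := by
    symm
    refine eq_of_subset_of_card_le ?_ (by rw [card_pair hab, h2])
    intro y; simp only [mem_insert, mem_singleton]
    rintro (rfl | rfl) <;> exact hs _ (by simp)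
  have reduce : ∀ (P : V → Fin 3 → ℝ) (c : Fin 3 → V × Fin 3),
      (∀ q ∈ Mot W E P, P a ⬝ᵥ q a = 0 → P b ⬝ᵥ q b = 0 → P a ⬝ᵥ q b + P b ⬝ᵥ q a = 0 →
        (∀ k, q (c k).1 (c k).2 = 0) → q a = 0 ∧ q b = 0) → Module.finrank ℝ (Mot W E P) ≤ 3 := by
    intro P c hL
    let L : (V → Fin 3 → ℝ) →ₗ[ℝ] (Fin 3 → ℝ) := LinearMap.pi fun k =>
      (LinearMap.proj (c k).2 : (Fin 3 → ℝ) →ₗ[ℝ] ℝ).comp (LinearMap.proj (c k).1)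
    have hinj : Function.Injective (L.domRestrict (Mot W E P)) := by
      rw [← LinearMap.ker_eq_bot, LinearMap.ker_eq_bot']
      rintro ⟨q, hq⟩ h0
      have h1 := hL q hq (Mot.tan hq a) (Mot.tan hq b) ((mem_Mot.1 hq).2.2 a b hf)
        (fun k => congrFun h0 k)
      ext v : 2
      by_cases hv : v ∈ W
      · rw [hW, mem_insert, mem_singleton] at hv
        rcases hv with rfl | rfl
        exacts [h1.1, h1.2]
      · exact (mem_Mot.1 hq).1 v hv
    simpa using LinearMap.finrank_le_finrank_of_injective hinj
  rcases stable_of_fix hff with ⟨h1, h3⟩ | h1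
  · have haH := ha.fix_iff.1 h1
    obtain ⟨P, hP, hPa, hPb⟩ := exists_two ha (a := ![1, 0, 0]) (b := ![0, 1, 0]) hab.symm
      (by rw [h1]; exact hab.symm) (fun _ => by simp) (fun _ => by simp)
    refine ⟨P, hP, reduce P ![(a, 1), (a, 2), (b, 2)] ?_⟩
    intro q _ t1 t2 e hL
    rw [hPa, hPb] at *
    have l0 := hL 0
    have l1 := hL 1
    have l2 := hL 2
    simp [dotProduct, Fin.sum_univ_three] at t1 t2 e l0 l1 l2
    constructor <;> (ext k; fin_cases k <;> simp) <;> linarith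
  · have haH : a ∉ H := fun h => hab (by rw [← h1, ha.fix a h])
    obtain ⟨P, hP, -, hPa, hPb⟩ := (Sym.zero (σ := σ) (H := H)).update_free ha haH ![1, 0, 1]
    refine ⟨P, hP, reduce P ![(a, 1), (b, 1), (a, 0)] ?_⟩
    intro q _ t1 t2 e hL
    rw [h1] at hPb
    rw [hPa, hPb] at *
    have l0 := hL 0
    have l1 := hL 1
    have l2 := hL 2
    simp [dotProduct, Fin.sum_univ_three, turn] at t1 t2 e l0 l1 l2
    constructor <;> (ext k; fin_cases k <;> simp) <;> linarith

variable [Fintype V]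

theorem sum_deg (W : Finset V) (E : Finset (Sym2 V)) : ∑ v ∈ W, #(nb E v) ≤ 2 * #E := by
  simp only [← card_inc]
  have h1 := sum_card_bipartiteAbove_eq_sum_card_bipartiteBelow (s := W) (t := E)
    (fun v e => v ∈ e)
  have h2 : ∀ v, inc E v = bipartiteAbove (fun v e => v ∈ e) E v := fun v => rfl
  simp only [h2]
  rw [h1, mul_comm]
  refine sum_le_card_nsmul _ _ _ fun e _ => ?_
  induction e using Sym2.ind with
  | _ a b =>
    refine le_trans (card_le_card (t := {a, b}) ?_) card_le_two
    intro v hv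
    simpa using (mem_bipartiteBelow _).1 hv |>.2

/-- If the graph has no rigid symmetric realisation, a free vertex has degree at least four, or it
has degree three and only equatorial neighbours. -/
theorem Good.free_vertex (ha : Act σ H) (hg : Good σ W E) (ih : IH σ H W) (h3 : 3 ≤ #W)
    (hr : ¬ Rig σ H W E) {v : V} (hvW : v ∈ W) (hv : v ∉ H) :
    4 ≤ #(nb E v) ∨ #(nb E v) = 3 ∧ ∀ w ∈ nb E v, w ∈ H := by
  have hinv := ha.invol
  have hfree := ha.free v hv
  have hc := hg.ss.card_rem_pair hfree
  have hsub := hg.pair_sub hvW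
  have hW := card_sdiff_add_card_eq_card hsub
  rw [card_pair hfree.symm] at hW
  have hE := hg.card
  have hlow : 1 < #(W \ {v, σ v}) → 4 + (if σ v ∈ nb E v then 1 else 0) ≤ 2 * #(nb E v) := by
    intro h1
    have := hg.rem_card h1
    omega
  have hlow' : ¬ 1 < #(W \ {v, σ v}) →
      #W = 3 ∧ 3 + (if σ v ∈ nb E v then 1 else 0) = 2 * #(nb E v) := by
    intro h1
    have h2 := hg.rem_empty (R := {v, σ v}) (by omega)
    rw [h2, card_empty] at hc
    omega
  by_cases hn : σ v ∈ nb E v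
  · rw [if_pos hn] at hlow hlow'
    obtain ⟨B, hB⟩ : ∃ B, B = (nb E v).erase (σ v) := ⟨_, rfl⟩
    have hB1 : insert (σ v) B = nb E v := by rw [hB, insert_erase hn]
    have hB2 : σ v ∉ B := by simp [hB]
    have hB3 : #(nb E v) = #B + 1 := by rw [← hB1, card_insert_of_notMem hB2]
    by_cases hlt : 1 < #(W \ {v, σ v})
    · have h4 := hlow hlt
      by_cases h5 : 4 ≤ #(nb E v)
      · exact Or.inl h5
      obtain ⟨u, w, huw, hBe⟩ := card_eq_two.1 (show #B = 2 by omega)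
      refine absurd (hg.move_five ha ih hvW hv (u := u) (w := w) (by rw [← hB1, hBe])
        (fun hh => hB2 (by rw [hBe, hh]; simp)) (fun hh => hB2 (by rw [hBe, hh]; simp)) huw) hr
    · -- only a triangle is left, and its third vertex is fixed
      obtain ⟨h4, h5⟩ := hlow' hlt
      obtain ⟨x, hBe⟩ := card_eq_one.1 (show #B = 1 by omega)
      have hx : x ∈ nb E v := by rw [← hB1, hBe]; simp
      have hxv := hg.nb_ne hx
      have hxs : x ≠ σ v := fun hh => hB2 (by rw [hBe, hh]; simp)
      have hWe : W = {v, σ v, x} := by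
        symm
        refine eq_of_subset_of_card_le ?_
          (by rw [card_eq_three.2 ⟨_, _, _, hfree.symm, hxv.symm, hxs.symm, rfl⟩, h4])
        intro y; simp only [mem_insert, mem_singleton]
        rintro (rfl | rfl | rfl)
        exacts [hvW, hg.inv _ hvW, hg.nb_mem hx]
      have hxfix : σ x = x := by
        have := hg.inv _ (hg.nb_mem hx)
        rw [hWe] at this
        simp only [mem_insert, mem_singleton] at this
        rcases this with hh | hh | hh
        · exact absurd (by rw [← hh, hinv]) hxs
        · exact absurd (by rw [← hinv x, hh, hinv]) hxv
        · exact hh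
      refine absurd (hg.move_two ha ih (hg.nb_mem hx) (ha.fix_iff.1 hxfix) hv
        (subset_antisymm ?_ ?_)) hr
      · intro y hy
        have h6 := hg.nb_mem hy
        rw [hWe] at h6
        have h7 := hg.nb_ne hy
        simp only [mem_insert, mem_singleton] at h6 ⊢
        tauto
      · intro y; simp only [mem_insert, mem_singleton]
        have h6 := mem_nb_comm hx
        rintro (rfl | rfl)
        · exact h6
        · rw [← hxfix, hg.ss.nb_map]; exact h6
  · rw [if_neg hn] at hlow hlow'
    have hlt : 1 < #(W \ {v, σ v}) := by
      by_contra hh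
      have := hlow' hh
      omega
    have h4 := hlow hlt
    by_cases h5 : 4 ≤ #(nb E v)
    · exact Or.inl h5
    by_cases h6 : #(nb E v) = 2
    · obtain ⟨x, y, hxy, hnb⟩ := card_eq_two.1 h6
      exact absurd (hg.move_one ha ih hvW hv hnb hxy hn) hr
    · have h7 : #(nb E v) = 3 := by omega
      refine Or.inr ⟨h7, ?_⟩
      obtain ⟨x, y, z, hxy, hxz, hyz, hnb⟩ := card_eq_three.1 h7
      by_contra hcon
      refine hr (hg.move_six ha ih hvW hv hnb hxy hyz hxz hn fun hh => hcon fun w hw => ?_)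
      rw [hnb] at hw
      simp only [mem_insert, mem_singleton] at hw
      rcases hw with rfl | rfl | rfl
      exacts [hh.1, hh.2.1, hh.2.2]

/-- An edge between two equatorial vertices is the fixed edge. -/
theorem Good.line_nb (ha : Act σ H) (hg : Good σ W E) {x y : V} (hx : x ∈ H) (hy : y ∈ H)
    (h : y ∈ nb E x) {f : Sym2 V} (hf : f ∈ E) (hff : f.map σ = f) : f = s(x, y) :=
  hg.ss.fix_le f hf _ (mem_nb.1 h) hff (fix_of_stable ha.invol (Or.inl ⟨ha.fix x hx, ha.fix y hy⟩))

/-- If the graph has no rigid symmetric realisation, an equatorial vertex has degree at least six,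
or at least five if it is an end of the fixed edge. -/
theorem Good.line_vertex (ha : Act σ H) (hg : Good σ W E) (ih : IH σ H W) (h3 : 3 ≤ #W)
    (hr : ¬ Rig σ H W E) {x : V} (hxW : x ∈ W) (hx : x ∈ H) {f : Sym2 V} (hf : f ∈ E)
    (hff : f.map σ = f) : 6 ≤ #(nb E x) + if x ∈ f then 1 else 0 := by
  have hlow : 2 ≤ #(nb E x) := by
    have h1 := card_rem_single (E := E) x
    have h2 := card_sdiff_add_card_eq_card (singleton_subset_iff.2 hxW)
    rw [card_singleton] at h2
    have h4 := hg.rem_card (R := {x}) (by omega)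
    have h5 := hg.card
    omega
  have hsplit := card_filter_add_card_filter_not (s := nb E x) (· ∈ H)
  have hL : #((nb E x).filter (· ∈ H)) ≤ 1 := by
    rw [card_le_one]
    intro y hy z hz
    rw [mem_filter] at hy hz
    have h1 := hg.line_nb ha hx hy.2 hy.1 hf hff
    rw [hg.line_nb ha hx hz.2 hz.1 hf hff] at h1
    exact (Sym2.congr_right.1 h1).symm
  have hunion := filter_union_filter_not_eq (· ∈ H) (nb E x)
  have horb := ha.orbits (F := (nb E x).filter (· ∉ H)) (fun v hv => (mem_filter.1 hv).2)
    (fun v hv => by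
      rw [mem_filter] at hv ⊢
      refine ⟨?_, by rw [ha.mem_iff]; exact hv.2⟩
      rw [← ha.fix x hx, hg.ss.nb_map]; exact hv.1)
  rcases horb with h1 | ⟨u, hu, h1⟩ | ⟨u, hu, w, hw, hwu, hwu', h1⟩ | h1
  · rw [h1, card_empty] at hsplit
    omega
  · rw [h1] at hunion
    rw [mem_filter] at hu
    by_cases h4 : #((nb E x).filter (· ∈ H)) = 0
    · rw [card_eq_zero.1 h4, empty_union] at hunion
      exact absurd (hg.move_two ha ih hxW hx hu.2 hunion.symm) hr
    · obtain ⟨y, hy⟩ := card_eq_one.1 (show #((nb E x).filter (· ∈ H)) = 1 by omega)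
      have hyH : y ∈ (nb E x).filter (· ∈ H) := by rw [hy]; simp
      rw [hy] at hunion
      refine absurd (hg.move_three ha ih hxW hx (mem_filter.1 hyH).2 hu.2 (u := u) ?_) hr
      rw [← hunion]; ext; simp only [mem_union, mem_insert, mem_singleton]; tauto
  · rw [mem_filter] at hu hw
    by_cases h4 : #((nb E x).filter (· ∈ H)) = 0
    · rw [h1, card_eq_zero.1 h4, empty_union] at hunion
      exact absurd (hg.move_four ha ih hxW hx hu.2 hw.2 hwu hwu' hunion.symm) hr
    · obtain ⟨y, hy⟩ := card_eq_one.1 (show #((nb E x).filter (· ∈ H)) = 1 by omega)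
      have hyH : y ∈ (nb E x).filter (· ∈ H) := by rw [hy]; simp
      rw [mem_filter] at hyH
      have hfe := hg.line_nb ha hx hyH.2 hyH.1 hf hff
      have hinv := ha.invol
      have hfw := ha.free w hw.2
      have hfu := ha.free u hu.2
      have hsw1 : σ w ≠ u := fun hh => hwu' (by rw [← hh, hinv])
      have hsw2 : σ w ≠ σ u := fun hh => hwu (by rw [← hinv w, hh, hinv])
      have hcard : #({u, σ u, w, σ w} : Finset V) = 4 := by
        rw [card_insert_of_notMem,
          card_eq_three.2 ⟨σ u, w, σ w, hwu'.symm, hsw2.symm, hfw.symm, rfl⟩]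
        simp [hfu.symm, hwu.symm, hsw1.symm]
      rw [h1, hcard] at hsplit
      rw [if_pos (by rw [hfe]; simp)]
      omega
  · omega

/-- With realisations of all smaller graphs at hand, three or more vertices always have one that
can be removed: otherwise the degree sum `4#W - 6` forces so many free vertices with three
equatorial neighbours that they and the equator violate sparsity. -/
theorem Good.step (ha : Act σ H) (hg : Good σ W E) (ih : IH σ H W) (h3 : 3 ≤ #W) :
    Rig σ H W E := by
  by_contra hr
  obtain ⟨f, hf, hff⟩ := hg.fix
  set Hs := W.filter (· ∈ H) with hHs
  set Fr := W.filter (· ∉ H) with hFr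
  set A := Fr.filter fun v => #(nb E v) = 3 with hA
  set B := Fr.filter fun v => ¬ #(nb E v) = 3 with hB
  have c1 : #Hs + #Fr = #W := card_filter_add_card_filter_not _
  have c2 : #A + #B = #Fr := card_filter_add_card_filter_not _
  have s1 : ∑ v ∈ Hs, #(nb E v) + ∑ v ∈ Fr, #(nb E v) = ∑ v ∈ W, #(nb E v) :=
    sum_filter_add_sum_filter_not _ _ _
  have s2 : ∑ v ∈ A, #(nb E v) + ∑ v ∈ B, #(nb E v) = ∑ v ∈ Fr, #(nb E v) :=
    sum_filter_add_sum_filter_not _ _ _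
  have s3 : ∑ v ∈ A, #(nb E v) = 3 * #A := by
    rw [sum_const_nat (m := 3) fun v hv => (mem_filter.1 hv).2, mul_comm]
  have s4 : 4 * #B ≤ ∑ v ∈ B, #(nb E v) := by
    rw [mul_comm]
    refine card_nsmul_le_sum B _ 4 fun v hv => ?_
    have h1 := mem_filter.1 hv
    have h2 := mem_filter.1 h1.1
    rcases hg.free_vertex ha ih h3 hr h2.1 h2.2 with h | h
    · exact h
    · exact absurd h.1 h1.2
  have s5 : 6 * #Hs ≤ ∑ v ∈ Hs, #(nb E v) + 2 := by
    have h1 : 6 * #Hs ≤ ∑ v ∈ Hs, (#(nb E v) + if v ∈ f then 1 else 0) := by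
      rw [mul_comm]
      refine card_nsmul_le_sum Hs _ 6 fun v hv => ?_
      have h2 := mem_filter.1 hv
      exact hg.line_vertex ha ih h3 hr h2.1 h2.2 hf hff
    rw [sum_add_distrib, ← card_filter] at h1
    refine h1.trans (Nat.add_le_add_left ?_ _)
    clear hff h1
    induction f using Sym2.ind with
    | _ a b =>
      refine le_trans (card_le_card (t := {a, b}) ?_) card_le_two
      intro v hv
      simpa using (mem_filter.1 hv).2
  have s6 := sum_deg W E
  have s7 := hg.card
  have hAH : ∀ v ∈ A, v ∈ W ∧ v ∉ H ∧ ∀ w ∈ nb E v, w ∈ H := fun v hv => by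
    have h1 := mem_filter.1 hv
    have h2 := mem_filter.1 h1.1
    rcases hg.free_vertex ha ih h3 hr h2.1 h2.2 with h | h
    · omega
    · exact ⟨h2.1, h2.2, h.2⟩
  have hsub : A.biUnion (inc E) ⊆ ins E (A ∪ Hs) := by
    intro e he
    obtain ⟨v, hv, he⟩ := mem_biUnion.1 he
    rw [mem_inc] at he
    obtain ⟨heE, w, rfl⟩ := he
    have h1 := (hAH v hv).2.2 w (mem_nb.2 heE)
    rw [mem_ins]
    refine ⟨heE, fun y hy => ?_⟩
    rcases Sym2.mem_iff.1 hy with rfl | rfl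
    · exact mem_union_left _ hv
    · exact mem_union_right _ (mem_filter.2 ⟨hg.sub _ heE _ (by simp), h1⟩)
  have hdis : ∀ x ∈ A, ∀ y ∈ A, x ≠ y → Disjoint (inc E x) (inc E y) := by
    intro x hx y hy hxy
    rw [Finset.disjoint_left]
    intro e he he'
    rw [mem_inc] at he he'
    have h1 := (Sym2.mem_and_mem_iff hxy).1 ⟨he.2, he'.2⟩
    exact (hAH y hy).2.1 ((hAH x hx).2.2 y (mem_nb.2 (h1 ▸ he.1)))
  have s8 := card_le_card hsub
  rw [card_biUnion hdis] at s8
  simp only [card_inc] at s8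
  have s9 := card_union_le A Hs
  have s10 := card_le_card (subset_union_left (s₁ := A) (s₂ := Hs))
  have s11 := hg.ss.sparse (A ∪ Hs) (by omega)
  -- the degree sum gives `2 #Hs + 4 ≤ #A`, and sparsity of `A ∪ Hs` gives `#A ≤ 2 #Hs - 3`
  omega

/-- The inductive construction: symmetric tight graphs with one fixed edge have rigid
symmetric realisations. -/
theorem Good.rig (ha : Act σ H) (hg : Good σ W E) : Rig σ H W E := by
  obtain ⟨n, hn⟩ : ∃ n, #W = n := ⟨_, rfl⟩
  induction n using Nat.strong_induction_on generalizing W E with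
  | _ n ih =>
    by_cases h2 : #W = 2
    · exact hg.base ha h2
    · exact hg.step ha (fun W' E' h1 h => ih _ (hn ▸ h1) h rfl) (by have := hg.two_le; omega)

end

section
open scoped Classical
open Finset

/-! ### From point-line frameworks to spherical frameworks -/

/-- The left-hand side of the rigidity equation of the edge `e`, as a linear form in the
velocities. -/
noncomputable def edgeForm (P : V → Fin 3 → ℝ) (e : Sym2 V) : (V → Fin 3 → ℝ) →ₗ[ℝ] ℝ where
  toFun q := P (Quot.out e).1 ⬝ᵥ q (Quot.out e).2 + P (Quot.out e).2 ⬝ᵥ q (Quot.out e).1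
  map_add' q q' := by simp [dotProduct_add]; ring
  map_smul' c q := by simp [dotProduct_smul, mul_add]

theorem edgeForm_mk (P q : V → Fin 3 → ℝ) (i j : V) :
    edgeForm P s(i, j) q = P i ⬝ᵥ q j + P j ⬝ᵥ q i := by
  have h : s((Quot.out s(i, j)).1, (Quot.out s(i, j)).2) = s(i, j) := Quot.out_eq s(i, j)
  simp only [edgeForm, LinearMap.coe_mk, AddHom.coe_mk]
  rcases Sym2.eq_iff.1 h with h | h
  · rw [h.1, h.2]
  · rw [h.1, h.2, add_comm]

variable {σ : V → V} {H : Set V} {W : Finset V} {E F : Finset (Sym2 V)} {P q : V → Fin 3 → ℝ}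

theorem mem_Mot_edgeForm : q ∈ Mot W E P ↔ (∀ i ∉ W, q i = 0) ∧ (∀ i ∈ W, P i ⬝ᵥ q i = 0) ∧
      ∀ e ∈ E, edgeForm P e q = 0 := by
  rw [mem_Mot]
  refine and_congr Iff.rfl (and_congr Iff.rfl ⟨fun h e he => ?_, fun h i j hij => ?_⟩)
  · induction e using Sym2.ind with
    | _ i j => rw [edgeForm_mk]; exact h i j he
  · rw [← edgeForm_mk]; exact h _ hij

theorem Mot_insert (e : Sym2 V) :
    Mot W (insert e E) P = Mot W E P ⊓ LinearMap.ker (edgeForm P e) := by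
  ext q
  simp only [mem_Mot_edgeForm, Submodule.mem_inf, LinearMap.mem_ker, Finset.mem_insert,
    forall_eq_or_imp]
  tauto

theorem finrank_inf_ker {Q : Type*} [AddCommGroup Q] [Module ℝ Q] [FiniteDimensional ℝ Q]
    (M : Submodule ℝ Q) (f : Q →ₗ[ℝ] ℝ) :
    Module.finrank ℝ M ≤ Module.finrank ℝ ↥(M ⊓ LinearMap.ker f) + 1 := by
  have h1 := LinearMap.finrank_range_add_finrank_ker (f.domRestrict M)
  have h2 := Submodule.finrank_le (LinearMap.range (f.domRestrict M))
  rw [Module.finrank_self] at h2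
  have h3 : Module.finrank ℝ (LinearMap.ker (f.domRestrict M)) ≤
      Module.finrank ℝ ↥(M ⊓ LinearMap.ker f) := by
    refine LinearMap.finrank_le_finrank_of_injective
      (f := (M.subtype ∘ₗ (LinearMap.ker (f.domRestrict M)).subtype).codRestrict
        (M ⊓ LinearMap.ker f) fun x => ⟨x.1.2, x.2⟩) ?_
    intro x y hxy
    have h : (x.1 : Q) = y.1 := congrArg (fun z : ↥(M ⊓ LinearMap.ker f) => (z : Q)) hxy
    exact Subtype.ext (Subtype.ext h)
  omega

/-- Every vertex has two degrees of freedom and every edge removes at most one. -/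
theorem two_card_le [Fintype V] (E : Finset (Sym2 V)) (P : V → Fin 3 → ℝ) :
    2 * Fintype.card V ≤ Module.finrank ℝ (Mot univ E P) + #E := by
  induction E using Finset.induction_on with
  | empty =>
    let f : (V → Fin 3 → ℝ) →ₗ[ℝ] (V → ℝ) :=
      { toFun := fun q i => P i ⬝ᵥ q i
        map_add' := fun q q' => by ext; simp [dotProduct_add]
        map_smul' := fun c q => by ext; simp [dotProduct_smul] }
    have h1 := LinearMap.finrank_range_add_finrank_ker f
    have h2 := Submodule.finrank_le (LinearMap.range f)
    have h3 : Mot univ ∅ P = LinearMap.ker f := by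
      ext q; simp [mem_Mot, f, funext_iff]
    rw [h3]
    simp only [Module.finrank_pi_fintype, Module.finrank_self, sum_const, card_univ, smul_eq_mul,
      mul_one, Fintype.card_fin] at h1 h2
    omega
  | insert e E he ih =>
    rw [Mot_insert, card_insert_of_notMem he]
    have := finrank_inf_ker (Mot univ E P) (edgeForm P e)
    omega

/-- Rescaling the vertices does not create motions. -/
theorem finrank_Mot_smul_le [Finite V] (c : V → ℝ) (hc : ∀ i, c i ≠ 0) :
    Module.finrank ℝ (Mot W E fun i => c i • P i) ≤ Module.finrank ℝ (Mot W E P) := by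
  let f : (V → Fin 3 → ℝ) →ₗ[ℝ] (V → Fin 3 → ℝ) :=
    { toFun := fun q i => (c i)⁻¹ • q i
      map_add' := fun q q' => by ext; simp [mul_add]
      map_smul' := fun s q => by ext; simp; ring }
  refine LinearMap.finrank_le_finrank_of_injective (f := f.restrict (q := Mot W E P) ?_) ?_
  · intro q hq
    rw [mem_Mot] at hq ⊢
    refine ⟨fun i hi => ?_, fun i hi => ?_, fun i j hij => ?_⟩
    · simp [f, hq.1 i hi]
    · have := hq.2.1 i hi
      rw [smul_dotProduct, smul_eq_mul] at this
      simp [f, (mul_eq_zero.1 this).resolve_left (hc i)]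
    · have := hq.2.2 i j hij
      simp only [smul_dotProduct, smul_eq_mul] at this
      have h1 := hc i
      have h2 := hc j
      simp only [f, LinearMap.coe_mk, AddHom.coe_mk, dotProduct_smul, smul_eq_mul]
      field_simp
      linarith
  · intro x y hxy
    refine Subtype.ext (funext fun i => ?_)
    have h1 : (c i)⁻¹ • x.1 i = (c i)⁻¹ • y.1 i := congrFun (congrArg Subtype.val hxy) i
    exact smul_right_injective _ (inv_ne_zero (hc i)) h1

/-- The vectors of `ℝ³` representing a point-line framework: points in the plane at height one
and normals of lines in the plane at height zero. -/
noncomputable def lft (H : Set V) (p a : V → Fin 2 → ℝ) (i : V) : Fin 3 → ℝ :=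
  if i ∈ H then ![a i 0, a i 1, 0] else ![p i 0, p i 1, 1]

theorem lft_H {p a : V → Fin 2 → ℝ} {i : V} (h : i ∈ H) : lft H p a i = ![a i 0, a i 1, 0] :=
  if_pos h

theorem lft_P {p a : V → Fin 2 → ℝ} {i : V} (h : i ∉ H) : lft H p a i = ![p i 0, p i 1, 1] :=
  if_neg h

/-- The point-line velocities underlying the velocities of the spherical framework. -/
noncomputable def drop (H : Set V) : (V → Fin 3 → ℝ) →ₗ[ℝ]
    (V → Fin 2 → ℝ) × (V → Fin 2 → ℝ) × (V → ℝ) where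
  toFun q := (fun i => if i ∈ H then 0 else ![q i 0, q i 1],
    fun i => if i ∈ H then ![q i 0, q i 1] else 0, fun i => if i ∈ H then q i 2 else 0)
  map_add' q q' := by
    refine Prod.ext ?_ (Prod.ext ?_ ?_) <;> funext i <;>
      simp only [Prod.fst_add, Prod.snd_add, Pi.add_apply] <;> split_ifs <;> simp
  map_smul' c q := by
    refine Prod.ext ?_ (Prod.ext ?_ ?_) <;> funext i <;>
      simp only [Prod.smul_fst, Prod.smul_snd, Pi.smul_apply, RingHom.id_apply] <;> split_ifs <;>
      simp

/-- Motions of the spherical framework give motions of the point-line framework. -/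
theorem drop_mem [Fintype V] {G : SimpleGraph V} (hE : ∀ e, e ∈ E ↔ e ∈ G.edgeSet)
    {p a : V → Fin 2 → ℝ} (r : V → ℝ) (hq : q ∈ Mot univ E (lft H p a)) :
    drop H q ∈ PHMotionSet G H p a r := by
  rw [mem_Mot] at hq
  have ht : ∀ i, lft H p a i ⬝ᵥ q i = 0 := fun i => hq.2.1 i (mem_univ _)
  refine ⟨⟨fun i j hij hi hj => ?_, fun i j hij hi hj => ?_, fun i j hij hi hj => ?_,
    fun i hi => ?_⟩, fun i hi => ?_, fun i hi => ?_⟩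
  · have h1 := hq.2.2 i j ((hE _).2 hij)
    have h2 := ht i
    have h3 := ht j
    rw [lft_P hi] at h1 h2
    rw [lft_P hj] at h1 h3
    simp [drop, hi, hj, dotProduct, Fin.sum_univ_succ] at h1 h2 h3 ⊢
    linear_combination h2 + h3 - h1
  · have h1 := hq.2.2 i j ((hE _).2 hij)
    rw [lft_P hi, lft_H hj] at h1
    simp [drop, hi, hj, dotProduct, Fin.sum_univ_succ] at h1 ⊢
    linear_combination h1
  · have h1 := hq.2.2 i j ((hE _).2 hij)
    rw [lft_H hi, lft_H hj] at h1
    simp [drop, hi, hj, dotProduct, Fin.sum_univ_succ] at h1 ⊢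
    linear_combination h1
  · have h1 := ht i
    rw [lft_H hi] at h1
    simpa [drop, hi, dotProduct, Fin.sum_univ_succ] using h1
  · simp [drop, hi]
  · simp [drop, hi]

theorem exists_drop [Fintype V] {G : SimpleGraph V} (hE : ∀ e, e ∈ E ↔ e ∈ G.edgeSet)
    {p a : V → Fin 2 → ℝ} {r : V → ℝ} {m : (V → Fin 2 → ℝ) × (V → Fin 2 → ℝ) × (V → ℝ)}
    (hm : m ∈ PHMotionSet G H p a r) : ∃ q ∈ Mot univ E (lft H p a), drop H q = m := by
  obtain ⟨p', a', r'⟩ := m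
  obtain ⟨⟨h1, h2, h3, h4⟩, h5, h6⟩ := hm
  dsimp only at h1 h2 h3 h4 h5 h6
  refine ⟨fun i => if i ∈ H then ![a' i 0, a' i 1, r' i] else
    ![p' i 0, p' i 1, -(p i ⬝ᵥ p' i)], ?_, ?_⟩
  · rw [mem_Mot]
    refine ⟨fun i hi => absurd (mem_univ _) hi, fun i _ => ?_, fun i j hij => ?_⟩
    · by_cases hi : i ∈ H
      · have := h4 i hi
        rw [lft_H hi]
        simpa [hi, dotProduct, Fin.sum_univ_succ] using this
      · rw [lft_P hi]
        simp [hi, dotProduct, Fin.sum_univ_succ]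
    · have hij : G.Adj i j := (hE _).1 hij
      by_cases hi : i ∈ H <;> by_cases hj : j ∈ H
      · have := h3 i j hij hi hj
        rw [lft_H hi, lft_H hj]
        simp [hi, hj, dotProduct, Fin.sum_univ_succ] at this ⊢
        linear_combination this
      · have := h2 j i hij.symm hj hi
        rw [lft_H hi, lft_P hj]
        simp [hi, hj, dotProduct, Fin.sum_univ_succ] at this ⊢
        linear_combination this
      · have := h2 i j hij hi hj
        rw [lft_P hi, lft_H hj]
        simp [hi, hj, dotProduct, Fin.sum_univ_succ] at this ⊢
        linear_combination this
      · have := h1 i j hij hi hj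
        rw [lft_P hi, lft_P hj]
        simp [hi, hj, dotProduct, Fin.sum_univ_succ] at this ⊢
        linear_combination -this
  · refine Prod.ext ?_ (Prod.ext ?_ ?_) <;> funext i <;> by_cases hi : i ∈ H
    · simp [drop, hi, h5 i hi]
    · ext k; fin_cases k <;> simp [drop, hi]
    · ext k; fin_cases k <;> simp [drop, hi]
    · simp [drop, hi, (h6 i hi).1]
    · simp [drop, hi]
    · simp [drop, hi, (h6 i hi).2]

/-- The motion spaces of a point-line framework and of its spherical counterpart have the same
dimension. -/
theorem setDim_eq [Fintype V] {G : SimpleGraph V} (hE : ∀ e, e ∈ E ↔ e ∈ G.edgeSet)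
    (p a : V → Fin 2 → ℝ) (r : V → ℝ) :
    setDim (PHMotionSet G H p a r) = Module.finrank ℝ (Mot univ E (lft H p a)) := by
  have h1 : PHMotionSet G H p a r = drop H '' (Mot univ E (lft H p a) : Set (V → Fin 3 → ℝ)) := by
    ext m
    constructor
    · exact fun hm => exists_drop hE hm
    · rintro ⟨q, hq, rfl⟩; exact drop_mem hE r hq
  have h2 : Function.Injective ((drop H).domRestrict (Mot univ E (lft H p a))) := by
    rw [← LinearMap.ker_eq_bot, LinearMap.ker_eq_bot']
    rintro ⟨q, hq⟩ h0
    rw [mem_Mot] at hq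
    refine Subtype.ext (funext fun i => ?_)
    have h3 := congrFun (congrArg Prod.fst h0) i
    have h4 := congrFun (congrArg (fun m => m.2.1) h0) i
    have h5 := congrFun (congrArg (fun m => m.2.2) h0) i
    have h6 := hq.2.1 i (mem_univ _)
    by_cases hi : i ∈ H
    · simp [drop, hi] at h4 h5
      ext k; fin_cases k <;> simp [h4, h5]
    · simp [drop, hi] at h3
      rw [lft_P hi] at h6
      simp [dotProduct, Fin.sum_univ_succ, h3] at h6
      ext k; fin_cases k <;> simp [h3, h6]
  have h3 := (LinearEquiv.ofInjective _ h2).finrank_eq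
  rw [h3, LinearMap.range_domRestrict, setDim, h1, Submodule.span_image, Submodule.span_eq]

end

section
open scoped Classical
open Finset

variable {σ : V → V} {H : Set V} {W : Finset V} {E F : Finset (Sym2 V)} {P q : V → Fin 3 → ℝ}

/-! ### Tight graphs with one fixed edge give isostatic frameworks -/

/-- A set on which no nontrivial affine function vanishes affinely spans the plane. -/
theorem span_top_of {S : Set (Fin 2 → ℝ)} (hS : S.Nonempty)
    (h : ∀ (u : Fin 2 → ℝ) (c : ℝ), (∀ s ∈ S, u ⬝ᵥ s + c = 0) → u = 0) :
    affineSpan ℝ S = ⊤ := by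
  rw [AffineSubspace.affineSpan_eq_top_iff_vectorSpan_eq_top_of_nonempty ℝ _ _ hS]
  by_contra hne
  obtain ⟨f, hf0, hf⟩ := Submodule.exists_le_ker_of_lt_top _ (lt_top_iff_ne_top.2 hne)
  obtain ⟨t, ht⟩ := hS
  have hfu : ∀ x, (fun k => f (Pi.single k 1)) ⬝ᵥ x = f x := by
    intro x
    conv_rhs => rw [LinearMap.pi_apply_eq_sum_univ f x]
    simp [dotProduct, mul_comm]
    congr <;> ext k <;> fin_cases k <;> simp
  refine hf0 (LinearMap.ext fun x => ?_)
  rw [← hfu, h (fun k => f (Pi.single k 1)) (-f t), zero_dotProduct, LinearMap.zero_apply]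
  intro s hs
  have h1 : f (s - t) = 0 := hf (vsub_mem_vectorSpan ℝ hs ht)
  rw [hfu, ← sub_eq_add_neg, ← map_sub, h1]

theorem of_span_top {S : Set (Fin 2 → ℝ)} (hS : affineSpan ℝ S = ⊤) {u : Fin 2 → ℝ} {c : ℝ}
    (h : ∀ s ∈ S, u ⬝ᵥ s + c = 0) : u = 0 := by
  let T : AffineSubspace ℝ (Fin 2 → ℝ) :=
    { carrier := {x | u ⬝ᵥ x + c = 0}
      smul_vsub_vadd_mem' := by
        intro t x y z hx hy hz
        simp only [Set.mem_ofPred_eq, vsub_eq_sub, vadd_eq_add, dotProduct_add, dotProduct_smul,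
          dotProduct_sub, smul_eq_mul] at *
        linear_combination t * hx - t * hy + hz }
  have h1 : affineSpan ℝ S ≤ T := affineSpan_le.2 h
  rw [hS] at h1
  have h2 : u ⬝ᵥ (0 : Fin 2 → ℝ) + c = 0 := h1 (AffineSubspace.mem_top ℝ _ _)
  have h3 : u ⬝ᵥ u + c = 0 := h1 (AffineSubspace.mem_top ℝ _ _)
  rw [dotProduct_zero, zero_add] at h2
  rw [h2, add_zero] at h3
  exact dotProduct_self_eq_zero.1 h3

/-- A form vanishing on a line is proportional to the equation of the line. -/
theorem line_form {a u : Fin 2 → ℝ} {r c : ℝ} (ha : a ⬝ᵥ a = 1)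
    (h : ∀ x, a ⬝ᵥ x + r = 0 → u ⬝ᵥ x + c = 0) : u = (u ⬝ᵥ a) • a ∧ c = (u ⬝ᵥ a) * r := by
  have h1 := h (-r • a) (by rw [dotProduct_smul, ha]; simp)
  have h2 := h (-r • a + ![-a 1, a 0]) (by
    rw [dotProduct_add, dotProduct_smul, ha]
    simp [dotProduct, Fin.sum_univ_succ]; ring)
  rw [dotProduct_add] at h2
  rw [dotProduct_smul, smul_eq_mul] at h1 h2
  have h3 : u ⬝ᵥ ![-a 1, a 0] = 0 := by linarith
  refine ⟨?_, by linarith⟩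
  simp [dotProduct, Fin.sum_univ_succ] at h3 ha
  ext k
  fin_cases k
  · simp [dotProduct, Fin.sum_univ_succ]
    linear_combination (-u 0) * ha - a 1 * h3
  · simp [dotProduct, Fin.sum_univ_succ]
    linear_combination (-u 1) * ha + a 0 * h3

/-- The `Good` structure on the edge set of a tight graph with one fixed edge. -/
theorem tight_good [Fintype V] {G : SimpleGraph V} {σ : Equiv.Perm V} (ha : Act σ H)
    (hE : ∀ e, e ∈ E ↔ e ∈ G.edgeSet) (hσ : IsGraphAut G σ) (ht : TwoThreeTight G)
    (hf : {e : Sym2 V | e ∈ G.edgeSet ∧ Sym2.map (⇑σ) e = e}.ncard = 1) : Good σ univ E := by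
  have hEs : G.edgeSet = (E : Set (Sym2 V)) := by ext e; simp [hE]
  obtain ⟨f, hf⟩ := Set.ncard_eq_one.1 hf
  refine ⟨⟨ha.invol, fun e he => G.not_isDiag_of_mem_edgeSet ((hE e).1 he), fun e he => ?_,
    fun X hX => ?_, fun e he e' he' h h' => ?_⟩, fun v _ => mem_univ _,
    fun e _ v _ => mem_univ _, ?_, ?_⟩
  · rw [hE] at he ⊢
    induction e using Sym2.ind with
    | _ i j => exact (hσ i j).2 he
  · rcases (ins E X).eq_empty_or_nonempty with h0 | h0
    · rw [h0, card_empty]; omega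
    · have h1 := ht.2 (ins E X : Set (Sym2 V))
        (fun e he => (hE e).1 (mem_ins.1 (mem_coe.1 he)).1) (by simpa using h0)
      rw [Set.ncard_coe_finset] at h1
      have h2 : {v : V | ∃ e ∈ (ins E X : Set (Sym2 V)), v ∈ e}.ncard ≤ #X := by
        rw [← Set.ncard_coe_finset]
        refine Set.ncard_le_ncard ?_ X.finite_toSet
        rintro v ⟨e, he, hv⟩
        exact (mem_ins.1 (mem_coe.1 he)).2 v hv
      omega
  · have h1 : e ∈ ({f} : Set (Sym2 V)) := hf ▸ ⟨(hE e).1 he, h⟩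
    have h2 : e' ∈ ({f} : Set (Sym2 V)) := hf ▸ ⟨(hE e').1 he', h'⟩
    rw [Set.mem_singleton_iff] at h1 h2
    rw [h1, h2]
  · have h1 := ht.1
    rwa [hEs, Set.ncard_coe_finset, Nat.card_eq_fintype_card] at h1
  · have h1 : f ∈ {e : Sym2 V | e ∈ G.edgeSet ∧ Sym2.map (⇑σ) e = e} := by rw [hf]; rfl
    exact ⟨f, (hE f).2 h1.1, h1.2⟩

/-- A generic property may be realised together with nonvanishing of the coordinates that turn
the vertices outside `H` into points of the plane and those in `H` into lines. -/
theorem exists_nonvanishing [Fintype V] (ha : Act σ H) {C : (V → Fin 3 → ℝ) → Prop}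
    (hC : Generic C) (e : ∃ P, Sym σ H P ∧ C P) :
    ∃ P, Sym σ H P ∧ C P ∧ (∀ i ∉ H, P i 2 ≠ 0) ∧ ∀ i ∈ H, P i 0 ≠ 0 := by
  have key : ∀ s : Finset V,
      Generic (fun P => C P ∧ ∀ i ∈ s, P i (if i ∈ H then 0 else 2) ≠ 0) ∧
      ∃ P, Sym σ H P ∧ C P ∧ ∀ i ∈ s, P i (if i ∈ H then 0 else 2) ≠ 0 := by
    intro s
    induction s using Finset.induction_on with
    | empty => simpa using ⟨hC, e⟩
    | insert v s hv ih =>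
      have h1 : ∃ P, Sym σ H P ∧ P v (if v ∈ H then 0 else 2) ≠ 0 := by
        split_ifs with hvH
        · exact exists_coord_zero ha v
        · exact exists_coord_two ha hvH
      have h2 : (fun P : V → Fin 3 → ℝ =>
          C P ∧ ∀ i ∈ insert v s, P i (if i ∈ H then 0 else 2) ≠ 0) =
          fun P => (C P ∧ ∀ i ∈ s, P i (if i ∈ H then 0 else 2) ≠ 0) ∧
            P v (if v ∈ H then 0 else 2) ≠ 0 := by
        funext P; simp only [forall_mem_insert, eq_iff_iff]; tauto
      refine ⟨h2 ▸ ih.1.and (generic_coord v _), ?_⟩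
      obtain ⟨P, hP, h3, h4⟩ := ih.1.exists_both (generic_coord v _) ih.2 h1
      exact ⟨P, hP, (congrFun h2 P).mpr ⟨h3, h4⟩⟩
  obtain ⟨P, hP, hCP, h⟩ := (key univ).2
  refine ⟨P, hP, hCP, fun i hi => ?_, fun i hi => ?_⟩
  · simpa [hi] using h i (mem_univ _)
  · simpa [hi] using h i (mem_univ _)

/-- The factor that normalises a vector to height one outside `H` and to unit length in `H`. -/
noncomputable def nrm (H : Set V) (P : V → Fin 3 → ℝ) (i : V) : ℝ :=
  if i ∈ H then (√(P i 0 ^ 2 + P i 1 ^ 2))⁻¹ else (P i 2)⁻¹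

/-- The planar part of the normalised vectors. -/
noncomputable def plane (H : Set V) (P : V → Fin 3 → ℝ) (i : V) : Fin 2 → ℝ :=
  ![nrm H P i * P i 0, nrm H P i * P i 1]

theorem nrm_ne (h1 : ∀ i ∉ H, P i 2 ≠ 0) (h2 : ∀ i ∈ H, P i 0 ≠ 0) (i : V) : nrm H P i ≠ 0 := by
  unfold nrm
  split_ifs with hi
  · have := h2 i hi
    positivity
  · exact inv_ne_zero (h1 i hi)

theorem lft_plane (hP : Sym σ H P) (h1 : ∀ i ∉ H, P i 2 ≠ 0) :
    lft H (plane H P) (plane H P) = fun i => nrm H P i • P i := by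
  funext i
  by_cases hi : i ∈ H
  · rw [lft_H hi]
    have := hP.2 i hi
    ext k; fin_cases k <;> simp [plane, this]
  · rw [lft_P hi]
    have := h1 i hi
    ext k; fin_cases k <;> simp [plane, nrm, hi, this]

theorem plane_unit (h2 : ∀ i ∈ H, P i 0 ≠ 0) {i : V} (hi : i ∈ H) :
    plane H P i ⬝ᵥ plane H P i = 1 := by
  have h := h2 i hi
  have h3 : 0 < P i 0 ^ 2 + P i 1 ^ 2 := by positivity
  have h4 := Real.sq_sqrt h3.le
  have h5 := (Real.sqrt_pos.2 h3).ne'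
  simp only [plane, nrm, hi, if_true, dotProduct, Fin.sum_univ_two, cons_val_zero, cons_val_one]
  field_simp
  linarith

theorem plane_equiv {σ : Equiv.Perm V} (ha : Act σ H) (hP : Sym σ H P) (r : V → ℝ) :
    PHEquiv σ (-1 : Matrix (Fin 2) (Fin 2) ℝ) H (plane H P) (plane H P) r := by
  refine ⟨fun i hi => ?_, fun j hj => Or.inr ?_, fun j hj => ?_⟩
  · have h1 : σ i ∉ H := fun h => hi (ha.mem_iff.1 h)
    rw [neg_mulVec, one_mulVec]
    ext k; fin_cases k <;> simp [plane, nrm, hi, h1, hP.1 i hi, turn]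
  · rw [neg_mulVec, one_mulVec, ha.fix j hj]
  · rw [ha.fix j hj]

/-- Offsets can be chosen so that the points and lines affinely span the plane. -/
theorem exists_offsets [Fintype V] (hV : 2 ≤ Fintype.card V)
    (h1 : ∀ i ∉ H, P i 2 ≠ 0) (h2 : ∀ i ∈ H, P i 0 ≠ 0)
    (h0 : H = ∅ → ∃ x y z, Ind P x y z) : ∃ r, IsPHFw H (plane H P) (plane H P) r := by
  have hu : ∀ j ∈ H, plane H P j ⬝ᵥ plane H P j = 1 := fun j hj => plane_unit h2 hj
  rcases H.eq_empty_or_nonempty with hH | ⟨j, hj⟩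
  · obtain ⟨x, y, z, hI⟩ := h0 hH
    have hx : ∀ v, v ∉ H := fun v hv => by rw [hH] at hv; exact hv
    refine ⟨0, hu, span_top_of ⟨plane H P x, Or.inl ⟨x, hx x, rfl⟩⟩ fun u c huc => ?_⟩
    have h3 : ∀ v, P v ⬝ᵥ ![u 0, u 1, c] = 0 := by
      intro v
      have h4 := huc _ (Or.inl ⟨v, hx v, rfl⟩)
      have h5 := h1 v (hx v)
      simp [plane, nrm, hx v, dotProduct, Fin.sum_univ_succ] at h4 ⊢
      field_simp at h4
      linarith
    have h6 := hI _ (h3 x) (h3 y) (h3 z)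
    ext k
    fin_cases k
    · exact congrFun h6 0
    · exact congrFun h6 1
  · have : Nontrivial V := Fintype.one_lt_card_iff_nontrivial.1 hV
    obtain ⟨k, hk⟩ := exists_ne j
    -- the line `j` avoids the point `k`, or is different from the line `k`
    obtain ⟨r, hrj, hrk⟩ : ∃ r : V → ℝ,
        r j = (if k ∈ H then 0 else 1 - plane H P j ⬝ᵥ plane H P k) ∧ r k = 1 :=
      ⟨fun i => if i = j then (if k ∈ H then 0 else 1 - plane H P j ⬝ᵥ plane H P k) else 1,
        if_pos rfl, if_neg hk⟩
    refine ⟨r, hu, span_top_of ?_ fun u c huc => ?_⟩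
    · refine ⟨-r j • plane H P j, Or.inr (Set.mem_iUnion₂.2 ⟨j, hj, ?_⟩)⟩
      rw [Set.mem_ofPred_eq, dotProduct_smul, hu j hj]
      simp
    · have h3 := line_form (hu j hj) fun x hx => huc x (Or.inr (Set.mem_iUnion₂.2 ⟨j, hj, hx⟩))
      rw [hrj] at h3
      by_cases hkH : k ∈ H
      · have h4 := line_form (hu k hkH)
          fun x hx => huc x (Or.inr (Set.mem_iUnion₂.2 ⟨k, hkH, hx⟩))
        rw [hrk, mul_one] at h4
        rw [if_pos hkH, mul_zero] at h3
        rw [h4.1, ← h4.2, h3.2, zero_smul]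
      · have h4 := huc _ (Or.inl ⟨k, hkH, rfl⟩)
        rw [if_neg hkH] at h3
        rw [h3.1, h3.2, smul_dotProduct, smul_eq_mul] at h4
        have h5 : u ⬝ᵥ plane H P j = 0 := by linarith
        rw [h3.1, h5, zero_smul]

/-- With `2|V| - 3` edges, a motion space of dimension at most three suffices: fewer edges always
leave more motions. -/
theorem isostatic_of_le [Fintype V] {G : SimpleGraph V} (hE : ∀ e, e ∈ E ↔ e ∈ G.edgeSet)
    {p a : V → Fin 2 → ℝ} {r : V → ℝ} (hc : #E + 3 = 2 * Fintype.card V)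
    (hr : setDim (PHMotionSet G H p a r) ≤ 3) : PHIsostatic G H p a r := by
  have h1 := two_card_le E (lft H p a)
  rw [← setDim_eq hE p a r] at h1
  refine ⟨?_, fun e he h2 => ?_⟩
  · have : Nat.choose (2 + 1) 2 = 3 := rfl
    unfold PHRigid
    omega
  · have h3 := two_card_le (E.erase e) (lft H p a)
    rw [← setDim_eq (G := G.deleteEdges {e}) (by simp [hE, and_comm]) p a r,
      card_erase_of_mem ((hE e).2 he)] at h3
    have : Nat.choose (2 + 1) 2 = 3 := rfl
    have h4 : 0 < #E := card_pos.2 ⟨e, (hE e).2 he⟩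
    unfold PHRigid at h2
    omega

/-- Sufficiency of the counts for regular frameworks. -/
theorem isostatic_of_tight [Fintype V] {G : SimpleGraph V} {σ : Equiv.Perm V} (ha : Act σ H)
    (hE : ∀ e, e ∈ E ↔ e ∈ G.edgeSet) (hσ : IsGraphAut G σ) {p a : V → Fin 2 → ℝ} {r : V → ℝ}
    (hreg : PHRegularWrt G H
      (fun pb ab rb => PHEquiv σ (-1 : Matrix (Fin 2) (Fin 2) ℝ) H pb ab rb) p a r)
    (ht : TwoThreeTight G)
    (hf : {e : Sym2 V | e ∈ G.edgeSet ∧ Sym2.map (⇑σ) e = e}.ncard = 1) :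
    PHIsostatic G H p a r := by
  have hg := tight_good ha hE hσ ht hf
  have hc := hg.card
  rw [card_univ] at hc
  obtain ⟨hfw, hsym, hmin⟩ := hreg
  have hrig := hg.rig ha
  obtain ⟨P, hP, h3, h4, h5, h6⟩ : ∃ P, Sym σ H P ∧ Module.finrank ℝ (Mot univ E P) ≤ 3 ∧
      (∀ i ∉ H, P i 2 ≠ 0) ∧ (∀ i ∈ H, P i 0 ≠ 0) ∧ (H = ∅ → ∃ x y z, Ind P x y z) := by
    by_cases hH : H = ∅
    · subst hH
      have hV : Nonempty V := Fintype.card_pos_iff.1 (by omega)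
      obtain ⟨x⟩ := hV
      obtain ⟨y, hyx, hyσ⟩ : ∃ y, y ≠ x ∧ y ≠ σ x := by
        -- otherwise all points lie on a line through the origin
        by_contra! hno
        have h1 : ∃ u : Fin 2 → ℝ, u ≠ 0 ∧ u ⬝ᵥ p x = 0 := by
          by_cases hx : p x = 0
          · exact ⟨![1, 0], fun h => one_ne_zero (congrFun h 0), by rw [hx, dotProduct_zero]⟩
          · refine ⟨![-p x 1, p x 0], fun h => hx ?_, ?_⟩
            · have h2 := congrFun h 0
              have h3 := congrFun h 1
              ext k; fin_cases k
              · exact h3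
              · simpa using h2
            · simp [dotProduct, Fin.sum_univ_succ]; ring
        obtain ⟨u, hu, hux⟩ := h1
        refine hu (of_span_top hfw.2 (c := 0) ?_)
        rintro s (⟨y, -, rfl⟩ | hs)
        · by_cases hy : y = x
          · rw [hy, hux, add_zero]
          · rw [hno y hy, ← hsym.1 x (fun h => h), neg_mulVec, one_mulVec, dotProduct_neg, hux]
            simp
        · simp at hs
      obtain ⟨P, hP, ⟨h1, h2⟩, h3, h4⟩ := exists_nonvanishing ha
        ((generic_rigid univ E).and (generic_Ind x (σ x) y))
        ((generic_rigid univ E).exists_both (generic_Ind x (σ x) y) hrig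
          (exists_Ind ha (ha.free x (fun h => h)).symm hyσ.symm hyx.symm fun h => h.1))
      exact ⟨P, hP, h1, h3, h4, fun _ => ⟨_, _, _, h2⟩⟩
    · obtain ⟨P, hP, h1, h2, h3⟩ := exists_nonvanishing ha (generic_rigid univ E) hrig
      exact ⟨P, hP, h1, h2, h3, fun h => absurd h hH⟩
  obtain ⟨s, hs⟩ := exists_offsets (by omega) h4 h5 h6
  have h7 := hmin _ _ s hs (plane_equiv ha hP s)
  rw [setDim_eq hE (plane H P) (plane H P) s, lft_plane hP h4] at h7
  have h8 := finrank_Mot_smul_le (W := univ) (E := E) (P := P) _ (nrm_ne h4 h5)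
  exact isostatic_of_le hE hc (by omega)

end

section
open scoped Classical
open Finset

variable {σ : V → V} {H : Set V} {W : Finset V} {E F : Finset (Sym2 V)} {P q : V → Fin 3 → ℝ}

/-! ### Necessity of the counts -/

/-- The rows of the rigidity matrix are linearly independent: no edge equation follows from the
remaining ones. -/
def Indep [Fintype V] (E : Finset (Sym2 V)) (P : V → Fin 3 → ℝ) : Prop :=
  ∀ e ∈ E, ∃ q ∈ Mot univ (E.erase e) P, edgeForm P e q ≠ 0

theorem indep_of_isostatic [Fintype V] {G : SimpleGraph V} (hE : ∀ e, e ∈ E ↔ e ∈ G.edgeSet)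
    {p a : V → Fin 2 → ℝ} {r : V → ℝ} (h : PHIsostatic G H p a r) : Indep E (lft H p a) := by
  intro e he
  by_contra! hno
  refine h.2 e ((hE e).1 he) ?_
  have h1 := h.1
  unfold PHRigid at h1 ⊢
  rw [setDim_eq hE p a r] at h1
  rw [setDim_eq (E := E.erase e) (by simp [hE, and_comm]) p a r, ← h1]
  have h2 := Mot_insert (W := univ) (E := E.erase e) (P := lft H p a) e
  rw [insert_erase he, inf_of_le_left fun q hq => hno q hq] at h2
  rw [h2]

/-- Restricting a motion to `W` and extending it by zero gives a motion of any subgraph on `W`. -/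
theorem restrict_mem [Fintype V] (hF : ∀ e ∈ F, ∀ v ∈ e, v ∈ W) (hFE : F ⊆ E)
    (hq : q ∈ Mot univ E P) : (fun i => if i ∈ W then q i else 0) ∈ Mot W F P := by
  rw [mem_Mot] at hq ⊢
  refine ⟨fun i hi => if_neg hi, fun i hi => ?_, fun i j hij => ?_⟩
  · simp [hi, hq.2.1 i (mem_univ _)]
  · have h1 := hF _ hij i (by simp)
    have h2 := hF _ hij j (by simp)
    simp [h1, h2, hq.2.2 i j (hFE hij)]

/-- Without edges every vertex moves in the plane orthogonal to its vector. -/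
theorem finrank_Mot_empty [Finite V] (hP : ∀ i, P i ≠ 0) :
    Module.finrank ℝ (Mot W ∅ P) ≤ 2 * #W := by
  let f : (Mot W ∅ P) × (W → ℝ) →ₗ[ℝ] (W → Fin 3 → ℝ) :=
    { toFun := fun m i => m.1.1 i + m.2 i • P i
      map_add' := fun m m' => by ext; simp; ring
      map_smul' := fun c m => by ext; simp; ring }
  have hf : Function.Injective f := by
    rw [← LinearMap.ker_eq_bot, LinearMap.ker_eq_bot']
    rintro ⟨⟨q, hq⟩, c⟩ h0
    rw [mem_Mot] at hq
    have h1 : ∀ i : W, q i + c i • P i = 0 := fun i => congrFun h0 i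
    have hc : c = 0 := by
      funext i
      have h2 := congrArg (P i ⬝ᵥ ·) (h1 i)
      simp only [dotProduct_add, dotProduct_smul, hq.2.1 i i.2, zero_add, dotProduct_zero,
        smul_eq_mul] at h2
      exact (mul_eq_zero.1 h2).resolve_right fun h => hP i (dotProduct_self_eq_zero.1 h)
    have hq0 : q = 0 := by
      funext i
      by_cases hi : i ∈ W
      · simpa [hc] using h1 ⟨i, hi⟩
      · exact hq.1 i hi
    subst hc hq0
    rfl
  have := LinearMap.finrank_le_finrank_of_injective hf
  simp only [Module.finrank_prod, Module.finrank_pi_fintype, Module.finrank_self, sum_const,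
    card_univ, smul_eq_mul, mul_one, Fintype.card_fin, Fintype.card_coe] at this
  omega

/-- Independent edges within `W` each remove one degree of freedom. -/
theorem Indep.card_le [Fintype V] (h : Indep E P) (hP : ∀ i, P i ≠ 0) (hFE : F ⊆ E)
    (hF : ∀ e ∈ F, ∀ v ∈ e, v ∈ W) : Module.finrank ℝ (Mot W F P) + #F ≤ 2 * #W := by
  induction F using Finset.induction_on with
  | empty => simpa using finrank_Mot_empty hP
  | insert e F he ih =>
    have ih := ih (fun f hf => hFE (mem_insert_of_mem hf)) fun f hf => hF f (mem_insert_of_mem hf)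
    rw [Mot_insert, card_insert_of_notMem he]
    obtain ⟨q, hq, hqe⟩ := h e (hFE (mem_insert_self _ _))
    have h1 := restrict_mem (F := F) (fun f hf => hF f (mem_insert_of_mem hf)) (fun f hf =>
      mem_erase.2 ⟨fun hh => he (by rwa [← hh]), hFE (mem_insert_of_mem hf)⟩) hq
    have h2 := hF e (mem_insert_self _ _)
    have h3 : edgeForm P e (fun i => if i ∈ W then q i else 0) ≠ 0 := by
      induction e using Sym2.ind with
      | _ i j =>
        rw [edgeForm_mk] at hqe ⊢
        simpa [h2 i (by simp), h2 j (by simp)] using hqe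
    have h4 := Submodule.finrank_lt_finrank_of_lt
      (inf_le_left.lt_of_ne fun hh : Mot W F P ⊓ LinearMap.ker (edgeForm P e) = Mot W F P =>
        h3 ((inf_eq_left.1 hh) h1))
    omega

theorem cross_proportional {u x : Fin 3 → ℝ} (h : u ⨯₃ x = 0) : (u ⬝ᵥ u) • x = (u ⬝ᵥ x) • u := by
  have h0 := congrFun h 0
  have h1 := congrFun h 1
  have h2 := congrFun h 2
  simp [cross_apply] at h0 h1 h2
  ext k
  fin_cases k <;> simp [dotProduct, Fin.sum_univ_succ]
  · linear_combination u 2 * h1 - u 1 * h2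
  · linear_combination u 0 * h2 - u 2 * h0
  · linear_combination u 1 * h0 - u 0 * h1

/-- The ends of an edge with a nontrivial equation are not parallel. -/
theorem Indep.not_parallel [Fintype V] (h : Indep E P) (hP : ∀ i, P i ≠ 0) {i j : V}
    (hij : s(i, j) ∈ E) {u : Fin 3 → ℝ} (hi : u ⨯₃ P i = 0) (hj : u ⨯₃ P j = 0) : u = 0 := by
  by_contra hu
  obtain ⟨q, hq, hqe⟩ := h _ hij
  rw [mem_Mot] at hq
  rw [edgeForm_mk] at hqe
  have huu : u ⬝ᵥ u ≠ 0 := fun hh => hu (dotProduct_self_eq_zero.1 hh)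
  have key : ∀ k, u ⨯₃ P k = 0 → u ⬝ᵥ q k = 0 := by
    intro k hk
    have h1 := cross_proportional hk
    have h2 := congrArg (· ⬝ᵥ q k) h1
    simp only [smul_dotProduct, hq.2.1 k (mem_univ _), smul_eq_mul, mul_zero] at h2
    refine (mul_eq_zero.1 h2.symm).resolve_left fun h3 => hP k ?_
    rw [h3, zero_smul] at h1
    exact (smul_eq_zero.1 h1).resolve_left huu
  have h1 := congrArg (· ⬝ᵥ q j) (cross_proportional hi)
  have h2 := congrArg (· ⬝ᵥ q i) (cross_proportional hj)
  simp only [smul_dotProduct, smul_eq_mul, key i hi, key j hj, mul_zero] at h1 h2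
  rw [(mul_eq_zero.1 h1).resolve_left huu, (mul_eq_zero.1 h2).resolve_left huu, add_zero] at hqe
  exact hqe rfl

theorem rotation_mem (hF : ∀ e ∈ F, ∀ v ∈ e, v ∈ W) (u : Fin 3 → ℝ) :
    (fun i => if i ∈ W then u ⨯₃ P i else 0) ∈ Mot W F P := by
  rw [mem_Mot]
  refine ⟨fun i hi => if_neg hi, fun i hi => ?_, fun i j hij => ?_⟩
  · rw [if_pos hi, dot_cross_self]
  · rw [if_pos (hF _ hij i (by simp)), if_pos (hF _ hij j (by simp))]
    simp [cross_apply, dotProduct, Fin.sum_univ_succ]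
    ring

/-- The rotations are a three-dimensional space of motions as soon as there is an edge. -/
theorem Indep.three_le [Fintype V] (h : Indep E P) (hP : ∀ i, P i ≠ 0) (hFE : F ⊆ E)
    (hF : ∀ e ∈ F, ∀ v ∈ e, v ∈ W) (hne : F.Nonempty) : 3 ≤ Module.finrank ℝ (Mot W F P) := by
  let f : (Fin 3 → ℝ) →ₗ[ℝ] Mot W F P :=
    { toFun := fun u => ⟨fun i => if i ∈ W then u ⨯₃ P i else 0, rotation_mem hF u⟩
      map_add' := fun u v => by
        refine Subtype.ext (funext fun i => ?_)
        by_cases hi : i ∈ W <;> simp [hi]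
      map_smul' := fun c u => by
        refine Subtype.ext (funext fun i => ?_)
        by_cases hi : i ∈ W <;> simp [hi] }
  have hf : Function.Injective f := by
    rw [← LinearMap.ker_eq_bot, LinearMap.ker_eq_bot']
    intro u hu
    obtain ⟨e, he⟩ := hne
    induction e using Sym2.ind with
    | _ i j =>
      have h1 : ∀ k ∈ W, u ⨯₃ P k = 0 := by
        intro k hk
        have : (if k ∈ W then u ⨯₃ P k else 0) = 0 := congrFun (congrArg Subtype.val hu) k
        rwa [if_pos hk] at this
      exact h.not_parallel hP (hFE he) (h1 i (hF _ he i (by simp))) (h1 j (hF _ he j (by simp)))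
  have := LinearMap.finrank_le_finrank_of_injective hf
  simpa using this

theorem lft_ne {p a : V → Fin 2 → ℝ} (hu : ∀ j ∈ H, a j ⬝ᵥ a j = 1) (i : V) :
    lft H p a i ≠ 0 := by
  intro h
  by_cases hi : i ∈ H
  · rw [lft_H hi] at h
    have h1 := hu i hi
    have h2 : a i 0 = 0 := congrFun h 0
    have h3 : a i 1 = 0 := congrFun h 1
    simp [dotProduct, Fin.sum_univ_succ, h2, h3] at h1
  · rw [lft_P hi] at h
    exact one_ne_zero (congrFun h 2)

/-- A choice of one vertex of the orbit of `i`. -/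
noncomputable def rep [Fintype V] (σ : V → V) (i : V) : V :=
  if Fintype.equivFin V i < Fintype.equivFin V (σ i) then i else σ i

theorem rep_map [Fintype V] (ha : Act σ H) {i : V} (hi : i ∉ H) : rep σ (σ i) = rep σ i := by
  have h1 : Fintype.equivFin V i ≠ Fintype.equivFin V (σ i) :=
    fun h => ha.free i hi ((Fintype.equivFin V).injective h).symm
  unfold rep
  rw [ha.invol]
  rcases lt_or_gt_of_ne h1 with h | h
  · rw [if_neg h.not_gt, if_pos h]
  · rw [if_pos h, if_neg h.not_gt]

/-- The velocities with `p'(σ i) = p' i` for points and `a' = 0` for lines, which reverse under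
the symmetry, parametrised by one number per vertex. -/
noncomputable def anti [Fintype V] (σ : V → V) (H : Set V) (P : V → Fin 3 → ℝ) :
    (V → ℝ) →ₗ[ℝ] (V → Fin 3 → ℝ) where
  toFun φ i := if i ∈ H then ![0, 0, φ i] else
    ![φ (rep σ i), φ (σ (rep σ i)), -(P i 0 * φ (rep σ i) + P i 1 * φ (σ (rep σ i)))]
  map_add' φ ψ := by
    funext i
    by_cases hi : i ∈ H <;> ext k <;> fin_cases k <;> simp [hi]
    ring
  map_smul' c φ := by
    funext i
    by_cases hi : i ∈ H <;> ext k <;> fin_cases k <;> simp [hi]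
    ring

theorem anti_H [Fintype V] {φ : V → ℝ} {i : V} (hi : i ∈ H) : anti σ H P φ i = ![0, 0, φ i] :=
  if_pos hi

theorem anti_P [Fintype V] {φ : V → ℝ} {i : V} (hi : i ∉ H) : anti σ H P φ i =
    ![φ (rep σ i), φ (σ (rep σ i)), -(P i 0 * φ (rep σ i) + P i 1 * φ (σ (rep σ i)))] :=
  if_neg hi

theorem anti_inj [Fintype V] (ha : Act σ H) : Function.Injective (anti σ H P) := by
  rw [← LinearMap.ker_eq_bot, LinearMap.ker_eq_bot']
  intro φ h
  funext i
  by_cases hi : i ∈ H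
  · have h1 := congrFun h i
    rw [anti_H hi] at h1
    exact congrFun h1 2
  · have h1 := congrFun h i
    rw [anti_P hi] at h1
    have h2 : φ (rep σ i) = 0 := congrFun h1 0
    have h3 : φ (σ (rep σ i)) = 0 := congrFun h1 1
    unfold rep at h2 h3
    split_ifs at h2 h3
    · exact h2
    · rwa [ha.invol] at h3

theorem anti_map [Fintype V] (ha : Act σ H) (hP : Sym σ H P) (φ : V → ℝ) (i : V) :
    anti σ H P φ (σ i) = -sgn H i • turn (anti σ H P φ i) := by
  by_cases hi : i ∈ H
  · rw [ha.fix i hi, anti_H hi]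
    ext k; fin_cases k <;> simp [sgn, hi, turn]
  · rw [anti_P hi, anti_P (fun h => hi (ha.mem_iff.1 h)), rep_map ha hi, hP.1 i hi]
    ext k; fin_cases k <;> simp [sgn, hi, turn]
    ring

/-- The edge equations of an edge and its image agree on the reversed velocities. -/
theorem edgeForm_map [Fintype V] (ha : Act σ H) (hP : Sym σ H P) (φ : V → ℝ) (e : Sym2 V)
    (h : edgeForm P e (anti σ H P φ) = 0) : edgeForm P (e.map σ) (anti σ H P φ) = 0 := by
  induction e using Sym2.ind with
  | _ i j =>
    rw [edgeForm_mk] at h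
    rw [Sym2.map_mk, edgeForm_mk, hP.map_eq ha, hP.map_eq ha, anti_map ha hP, anti_map ha hP]
    simp only [smul_dotProduct, dotProduct_smul, turn_dot, turn_turn, smul_eq_mul]
    linear_combination -sgn H i * sgn H j * h

/-- Fixed edges impose no condition on the reversed velocities. -/
theorem edgeForm_fix [Fintype V] (ha : Act σ H) (hP : Sym σ H P) (φ : V → ℝ) (e : Sym2 V)
    (h : e.map σ = e) : edgeForm P e (anti σ H P φ) = 0 := by
  induction e using Sym2.ind with
  | _ i j =>
    rw [edgeForm_mk]
    rw [Sym2.map_mk, Sym2.eq_iff] at h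
    rcases h with h | h
    · have hi := ha.fix_iff.1 h.1
      have hj := ha.fix_iff.1 h.2
      rw [anti_H hi, anti_H hj]
      simp [dotProduct, Fin.sum_univ_succ, hP.2 i hi, hP.2 j hj]
    · rw [← h.1, hP.map_eq ha, anti_map ha hP]
      simp only [smul_dotProduct, dotProduct_smul, turn_dot, smul_eq_mul]
      ring

theorem map_map_invol (hinv : ∀ v, σ (σ v) = v) (e : Sym2 V) : (e.map σ).map σ = e := by
  induction e using Sym2.ind with
  | _ i j => simp [hinv]

/-- Half of the edges that are not fixed, one from each orbit. -/
theorem exists_half [Fintype V] (hinv : ∀ v, σ (σ v) = v) (hE : ∀ e ∈ E, e.map σ ∈ E) :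
    ∃ E' ⊆ E, #(E.filter fun e => e.map σ = e) + 2 * #E' = #E ∧
      ∀ e ∈ E, e.map σ = e ∨ e ∈ E' ∨ e.map σ ∈ E' := by
  have hmm := map_map_invol hinv
  let f := Fintype.equivFin (Sym2 V)
  have hcard : #(E.filter fun e => f (e.map σ) < f e) = #(E.filter fun e => f e < f (e.map σ)) := by
    refine card_bij' (fun e _ => e.map σ) (fun e _ => e.map σ) ?_ ?_ (fun e _ => hmm e)
      (fun e _ => hmm e)
    · intro e he
      rw [mem_filter] at he ⊢
      rw [hmm]; exact ⟨hE e he.1, he.2⟩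
    · intro e he
      rw [mem_filter] at he ⊢
      rw [hmm]; exact ⟨hE e he.1, he.2⟩
  refine ⟨E.filter fun e => f e < f (e.map σ), filter_subset _ _, ?_, fun e he => ?_⟩
  · have h1 := card_filter_add_card_filter_not (s := E) (fun e => e.map σ = e)
    have h2 := card_filter_add_card_filter_not (s := E.filter fun e => ¬ e.map σ = e)
      (fun e => f e < f (e.map σ))
    have h3 : (E.filter fun e => ¬ e.map σ = e).filter (fun e => f e < f (e.map σ)) =
        E.filter fun e => f e < f (e.map σ) := by
      rw [filter_filter]
      refine filter_congr fun e _ => ⟨fun h => h.2, fun h => ⟨fun hh => ?_, h⟩⟩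
      rw [hh] at h; exact lt_irrefl _ h
    have h4 : (E.filter fun e => ¬ e.map σ = e).filter (fun e => ¬ f e < f (e.map σ)) =
        E.filter fun e => f (e.map σ) < f e := by
      rw [filter_filter]
      refine filter_congr fun e _ => ⟨fun h => ?_, fun h => ⟨fun hh => ?_, h.not_gt⟩⟩
      · exact lt_of_le_of_ne (not_lt.1 h.2) fun hh => h.1 (f.injective hh)
      · rw [hh] at h; exact lt_irrefl _ h
    rw [h3, h4, hcard] at h2
    omega
  · rcases lt_trichotomy (f e) (f (e.map σ)) with h | h | h
    · exact Or.inr (Or.inl (mem_filter.2 ⟨he, h⟩))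
    · exact Or.inl (f.injective h).symm
    · exact Or.inr (Or.inr (mem_filter.2 ⟨hE e he, by rwa [hmm]⟩))

/-- Fixed edges are wasted on the reversed velocities, so a rigid framework with independent
edges has at most one of them; as the others come in pairs, parity leaves exactly one. -/
theorem Indep.card_fix [Fintype V] (ha : Act σ H) (hP : Sym σ H P) (h : Indep E P)
    (hP0 : ∀ i, P i ≠ 0) (hPz : ∀ i ∉ H, P i 2 = 1) (hE : ∀ e ∈ E, e.map σ ∈ E)
    (hr : Module.finrank ℝ (Mot univ E P) = 3) (hc : #E + 3 = 2 * Fintype.card V) :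
    #(E.filter fun e => e.map σ = e) = 1 := by
  obtain ⟨E', -, hcard, hE'⟩ := exists_half ha.invol hE
  -- one condition for each orbit of two edges
  let L : (V → ℝ) →ₗ[ℝ] (E' → ℝ) := LinearMap.pi fun e => edgeForm P e ∘ₗ anti σ H P
  have h1 := LinearMap.finrank_range_add_finrank_ker L
  have h2 := Submodule.finrank_le (LinearMap.range L)
  simp only [Module.finrank_pi_fintype, Module.finrank_self, sum_const, card_univ, smul_eq_mul,
    mul_one, Fintype.card_coe] at h1 h2
  have hmem : (LinearMap.ker L).map (anti σ H P) ≤ Mot univ E P := by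
    rintro _ ⟨φ, hφ, rfl⟩
    have h3 : ∀ e ∈ E', edgeForm P e (anti σ H P φ) = 0 := fun e he =>
      congrFun (LinearMap.mem_ker.1 hφ) ⟨e, he⟩
    rw [mem_Mot_edgeForm]
    refine ⟨fun i hi => absurd (mem_univ i) hi, fun i _ => ?_, fun e he => ?_⟩
    · by_cases hi : i ∈ H
      · rw [anti_H hi]
        simp [dotProduct, Fin.sum_univ_succ, hP.2 i hi]
      · rw [anti_P hi]
        simp [dotProduct, Fin.sum_univ_succ, hPz i hi]
    · rcases hE' e he with h4 | h4 | h4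
      · exact edgeForm_fix ha hP φ e h4
      · exact h3 e h4
      · have h5 := edgeForm_map ha hP φ _ (h3 _ h4)
        rwa [map_map_invol ha.invol] at h5
  have hlt : (LinearMap.ker L).map (anti σ H P) < Mot univ E P := by
    refine hmem.lt_of_ne fun heq => ?_
    -- the rotation about the axis of symmetry is not reversed
    have h3 : (fun i => if i ∈ univ then ![0, 0, 1] ⨯₃ P i else 0) ∈ Mot univ E P :=
      rotation_mem (fun _ _ _ _ => mem_univ _) _
    rw [← heq] at h3
    obtain ⟨φ, -, hφ⟩ := h3
    have h4 : ∀ i, ![0, 0, 1] ⨯₃ P i = 0 := by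
      intro i
      have h5 : anti σ H P φ i = ![0, 0, 1] ⨯₃ P i := by
        rw [hφ]; exact if_pos (mem_univ i)
      have h6 := anti_map ha hP φ i
      have h7 : anti σ H P φ (σ i) = ![0, 0, 1] ⨯₃ P (σ i) := by
        rw [hφ]; exact if_pos (mem_univ _)
      by_cases hi : i ∈ H
      · rw [anti_H hi] at h5
        rw [cross_apply] at h5 ⊢
        have h8 := congrFun h5 0
        have h9 := congrFun h5 1
        ext k; fin_cases k <;> simp at h8 h9 ⊢ <;> linarith
      · rw [h5, h7, hP.1 i hi] at h6
        rw [cross_apply] at h6 ⊢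
        have h8 := congrFun h6 0
        have h9 := congrFun h6 1
        simp [sgn, hi, cross_apply, turn] at h8 h9
        ext k; fin_cases k <;> simp <;> linarith
    obtain ⟨e, he⟩ : E.Nonempty := card_pos.1 (by omega)
    induction e using Sym2.ind with
    | _ i j => exact one_ne_zero (congrFun (h.not_parallel hP0 he (h4 i) (h4 j)) 2)
  have h3 := Submodule.finrank_lt_finrank_of_lt hlt
  rw [← (Submodule.equivMapOfInjective _ (anti_inj ha) _).finrank_eq] at h3
  omega

/-- Necessity of the counts. -/
theorem tight_of_isostatic [Fintype V] {G : SimpleGraph V} {σ : Equiv.Perm V} (ha : Act σ H)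
    (hE : ∀ e, e ∈ E ↔ e ∈ G.edgeSet) (hσ : IsGraphAut G σ) {p a : V → Fin 2 → ℝ} {r : V → ℝ}
    (hfw : IsPHFw H p a r) (hsym : PHEquiv σ (-1 : Matrix (Fin 2) (Fin 2) ℝ) H p a r)
    (hiso : PHIsostatic G H p a r) : TwoThreeTight G ∧
      {e : Sym2 V | e ∈ G.edgeSet ∧ Sym2.map (⇑σ) e = e}.ncard = 1 := by
  have hind := indep_of_isostatic hE hiso
  have hP0 := lft_ne (p := p) hfw.1
  have hr : Module.finrank ℝ (Mot univ E (lft H p a)) = 3 := by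
    rw [← setDim_eq hE p a r]; exact hiso.1
  have hEs : G.edgeSet = (E : Set (Sym2 V)) := by ext e; simp [hE]
  have hc : #E + 3 = 2 * Fintype.card V := by
    have h1 := two_card_le E (lft H p a)
    have h2 := hind.card_le hP0 subset_rfl (W := univ) fun _ _ _ _ => mem_univ _
    rw [card_univ] at h2
    omega
  have hS : Sym σ H (lft H p a) := by
    refine ⟨fun i hi => ?_, fun i hi => ?_⟩
    · have h1 := hsym.1 i hi
      rw [neg_mulVec, one_mulVec] at h1
      rw [lft_P hi, lft_P (fun h => hi (ha.mem_iff.1 h)), ← h1]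
      ext k; fin_cases k <;> simp [turn]
    · rw [lft_H hi]; rfl
  refine ⟨⟨?_, fun F hF hne => ?_⟩, ?_⟩
  · rwa [hEs, Set.ncard_coe_finset, Nat.card_eq_fintype_card]
  · lift F to Finset (Sym2 V) using Set.toFinite F
    rw [hEs, coe_subset] at hF
    have hW : {v : V | ∃ e ∈ (F : Set (Sym2 V)), v ∈ e} =
        ((univ.filter fun v => ∃ e ∈ F, v ∈ e : Finset V) : Set V) := by ext; simp
    have hFW : ∀ e ∈ F, ∀ v ∈ e, v ∈ univ.filter fun v => ∃ e ∈ F, v ∈ e := fun e he v hv =>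
      mem_filter.2 ⟨mem_univ _, e, he, hv⟩
    rw [hW, Set.ncard_coe_finset, Set.ncard_coe_finset]
    have h1 := hind.card_le hP0 hF hFW
    have h2 := hind.three_le hP0 hF hFW (by simpa using hne)
    omega
  · have hfix := hind.card_fix ha hS hP0 (fun i hi => by rw [lft_P hi]; rfl) (fun e he => ?_) hr hc
    · rw [← hfix, ← Set.ncard_coe_finset]
      congr 1
      ext e; simp [hE]
    · rw [hE] at he ⊢
      induction e using Sym2.ind with
      | _ i j => exact (hσ i j).2 he

end

/-- a `ℤ₂`-regular point-line framework in `ℝ²` with half-turn symmetry,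
all line vertices fixed and the action free on the point vertices, is isostatic iff `G`
is `(2,3)`-tight and exactly one edge of `G` is fixed. -/
theorem statement_19 {V : Type*} [Fintype V] (G : SimpleGraph V)
    (VH : Set V)
    (σ : Equiv.Perm V) (hσ2 : σ * σ = 1) (hσaut : IsGraphAut G σ)
    (hσPH : ∀ i : V, i ∈ VH ↔ σ i ∈ VH)
    (hfixH : ∀ j ∈ VH, σ j = j) (hfreeP : ∀ i ∉ VH, σ i ≠ i)
    (p a : V → Fin 2 → ℝ) (r : V → ℝ)
    (hreg : PHRegularWrt G VH
      (fun pb ab rb => PHEquiv σ (-1 : Matrix (Fin 2) (Fin 2) ℝ) VH pb ab rb)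
      p a r) :
    PHIsostatic G VH p a r ↔
      (TwoThreeTight G ∧
        {e : Sym2 V | e ∈ G.edgeSet ∧ Sym2.map (⇑σ) e = e}.ncard = 1) := by
  classical
  have ha : Act σ VH := ⟨fun v => congrArg (· v) hσ2, hfixH, hfreeP⟩
  have hE : ∀ e, e ∈ G.edgeSet.toFinset ↔ e ∈ G.edgeSet := fun e => Set.mem_toFinset
  exact ⟨tight_of_isostatic ha hE hσaut hreg.1 hreg.2.1,
    fun h => isostatic_of_tight ha hE hσaut hreg h.1 h.2⟩

end RigidityPaper
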